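/- Let ψ be the (σ,λ)-GFF on V_N. Let β > 0 and ρ ∈ (0,λ_1). For every s ∈ ℕ and every family of functions h : V_N^s → ℝ with sup_N ‖h‖_∞ < ∞, writing v = (v^1,...,v^s), one has lim_{N→∞} |E𝒢_{β,N}^{×s}[h(v)] − E𝒢_{β,N,ρ}^{×s}[h(v)]| = 0, where 𝒢_{β,N,ρ} is the Gibbs measure restricted to A_{N,ρ}. -/

import Mathlib

open Filter
open scoped Classical

noncomputable section GFFCommon

/-- Vertices of `ℤ²`. -/
abbrev Vtx : Type := ℤ × ℤ

/-- Sample space: a real-valued field indexed by the vertices of `ℤ²`. -/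
abbrev FieldSp : Type := Vtx → ℝ

/-- The box `V_N = {0,1,…,N}²`. -/
def VN (N : ℕ) : Finset Vtx := Finset.Icc (0, 0) ((N : ℤ), (N : ℤ))

/-- The boundary `∂B` of a finite box `B ⊆ ℤ²`:
vertices of `B` having a (Euclidean distance 1) neighbour outside `B`. -/
def bdry (B : Finset Vtx) : Finset Vtx :=
  B.filter fun v =>
    ¬((v.1 + 1, v.2) ∈ B ∧ (v.1 - 1, v.2) ∈ B ∧ (v.1, v.2 + 1) ∈ B ∧ (v.1, v.2 - 1) ∈ B)

/-- The interior `B° = B ∖ ∂B`. -/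
def intr (B : Finset Vtx) : Finset Vtx := B \ bdry B

/-- The neighbourhood `[v]_λ` of `v` in `V_N`. -/
def nbhd (N : ℕ) (lam : ℝ) (v : Vtx) : Finset Vtx :=
  if lam = 0 then VN N
  else if lam = 1 then {v}
  else (VN N).filter fun w =>
    |(w.1 : ℝ) - (v.1 : ℝ)| ≤ (N : ℝ) ^ ((1 : ℝ) - lam) / 2 ∧
    |(w.2 : ℝ) - (v.2 : ℝ)| ≤ (N : ℝ) ^ ((1 : ℝ) - lam) / 2

/-- The σ-algebra `F_{∂[v]_λ ∪ [v]_λ^c}`, generated by the field variables on the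
boundary of `[v]_λ` and those outside of it. -/
def scaleAlg (N : ℕ) (lam : ℝ) (v : Vtx) : MeasurableSpace FieldSp :=
  ⨆ w ∈ {w : Vtx | w ∈ VN N ∧ w ∉ intr (nbhd N lam v)},
    MeasurableSpace.comap (fun ω : FieldSp => ω w) inferInstance

/-- `G` is the Green function of simple random walk killed on `∂B`, normalized by `π/2`:
it vanishes unless both arguments are in `B°`, and in `B°` it satisfies the
first-step (discrete Poisson equation) characterization
`G(x,y) = (1/4)·Σ_{x'∼x} G(x',y) + (π/2)·1_{x=y}`. -/
def IsGreenFn (B : Finset Vtx) (G : Vtx → Vtx → ℝ) : Prop :=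
  (∀ x y : Vtx, x ∉ intr B ∨ y ∉ intr B → G x y = 0) ∧
  ∀ y ∈ intr B, ∀ x ∈ intr B,
    G x y = (G (x.1 + 1, x.2) y + G (x.1 - 1, x.2) y
        + G (x.1, x.2 + 1) y + G (x.1, x.2 - 1) y) / 4
      + (Real.pi / 2) * (if x = y then 1 else 0)

/-- `P` is the law (on the canonical space `FieldSp`) of the Gaussian free field on `V_N`:
a centered Gaussian field with covariance the Green function `G_{V_N}`. -/
def IsGFF (N : ℕ) (P : MeasureTheory.Measure FieldSp) : Prop :=
  MeasureTheory.IsProbabilityMeasure P ∧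
  ∃ G : Vtx → Vtx → ℝ, IsGreenFn (VN N) G ∧
    ∀ c : Vtx → ℝ,
      P.map (fun ω => ∑ v ∈ VN N, c v * ω v) =
        ProbabilityTheory.gaussianReal 0 (Real.toNNReal (∑ v ∈ VN N, ∑ w ∈ VN N, c v * c w * G v w))

open MeasureTheory in
/-- `φ_v(λ) = E[φ_v | F_{∂[v]_λ ∪ [v]_λ^c}]`. -/
def phiScale (N : ℕ) (P : MeasureTheory.Measure FieldSp) (v : Vtx) (lam : ℝ) : FieldSp → ℝ :=
  P[fun ω : FieldSp => ω v | scaleAlg N lam v]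

/-- Admissible parameters `(σ,λ)`: `σ_1,…,σ_M > 0` and `0 = λ_0 < λ_1 < … < λ_M = 1`. -/
def ScaleParams (M : ℕ) (sigv lamv : ℕ → ℝ) : Prop :=
  1 ≤ M ∧ (∀ i ∈ Finset.Icc 1 M, 0 < sigv i) ∧
  lamv 0 = 0 ∧ lamv M = 1 ∧ ∀ i, i < M → lamv i < lamv (i + 1)

/-- The `(σ,λ)`-GFF: `ψ_v = Σ_{i=1}^M σ_i (φ_v(λ_i) − φ_v(λ_{i−1}))`. -/
def psiFld (N M : ℕ) (sigv lamv : ℕ → ℝ) (P : MeasureTheory.Measure FieldSp) (v : Vtx) : FieldSp → ℝ :=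
  fun ω => ∑ i ∈ Finset.Icc 1 M, sigv i * (phiScale N P v (lamv i) ω - phiScale N P v (lamv (i - 1)) ω)

open MeasureTheory in
/-- `ψ_v(λ) = E[ψ_v | F_{∂[v]_λ ∪ [v]_λ^c}]`. -/
def psiScale (N M : ℕ) (sigv lamv : ℕ → ℝ) (P : MeasureTheory.Measure FieldSp) (v : Vtx) (lam : ℝ) :
    FieldSp → ℝ :=
  P[psiFld N M sigv lamv P v | scaleAlg N lam v]

/-- The increment `ψ_v(λ,λ') = ψ_v(λ') − ψ_v(λ)`. -/
def psiInc (N M : ℕ) (sigv lamv : ℕ → ℝ) (P : MeasureTheory.Measure FieldSp) (v : Vtx) (lam lam' : ℝ) :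
    FieldSp → ℝ :=
  fun ω => psiScale N M sigv lamv P v lam' ω - psiScale N M sigv lamv P v lam ω

/-- The step function `σ(s) = σ_1 1_{{0}}(s) + Σ_{i=1}^M σ_i 1_{(λ_{i−1},λ_i]}(s)`. -/
def stepFn (M : ℕ) (sigv lamv : ℕ → ℝ) (s : ℝ) : ℝ :=
  (if s = 0 then sigv 1 else 0) +
  ∑ i ∈ Finset.Icc 1 M, if lamv (i - 1) < s ∧ s ≤ lamv i then sigv i else 0

/-- `𝒥_f(s) = ∫_0^s f(r) dr`. -/
def Jint (f : ℝ → ℝ) (s : ℝ) : ℝ := ∫ r in (0:ℝ)..s, f r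

/-- `𝒥_f(s₁,s₂) = ∫_{s₁}^{s₂} f(r) dr`. -/
def Jint2 (f : ℝ → ℝ) (s₁ s₂ : ℝ) : ℝ := ∫ r in s₁..s₂, f r

/-- The speed function `𝒥_{σ²}`. -/
def Jsig2 (M : ℕ) (sigv lamv : ℕ → ℝ) (s : ℝ) : ℝ := Jint (fun r => (stepFn M sigv lamv r) ^ 2) s

/-- The normalized speed function `𝒥̄_{σ²} = 𝒥_{σ²}/𝒥_{σ²}(1)`. -/
def JsigBar (M : ℕ) (sigv lamv : ℕ → ℝ) (s : ℝ) : ℝ := Jsig2 M sigv lamv s / Jsig2 M sigv lamv 1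

/-- The concave hull on `[0,1]` of a function `f`, i.e. the pointwise infimum over all
concave functions dominating `f` on `[0,1]`. -/
def concaveHull (f : ℝ → ℝ) (s : ℝ) : ℝ :=
  sInf {y | ∃ g : ℝ → ℝ, ConcaveOn ℝ (Set.Icc (0:ℝ) 1) g ∧
    (∀ t ∈ Set.Icc (0:ℝ) 1, f t ≤ g t) ∧ y = g s}

/-- The effective parameters: jump scales `0 = λ⁰ < … < λ^m = 1`, values
`σ̄_1 > … > σ̄_m > 0`, and the left-continuous non-increasing step function `σ̄`
such that `∫_0^s σ̄²` is the concavification of `𝒥_{σ²}`. -/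
def EffParams (M : ℕ) (sigv lamv : ℕ → ℝ) (m : ℕ) (sigb lamb : ℕ → ℝ) (sigbar : ℝ → ℝ) : Prop :=
  1 ≤ m ∧ m ≤ M ∧ lamb 0 = 0 ∧ lamb m = 1 ∧ (∀ j, j < m → lamb j < lamb (j + 1)) ∧
  (∀ l, 1 ≤ l → l < m → sigb (l + 1) < sigb l) ∧ (∀ l ∈ Finset.Icc 1 m, 0 < sigb l) ∧
  sigbar 0 = sigb 1 ∧
  (∀ l ∈ Finset.Icc 1 m, ∀ s : ℝ, lamb (l - 1) < s → s ≤ lamb l → sigbar s = sigb l) ∧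
  (∀ s : ℝ, 0 < s → s ≤ 1 →
    concaveHull (Jsig2 M sigv lamv) s = ∫ r in (0:ℝ)..s, (sigbar r) ^ 2)

/-- `γ* = 𝒥_{σ²/σ̄}(1)`. -/
def gammaStar (M : ℕ) (sigv lamv : ℕ → ℝ) (sigbar : ℝ → ℝ) : ℝ :=
  ∫ s in (0:ℝ)..1, (stepFn M sigv lamv s) ^ 2 / sigbar s

/-- The critical levels `γ^l = ∫_0^1 σ²(s)/σ̄(s ∧ λ^l) ds`, `γ⁰ = 0`. -/
def gammaL (M : ℕ) (sigv lamv : ℕ → ℝ) (lamb : ℕ → ℝ) (sigbar : ℝ → ℝ) (l : ℕ) : ℝ :=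
  if l = 0 then 0 else ∫ s in (0:ℝ)..1, (stepFn M sigv lamv s) ^ 2 / sigbar (min s (lamb l))

/-- `EntE` is the entropy function `𝓔` of the model. -/
def IsEntropy (M : ℕ) (sigv lamv : ℕ → ℝ) (m : ℕ) (lamb : ℕ → ℝ) (sigbar : ℝ → ℝ)
    (EntE : ℝ → ℝ) : Prop :=
  EntE 0 = 1 ∧
  ∀ l ∈ Finset.Icc 1 m, ∀ γ : ℝ,
    gammaL M sigv lamv lamb sigbar (l - 1) < γ → γ ≤ gammaL M sigv lamv lamb sigbar l →
      EntE γ = (1 - lamb (l - 1)) -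
        (γ - ∫ s in (0:ℝ)..(lamb (l - 1)), (stepFn M sigv lamv s) ^ 2 / sigbar s) ^ 2 /
          Jint2 (fun r => (stepFn M sigv lamv r) ^ 2) (lamb (l - 1)) 1

/-- The limiting free energy of the `REM(σ)` model. -/
def fREM (σ β : ℝ) : ℝ :=
  if (2 / σ) < β then 2 * (β / (2 / σ)) else 1 + (β / (2 / σ)) ^ 2

/-- The index `l_β`. -/
def lbeta (m : ℕ) (sigb : ℕ → ℝ) (β : ℝ) : ℕ :=
  if β ≤ 2 / sigb m then sInf {l : ℕ | 1 ≤ l ∧ β ≤ 2 / sigb l} else m + 1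

/-- The limiting free energy `f^ψ(β)`, written with the `l_β` split. -/
def fpsiLim (m : ℕ) (sigb lamb : ℕ → ℝ) (β : ℝ) : ℝ :=
  (∑ j ∈ Finset.Icc 1 (lbeta m sigb β - 1), (2 * β / (2 / sigb j)) * (lamb j - lamb (j - 1))) +
  ∑ j ∈ Finset.Icc (lbeta m sigb β) m, (1 + β ^ 2 / (2 / sigb j) ^ 2) * (lamb j - lamb (j - 1))

/-- The set `ℬ` of non-critical inverse temperatures. -/
def critSet (m : ℕ) (sigb : ℕ → ℝ) : Set ℝ :=
  {β | 0 < β ∧ ∀ j ∈ Finset.Icc 1 m, β ≠ 2 / sigb j}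

/-- The partition function `Z_N^ψ(β)`. -/
def ZN (N M : ℕ) (sigv lamv : ℕ → ℝ) (P : MeasureTheory.Measure FieldSp) (β : ℝ) (ω : FieldSp) : ℝ :=
  ∑ v ∈ VN N, Real.exp (β * psiFld N M sigv lamv P v ω)

/-- The free energy `f_N^ψ(β)` on `V_N`. -/
def freeEnergy (N M : ℕ) (sigv lamv : ℕ → ℝ) (P : MeasureTheory.Measure FieldSp) (β : ℝ) (ω : FieldSp) : ℝ :=
  (Real.log ((N : ℝ) ^ 2))⁻¹ * Real.log (ZN N M sigv lamv P β ω)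

/-- The set `A_{N,ρ}` of points at distance at least `N^{1−ρ}` from `ℤ² ∖ V_N`. -/
def AN (N : ℕ) (ρ : ℝ) : Finset Vtx :=
  (VN N).filter fun v => ∀ z : Vtx, z ∉ VN N →
    (N : ℝ) ^ ((1 : ℝ) - ρ) ≤ Real.sqrt (((v.1 : ℝ) - (z.1 : ℝ)) ^ 2 + ((v.2 : ℝ) - (z.2 : ℝ)) ^ 2)

/-- The restricted partition function `Z_{N,ρ}^ψ(β)`. -/
def ZNres (N M : ℕ) (sigv lamv : ℕ → ℝ) (P : MeasureTheory.Measure FieldSp) (β ρ : ℝ) (ω : FieldSp) : ℝ :=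
  ∑ v ∈ AN N ρ, Real.exp (β * psiFld N M sigv lamv P v ω)

/-- The free energy `f_{N,ρ}^ψ(β)` on `A_{N,ρ}`. -/
def freeEnergyRes (N M : ℕ) (sigv lamv : ℕ → ℝ) (P : MeasureTheory.Measure FieldSp) (β ρ : ℝ)
    (ω : FieldSp) : ℝ :=
  (Real.log ((N : ℝ) ^ 2))⁻¹ * Real.log (ZNres N M sigv lamv P β ρ ω)

/-- The Gibbs weight `𝒢_{β,N}({v})`. -/
def gibbsW (N M : ℕ) (sigv lamv : ℕ → ℝ) (P : MeasureTheory.Measure FieldSp) (β : ℝ) (v : Vtx)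
    (ω : FieldSp) : ℝ :=
  Real.exp (β * psiFld N M sigv lamv P v ω) / ZN N M sigv lamv P β ω

/-- The restricted Gibbs weight `𝒢_{β,N,ρ}({v})`. -/
def gibbsWres (N M : ℕ) (sigv lamv : ℕ → ℝ) (P : MeasureTheory.Measure FieldSp) (β ρ : ℝ) (v : Vtx)
    (ω : FieldSp) : ℝ :=
  Real.exp (β * psiFld N M sigv lamv P v ω) / ZNres N M sigv lamv P β ρ ω

/-- `E𝒢_{β,N}^{×s}[F]`: the mean over the disorder of the `s`-fold Gibbs average of `F`. -/
def gibbsExp (N M : ℕ) (sigv lamv : ℕ → ℝ) (P : MeasureTheory.Measure FieldSp) (β : ℝ) (s : ℕ)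
    (F : (Fin s → Vtx) → ℝ) : ℝ :=
  ∫ ω, (∑ vv ∈ Fintype.piFinset (fun _ : Fin s => VN N),
    (∏ i, gibbsW N M sigv lamv P β (vv i) ω) * F vv) ∂P

/-- `E𝒢_{β,N,ρ}^{×s}[F]`, with an `ω`-dependent integrand allowed. -/
def gibbsExpRes (N M : ℕ) (sigv lamv : ℕ → ℝ) (P : MeasureTheory.Measure FieldSp) (β ρ : ℝ) (s : ℕ)
    (F : (Fin s → Vtx) → FieldSp → ℝ) : ℝ :=
  ∫ ω, (∑ vv ∈ Fintype.piFinset (fun _ : Fin s => AN N ρ),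
    (∏ i, gibbsWres N M sigv lamv P β ρ (vv i) ω) * F vv ω) ∂P

/-- `E𝒢_{β,N}^{×s}[F]`, with an `ω`-dependent integrand allowed. -/
def gibbsExpW (N M : ℕ) (sigv lamv : ℕ → ℝ) (P : MeasureTheory.Measure FieldSp) (β : ℝ) (s : ℕ)
    (F : (Fin s → Vtx) → FieldSp → ℝ) : ℝ :=
  ∫ ω, (∑ vv ∈ Fintype.piFinset (fun _ : Fin s => VN N),
    (∏ i, gibbsW N M sigv lamv P β (vv i) ω) * F vv ω) ∂P

/-- The covariance `E[ψ_v ψ_{v'}]`. -/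
def psiCov (N M : ℕ) (sigv lamv : ℕ → ℝ) (P : MeasureTheory.Measure FieldSp) (v v' : Vtx) : ℝ :=
  ∫ ω, psiFld N M sigv lamv P v ω * psiFld N M sigv lamv P v' ω ∂P

/-- `C₀` is a constant witnessing the uniform variance upper bound
`max_{v∈V_N} E[ψ_v²] ≤ 𝒥_{σ²}(1) log N + C₀` for `N` large. -/
def IsVarBound (M : ℕ) (sigv lamv : ℕ → ℝ) (P : ℕ → MeasureTheory.Measure FieldSp) (C₀ : ℝ) : Prop :=
  0 < C₀ ∧ ∃ N₀ : ℕ, ∀ N ≥ N₀, ∀ v ∈ VN N,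
    psiCov N M sigv lamv (P N) v v ≤ Jsig2 M sigv lamv 1 * Real.log N + C₀

/-- The overlap `q^N(v,v')`. -/
def overlapQ (N M : ℕ) (sigv lamv : ℕ → ℝ) (P : MeasureTheory.Measure FieldSp) (C₀ : ℝ) (v v' : Vtx) : ℝ :=
  psiCov N M sigv lamv P v v' / (Jsig2 M sigv lamv 1 * Real.log N + C₀)

/-- Convergence in probability to a constant, for a sequence of random variables on a
sequence of probability spaces. -/
def TendstoInProb (P : ℕ → MeasureTheory.Measure FieldSp) (X : ℕ → FieldSp → ℝ) (c : ℝ) : Prop :=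
  ∀ ε : ℝ, 0 < ε → Tendsto (fun N => P N {ω | ε < |X N ω - c|}) atTop (nhds 0)

/-- Convergence in `L^p` to a constant. -/
def TendstoLp (P : ℕ → MeasureTheory.Measure FieldSp) (X : ℕ → FieldSp → ℝ) (p c : ℝ) : Prop :=
  Tendsto (fun N => ∫ ω, |X N ω - c| ^ p ∂(P N)) atTop (nhds 0)

/-- The branching scale `b_N(v,v')`. -/
def bScale (N : ℕ) (v v' : Vtx) : ℝ :=
  sSup {lam : ℝ | lam ∈ Set.Icc (0:ℝ) 1 ∧ ((nbhd N lam v) ∩ (nbhd N lam v')).Nonempty}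

end GFFCommon

/-!
The vertices near `∂V_N` are split into layers, one for each pair of consecutive scale radii, and
each layer into cells. Replacing `ψ` on a layer by a field that only sees the surroundings of each
cell costs a remainder of bounded variance, and hence at most `δ log N + O(1)` in `E log Z`, for any
`δ > 0`. After the cells have been moved to far apart positions inside `V_N`, the field `ψ` there is
this local field plus centred Gaussian noise uncorrelated with it, and by convexity such noise can
only increase `E log Z`. There is room for `K ≥ N ^ (ρ / 2)` disjoint copies of the layer, so by
Jensen's inequality `E log Z` over `V_N` exceeds `E log Z` over the layer by at least
`log K - δ log N - O(1)`, which is of order `log N`. As all variances are `O(log N)`, Gaussian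
concentration puts each `log Z` within `O(√(log N))` of its mean in `L¹`. Hence the expected Gibbs
mass of each layer vanishes, and product Gibbs averages of bounded functions over `V_N` and over
`A_{N,ρ}` differ by at most a multiple of the mass of `V_N ∖ A_{N,ρ}`.
-/

noncomputable section

open MeasureTheory ProbabilityTheory
open scoped Pointwise

section PotentialTheory

/-- The discrete Laplacian `I - P`, where `P` is the transition operator of simple random walk
on `ℤ²`. -/
def lap : (Vtx → ℝ) →ₗ[ℝ] (Vtx → ℝ) where
  toFun f x :=
    f x - (f (x.1 + 1, x.2) + f (x.1 - 1, x.2) + f (x.1, x.2 + 1) + f (x.1, x.2 - 1)) / 4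
  map_add' f g := by ext x; simp only [Pi.add_apply]; ring
  map_smul' c f := by ext x; simp only [Pi.smul_apply, smul_eq_mul, RingHom.id_apply]; ring

lemma lap_apply (f : Vtx → ℝ) (x : Vtx) :
    lap f x =
      f x - (f (x.1 + 1, x.2) + f (x.1 - 1, x.2) + f (x.1, x.2 + 1) + f (x.1, x.2 - 1)) / 4 :=
  rfl

lemma lap_comp_add_left (f : Vtx → ℝ) (t x : Vtx) : lap (fun z => f (t + z)) x = lap f (t + x) := by
  simp [lap_apply, Prod.add_def, add_assoc, add_sub_assoc]

/-- The four nearest neighbours of a vertex of `ℤ²`. -/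
def latticeNbrs (x : Vtx) : Finset Vtx :=
  {(x.1 + 1, x.2), (x.1 - 1, x.2), (x.1, x.2 + 1), (x.1, x.2 - 1)}

lemma mem_latticeNbrs {x y : Vtx} :
    y ∈ latticeNbrs x ↔
      y = (x.1 + 1, x.2) ∨ y = (x.1 - 1, x.2) ∨ y = (x.1, x.2 + 1) ∨ y = (x.1, x.2 - 1) := by
  simp [latticeNbrs]

lemma forall_mem_latticeNbrs {x : Vtx} {p : Vtx → Prop} :
    (∀ y ∈ latticeNbrs x, p y) ↔
      p (x.1 + 1, x.2) ∧ p (x.1 - 1, x.2) ∧ p (x.1, x.2 + 1) ∧ p (x.1, x.2 - 1) := by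
  simp [latticeNbrs]

theorem le_of_lap_nonpos {S : Finset Vtx} {f : Vtx → ℝ} {c : ℝ} (hlap : ∀ x ∈ S, lap f x ≤ 0)
    (hbdry : ∀ x ∈ S, ∀ y ∈ latticeNbrs x, y ∉ S → f y ≤ c) : ∀ x ∈ S, f x ≤ c := by
  intro x hx
  by_contra! hcx
  obtain ⟨a, haS, hamax⟩ := S.exists_max_image f ⟨x, hx⟩
  -- Among the maximisers take one with the largest first coordinate: its right neighbour is
  -- strictly smaller, which contradicts subharmonicity.
  obtain ⟨b, hb, hbmax⟩ := (S.filter fun z => f z = f a).exists_max_image Prod.fst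
    ⟨a, by simp [haS]⟩
  obtain ⟨hbS, hfb⟩ := Finset.mem_filter.1 hb
  have hca : c < f a := hcx.trans_le (hamax x hx)
  have hle : ∀ y ∈ latticeNbrs b, f y ≤ f a := fun y hy => by
    by_cases hyS : y ∈ S
    · exact hamax y hyS
    · exact (hbdry b hbS y hy hyS).trans hca.le
  have hlt : f (b.1 + 1, b.2) < f a := by
    by_cases hyS : ((b.1 + 1, b.2) : Vtx) ∈ S
    · refine (hamax _ hyS).lt_of_ne fun heq => ?_
      have := hbmax _ (Finset.mem_filter.2 ⟨hyS, heq⟩)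
      simp at this
    · exact (hbdry b hbS _ (mem_latticeNbrs.2 (.inl rfl)) hyS).trans_lt hca
  obtain ⟨-, h₂, h₃, h₄⟩ := forall_mem_latticeNbrs.1 hle
  have := hlap b hbS
  rw [lap_apply, hfb] at this
  linarith

theorem eq_zero_of_lap_eq_zero {S : Finset Vtx} {f : Vtx → ℝ} (hlap : ∀ x ∈ S, lap f x = 0)
    (hoff : ∀ x ∉ S, f x = 0) : f = 0 := by
  ext x
  by_cases hx : x ∈ S
  · have hle := le_of_lap_nonpos (fun y hy => (hlap y hy).le)
      (fun _ _ y _ hy => (hoff y hy).le) x hx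
    have hge := le_of_lap_nonpos (f := -f) (c := 0) (fun y hy => by simp [hlap y hy])
      (fun _ _ y _ hy => by simp [hoff y hy]) x hx
    exact le_antisymm hle (by simpa using hge)
  · exact hoff x hx

lemma sum_lap_single_mul {W : Finset Vtx} {x : Vtx} (g : Vtx → ℝ) (hx : x ∈ W)
    (hW : latticeNbrs x ⊆ W) : ∑ w ∈ W, lap (Pi.single x 1) w * g w = lap g x := by
  obtain ⟨h₁, h₂, h₃, h₄⟩ := forall_mem_latticeNbrs.1 hW
  have hlap : ∀ w, lap (Pi.single x 1) w * g w =
      (if w = x then g w else 0) - ((if w = (x.1 - 1, x.2) then g w else 0) +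
        (if w = (x.1 + 1, x.2) then g w else 0) + (if w = (x.1, x.2 - 1) then g w else 0) +
        (if w = (x.1, x.2 + 1) then g w else 0)) / 4 := by
    intro w
    simp only [lap_apply, Pi.single_apply, Prod.ext_iff, ← eq_sub_iff_add_eq, sub_eq_iff_eq_add]
    split_ifs <;> ring
  simp_rw [hlap, Finset.sum_sub_distrib, ← Finset.sum_div, Finset.sum_add_distrib,
    Finset.sum_ite_eq', if_pos hx, if_pos h₁, if_pos h₂, if_pos h₃, if_pos h₄, lap_apply]
  ring

lemma eq_sum_smul_single {S : Finset Vtx} {f : Vtx → ℝ} (hoff : ∀ x ∉ S, f x = 0) :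
    f = ∑ x ∈ S, f x • Pi.single x (1 : ℝ) := by
  ext y
  by_cases hy : y ∈ S <;> simp [Finset.sum_apply, Pi.single_apply, hy, hoff]

theorem sum_lap_mul {S W : Finset Vtx} {f : Vtx → ℝ} (g : Vtx → ℝ) (hoff : ∀ x ∉ S, f x = 0)
    (hSW : S ⊆ W) (hW : ∀ x ∈ S, latticeNbrs x ⊆ W) :
    ∑ w ∈ W, lap f w * g w = ∑ w ∈ S, f w * lap g w := by
  conv_lhs => rw [eq_sum_smul_single hoff]
  simp_rw [map_sum, map_smul, Finset.sum_apply, Pi.smul_apply, smul_eq_mul, Finset.sum_mul,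
    mul_assoc]
  rw [Finset.sum_comm]
  refine Finset.sum_congr rfl fun x hx => ?_
  rw [← Finset.mul_sum, sum_lap_single_mul g (hSW hx) (hW x hx)]

theorem sum_lap_mul_comm {S : Finset Vtx} {f g : Vtx → ℝ} (hf : ∀ x ∉ S, f x = 0)
    (hg : ∀ x ∉ S, g x = 0) : ∑ w ∈ S, lap f w * g w = ∑ w ∈ S, f w * lap g w := by
  rw [← sum_lap_mul (W := S ∪ S.biUnion latticeNbrs) g hf Finset.subset_union_left fun x hx =>
    (Finset.subset_biUnion_of_mem latticeNbrs hx).trans Finset.subset_union_right]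
  exact Finset.sum_subset Finset.subset_union_left fun x _ hx => by simp [hg x hx]

end PotentialTheory

section GreenFunction

/-- The Dirichlet Laplacian of a finite set: extend by zero, apply `lap`, restrict. -/
def dirichletLap (S : Finset Vtx) : (S → ℝ) →ₗ[ℝ] (S → ℝ) :=
  LinearMap.funLeft ℝ ℝ Subtype.val ∘ₗ lap ∘ₗ Function.ExtendByZero.linearMap ℝ Subtype.val

lemma extendByZero_of_notMem {S : Finset Vtx} (f : S → ℝ) {x : Vtx} (hx : x ∉ S) :
    Function.ExtendByZero.linearMap ℝ Subtype.val f x = 0 := by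
  rw [Function.ExtendByZero.linearMap_apply, Function.extend_apply' _ _ _ (by simpa using hx)]
  rfl

lemma dirichletLap_surjective (S : Finset Vtx) : Function.Surjective (dirichletLap S) := by
  rw [← LinearMap.injective_iff_surjective, injective_iff_map_eq_zero]
  intro f hf
  have hext := eq_zero_of_lap_eq_zero (S := S) (fun x hx => congrFun hf ⟨x, hx⟩)
    fun x hx => extendByZero_of_notMem f hx
  ext x
  simpa [Function.ExtendByZero.linearMap_apply, Subtype.val_injective.extend_apply]
    using congrFun hext x

lemma exists_green (S : Finset Vtx) (y : Vtx) : ∃ g : Vtx → ℝ,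
    (∀ x ∉ S, g x = 0) ∧ ∀ x ∈ S, lap g x = if x = y then Real.pi / 2 else 0 := by
  obtain ⟨f, hf⟩ := dirichletLap_surjective S fun z => if (z : Vtx) = y then Real.pi / 2 else 0
  exact ⟨_, fun x hx => extendByZero_of_notMem f hx, fun x hx => congrFun hf ⟨x, hx⟩⟩

/-- `green S y` is the Green function with pole `y` of simple random walk killed outside the
finite set `S`, normalised as in `IsGreenFn`; it vanishes identically if `y ∉ S`. -/
def green (S : Finset Vtx) (y : Vtx) : Vtx → ℝ := (exists_green S y).choose

variable {S : Finset Vtx}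

lemma green_of_notMem_right (y : Vtx) {x : Vtx} (hx : x ∉ S) : green S y x = 0 :=
  (exists_green S y).choose_spec.1 x hx

lemma lap_green (y : Vtx) {x : Vtx} (hx : x ∈ S) :
    lap (green S y) x = if x = y then Real.pi / 2 else 0 :=
  (exists_green S y).choose_spec.2 x hx

lemma green_unique {g : Vtx → ℝ} (y : Vtx) (hoff : ∀ x ∉ S, g x = 0)
    (hlap : ∀ x ∈ S, lap g x = if x = y then Real.pi / 2 else 0) : g = green S y :=
  sub_eq_zero.1 <| eq_zero_of_lap_eq_zero (S := S)
    (fun x hx => by rw [map_sub, Pi.sub_apply, hlap x hx, lap_green y hx, sub_self])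
    fun x hx => by rw [Pi.sub_apply, hoff x hx, green_of_notMem_right y hx, sub_self]

lemma green_of_notMem_left {y : Vtx} (hy : y ∉ S) : green S y = 0 :=
  eq_zero_of_lap_eq_zero (fun x hx => by rw [lap_green y hx, if_neg (by rintro rfl; exact hy hx)])
    fun _ => green_of_notMem_right y

lemma sum_mul_lap_green {y : Vtx} (hy : y ∈ S) (f : Vtx → ℝ) :
    ∑ w ∈ S, f w * lap (green S y) w = f y * (Real.pi / 2) := by
  rw [Finset.sum_congr rfl fun w hw => by rw [lap_green y hw]]
  simp [hy]

theorem green_comm (x y : Vtx) : green S x y = green S y x := by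
  by_cases hx : x ∈ S; swap
  · rw [green_of_notMem_left hx, green_of_notMem_right y hx, Pi.zero_apply]
  by_cases hy : y ∈ S; swap
  · rw [green_of_notMem_left hy, green_of_notMem_right x hy, Pi.zero_apply]
  have hsymm := sum_lap_mul_comm (fun z => green_of_notMem_right (S := S) x)
    (fun z => green_of_notMem_right (S := S) y)
  simp_rw [mul_comm (lap _ _)] at hsymm
  rw [sum_mul_lap_green hx, sum_mul_lap_green hy] at hsymm
  exact (mul_right_cancel₀ (by positivity) hsymm).symm

theorem green_vadd (t : Vtx) (S : Finset Vtx) (x y : Vtx) :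
    green (t +ᵥ S) (t + x) (t + y) = green S x y := by
  have hmem : ∀ z, t + z ∈ t +ᵥ S ↔ z ∈ S := fun z => Finset.vadd_mem_vadd_finset_iff t
  refine congrFun (green_unique (S := S) (g := fun z => green (t +ᵥ S) (t + x) (t + z)) x
    (fun z hz => green_of_notMem_right _ (by rwa [hmem])) fun z hz => ?_) y
  rw [lap_comp_add_left, lap_green _ ((hmem z).2 hz)]
  simp only [add_right_inj]

end GreenFunction

section LogBarrier

lemma log_add_four {a b c d : ℝ} (ha : 0 < a) (hb : 0 < b) (hc : 0 < c) (hd : 0 < d) :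
    Real.log a + Real.log b + Real.log c + Real.log d = Real.log ((a * b) * (c * d)) := by
  rw [Real.log_mul (by positivity) (by positivity), Real.log_mul ha.ne' hb.ne',
    Real.log_mul hc.ne' hd.ne']
  ring

lemma four_mul_log_add_half_le (x y : ℝ) :
    4 * Real.log (x ^ 2 + y ^ 2 + 1 / 2) ≤
      Real.log ((x + 1) ^ 2 + y ^ 2 + 1 / 2) + Real.log ((x - 1) ^ 2 + y ^ 2 + 1 / 2) +
        Real.log (x ^ 2 + (y + 1) ^ 2 + 1 / 2) + Real.log (x ^ 2 + (y - 1) ^ 2 + 1 / 2) := by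
  rw [log_add_four (by positivity) (by positivity) (by positivity) (by positivity),
    show 4 * Real.log (x ^ 2 + y ^ 2 + 1 / 2) = Real.log ((x ^ 2 + y ^ 2 + 1 / 2) ^ 4) by
      rw [Real.log_pow]; norm_num]
  refine Real.log_le_log (by positivity) ?_
  nlinarith [sq_nonneg (x * y), sq_nonneg x, sq_nonneg y]

lemma add_two_mul_pos_and_sub_two_mul_pos {x n : ℝ} (hn : 4 ≤ n) (hx : x ^ 2 ≤ n) :
    0 < n + 1 + 2 * x ∧ 0 < n + 1 - 2 * x := by
  have := abs_lt.1 (abs_lt_of_sq_lt_sq (a := 2 * x) (b := n + 1) (by nlinarith) (by linarith))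
  constructor <;> linarith

lemma sum_log_nbrs_le {x y n : ℝ} (hn : x ^ 2 + y ^ 2 = n) (h4 : 4 ≤ n) :
    Real.log (n + 1 + 2 * x) + Real.log (n + 1 - 2 * x) + Real.log (n + 1 + 2 * y) +
      Real.log (n + 1 - 2 * y) ≤ 4 * Real.log n + 2 / n ^ 2 := by
  obtain ⟨h₁, h₂⟩ := add_two_mul_pos_and_sub_two_mul_pos h4 (x := x) (by nlinarith [sq_nonneg y])
  obtain ⟨h₃, h₄⟩ := add_two_mul_pos_and_sub_two_mul_pos h4 (x := y) (by nlinarith [sq_nonneg x])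
  have : 0 < n := by linarith
  have hprod : (n + 1 + 2 * x) * (n + 1 - 2 * x) * ((n + 1 + 2 * y) * (n + 1 - 2 * y)) ≤
      (n ^ 2 + 1) ^ 2 := by
    have hxy : 4 * (x ^ 2 * y ^ 2) ≤ n ^ 2 := by
      rw [← hn]; nlinarith [sq_nonneg (x ^ 2 - y ^ 2)]
    calc (n + 1 + 2 * x) * (n + 1 - 2 * x) * ((n + 1 + 2 * y) * (n + 1 - 2 * y))
        = (n + 1) ^ 4 - 4 * (n + 1) ^ 2 * n + 16 * (x ^ 2 * y ^ 2) := by rw [← hn]; ring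
      _ ≤ (n ^ 2 + 1) ^ 2 := by nlinarith
  calc _ = Real.log ((n + 1 + 2 * x) * (n + 1 - 2 * x) * ((n + 1 + 2 * y) * (n + 1 - 2 * y))) :=
        log_add_four h₁ h₂ h₃ h₄
    _ ≤ Real.log ((n ^ 2 + 1) ^ 2) := Real.log_le_log (by positivity) hprod
    _ = 2 * Real.log (n ^ 2 * (1 + 1 / n ^ 2)) := by rw [Real.log_pow]; congr 2; field_simp
    _ = 4 * Real.log n + 2 * Real.log (1 + 1 / n ^ 2) := by
      rw [Real.log_mul (by positivity) (by positivity), Real.log_pow]; push_cast; ring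
    _ ≤ 4 * Real.log n + 2 * (1 / n ^ 2) := by
      have := Real.log_le_sub_one_of_pos (show 0 < 1 + 1 / n ^ 2 by positivity)
      linarith
    _ = _ := by ring

lemma le_sum_inv_nbrs {x y n : ℝ} (hn : x ^ 2 + y ^ 2 = n) (h4 : 4 ≤ n) :
    4 / n + 2 / n ^ 2 ≤
      1 / (n + 1 + 2 * x) + 1 / (n + 1 - 2 * x) + 1 / (n + 1 + 2 * y) + 1 / (n + 1 - 2 * y) := by
  obtain ⟨h₁, h₂⟩ := add_two_mul_pos_and_sub_two_mul_pos h4 (x := x) (by nlinarith [sq_nonneg y])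
  obtain ⟨h₃, h₄⟩ := add_two_mul_pos_and_sub_two_mul_pos h4 (x := y) (by nlinarith [sq_nonneg x])
  obtain ⟨a, ha⟩ : ∃ a, a = (n + 1 + 2 * x) * (n + 1 - 2 * x) := ⟨_, rfl⟩
  obtain ⟨b, hb⟩ : ∃ b, b = (n + 1 + 2 * y) * (n + 1 - 2 * y) := ⟨_, rfl⟩
  have ha0 : 0 < a := ha ▸ mul_pos h₁ h₂
  have hb0 : 0 < b := hb ▸ mul_pos h₃ h₄
  have hab : n ^ 2 + 1 = (a + b) / 2 := by rw [ha, hb, ← hn]; ring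
  have hx : 1 / (n + 1 + 2 * x) + 1 / (n + 1 - 2 * x) = 2 * (n + 1) / a := by
    rw [ha]; field_simp; ring
  have hy : 1 / (n + 1 + 2 * y) + 1 / (n + 1 - 2 * y) = 2 * (n + 1) / b := by
    rw [hb]; field_simp; ring
  have hharm : 2 / (n ^ 2 + 1) ≤ 1 / a + 1 / b := by
    rw [hab, div_add_div _ _ ha0.ne' hb0.ne', div_le_div_iff₀ (by linarith) (by positivity)]
    nlinarith [sq_nonneg (a - b)]
  calc 4 / n + 2 / n ^ 2 ≤ 2 * (n + 1) * (2 / (n ^ 2 + 1)) := by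
        rw [div_add_div _ _ (by positivity) (by positivity), mul_div_assoc',
          div_le_div_iff₀ (by positivity) (by positivity)]
        have : 0 ≤ n ^ 2 * (n ^ 2 - 2 * n - 1) := mul_nonneg (by positivity) (by nlinarith)
        nlinarith
    _ ≤ 2 * (n + 1) * (1 / a + 1 / b) := by gcongr
    _ = _ := by rw [add_assoc _ (1 / _) (1 / _), hx, hy]; ring

lemma sum_log_sub_inv_nbrs_le {x y : ℝ} (h : 4 ≤ x ^ 2 + y ^ 2) :
    (Real.log ((x + 1) ^ 2 + y ^ 2) - 1 / ((x + 1) ^ 2 + y ^ 2)) +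
      (Real.log ((x - 1) ^ 2 + y ^ 2) - 1 / ((x - 1) ^ 2 + y ^ 2)) +
      (Real.log (x ^ 2 + (y + 1) ^ 2) - 1 / (x ^ 2 + (y + 1) ^ 2)) +
      (Real.log (x ^ 2 + (y - 1) ^ 2) - 1 / (x ^ 2 + (y - 1) ^ 2)) ≤
    4 * (Real.log (x ^ 2 + y ^ 2) - 1 / (x ^ 2 + y ^ 2)) := by
  obtain ⟨n, hn⟩ : ∃ n, x ^ 2 + y ^ 2 = n := ⟨_, rfl⟩
  rw [show (x + 1) ^ 2 + y ^ 2 = n + 1 + 2 * x by rw [← hn]; ring,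
    show (x - 1) ^ 2 + y ^ 2 = n + 1 - 2 * x by rw [← hn]; ring,
    show x ^ 2 + (y + 1) ^ 2 = n + 1 + 2 * y by rw [← hn]; ring,
    show x ^ 2 + (y - 1) ^ 2 = n + 1 - 2 * y by rw [← hn]; ring, hn]
  rw [hn] at h
  have := le_sum_inv_nbrs hn h
  have := sum_log_nbrs_le hn h
  have : 4 / n = 4 * (1 / n) := by ring
  linarith

/-- The squared Euclidean distance in `ℤ²`. -/
def sqDist (x y : Vtx) : ℝ := ((x.1 : ℝ) - y.1) ^ 2 + ((x.2 : ℝ) - y.2) ^ 2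

lemma sqDist_nonneg (x y : Vtx) : 0 ≤ sqDist x y := by unfold sqDist; positivity

lemma sqDist_self (x : Vtx) : sqDist x x = 0 := by simp [sqDist]

/-- The barrier `2 log (|x - v'|² / |x - v|²)`, corrected so as to be superharmonic on the
lattice; `v'` is thought of as the mirror image of `v` in a side of the box. -/
def greenBarrier (v v' x : Vtx) : ℝ :=
  2 * (Real.log (sqDist x v') - 1 / sqDist x v' + 3 / 2 - Real.log (sqDist x v + 1 / 2))

lemma lap_greenBarrier_nonneg {v v' x : Vtx} (h : 4 ≤ sqDist x v') :
    0 ≤ lap (greenBarrier v v') x := by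
  have hpole := four_mul_log_add_half_le ((x.1 : ℝ) - v.1) ((x.2 : ℝ) - v.2)
  have himage := sum_log_sub_inv_nbrs_le h
  simp only [lap_apply, greenBarrier, sqDist, Int.cast_add, Int.cast_sub, Int.cast_one,
    add_sub_right_comm, sub_right_comm _ (1 : ℝ)]
  linarith

lemma le_lap_greenBarrier_pole {v v' : Vtx} (h : 4 ≤ sqDist v v') :
    Real.pi / 2 ≤ lap (greenBarrier v v') v := by
  have himage := sum_log_sub_inv_nbrs_le h
  have hlog3 : 1 ≤ Real.log (3 / 2) - Real.log (1 / 2) := by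
    rw [← Real.log_div (by norm_num) (by norm_num), Real.le_log_iff_exp_le (by norm_num)]
    exact Real.exp_one_lt_d9.le.trans (by norm_num)
  have hpi := Real.pi_lt_four
  simp only [lap_apply, greenBarrier, sqDist, Int.cast_add, Int.cast_sub, Int.cast_one,
    add_sub_right_comm, sub_right_comm _ (1 : ℝ), sub_self]
  norm_num [-one_div] at hlog3 himage ⊢
  linarith

lemma greenBarrier_nonneg {v v' x : Vtx} (h1 : 1 ≤ sqDist x v') (h : sqDist x v ≤ sqDist x v') :
    0 ≤ greenBarrier v v' x := by
  have hlog : Real.log (sqDist x v + 1 / 2) ≤ Real.log (sqDist x v') + 1 / 2 :=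
    calc Real.log (sqDist x v + 1 / 2) ≤ Real.log (sqDist x v' * (3 / 2)) :=
          Real.log_le_log (by linarith [sqDist_nonneg x v]) (by linarith)
      _ = Real.log (sqDist x v') + Real.log (3 / 2) :=
          Real.log_mul (by linarith) (by norm_num)
      _ ≤ Real.log (sqDist x v') + 1 / 2 := by
          have := Real.log_le_sub_one_of_pos (show (0 : ℝ) < 3 / 2 by norm_num)
          linarith
  have hinv : 1 / sqDist x v' ≤ 1 := (div_le_one (by linarith)).2 h1
  unfold greenBarrier
  linarith

theorem green_le_greenBarrier {S : Finset Vtx} {v v' : Vtx} (h4 : ∀ x ∈ S, 4 ≤ sqDist x v')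
    (hnbr : ∀ x ∈ S, ∀ y ∈ latticeNbrs x, 1 ≤ sqDist y v' ∧ sqDist y v ≤ sqDist y v') :
    ∀ x ∈ S, green S v x ≤ greenBarrier v v' x := by
  intro x hx
  refine sub_nonpos.1 (le_of_lap_nonpos (f := green S v - greenBarrier v v') (fun y hy => ?_)
    (fun y hy z hz hzS => ?_) x hx)
  · rw [map_sub, Pi.sub_apply, lap_green v hy, sub_nonpos]
    split_ifs with hyv
    · exact hyv ▸ le_lap_greenBarrier_pole (hyv ▸ h4 y hy)
    · exact lap_greenBarrier_nonneg (h4 y hy)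
  · rw [Pi.sub_apply, green_of_notMem_right v hzS, zero_sub, neg_nonpos]
    exact greenBarrier_nonneg (hnbr y hy z hz).1 (hnbr y hy z hz).2

end LogBarrier

section GreenEstimates

/-- The interior of the box `V_N`. -/
def innerBox (N : ℕ) : Finset Vtx := intr (VN N)

lemma mem_VN {N : ℕ} {x : Vtx} : x ∈ VN N ↔ 0 ≤ x.1 ∧ x.1 ≤ N ∧ 0 ≤ x.2 ∧ x.2 ≤ N := by
  rw [VN, Finset.mem_Icc, Prod.le_def, Prod.le_def]
  tauto

lemma mem_intr {B : Finset Vtx} {x : Vtx} : x ∈ intr B ↔ x ∈ B ∧ latticeNbrs x ⊆ B := by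
  rw [Finset.subset_iff, forall_mem_latticeNbrs]
  simp only [intr, bdry, Finset.mem_sdiff, Finset.mem_filter]
  tauto

lemma mem_innerBox {N : ℕ} {x : Vtx} :
    x ∈ innerBox N ↔ 1 ≤ x.1 ∧ x.1 < N ∧ 1 ≤ x.2 ∧ x.2 < N := by
  rw [innerBox, mem_intr, Finset.subset_iff, forall_mem_latticeNbrs]
  simp only [mem_VN]
  omega

/-- The sup-norm distance from `v` to the boundary of `V_N`. -/
def depth (N : ℕ) (v : Vtx) : ℤ := min (min v.1 (N - v.1)) (min v.2 (N - v.2))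

lemma exists_mirror {N : ℕ} {v : Vtx} (hv : v ∈ innerBox N) : ∃ v' : Vtx,
    (∀ x ∈ innerBox N, 4 ≤ sqDist x v') ∧
    (∀ y ∈ VN N, 1 ≤ sqDist y v' ∧ sqDist y v ≤ sqDist y v') ∧
    sqDist v v' = 4 * (depth N v : ℝ) ^ 2 := by
  have hinner : ∀ x ∈ innerBox N,
      (1 : ℝ) ≤ x.1 ∧ (x.1 : ℝ) + 1 ≤ N ∧ (1 : ℝ) ≤ x.2 ∧ (x.2 : ℝ) + 1 ≤ N := fun x hx => by
    have := mem_innerBox.1 hx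
    exact_mod_cast this
  have hbox : ∀ x ∈ VN N, (0 : ℝ) ≤ x.1 ∧ (x.1 : ℝ) ≤ N ∧ (0 : ℝ) ≤ x.2 ∧ (x.2 : ℝ) ≤ N :=
    fun x hx => by
      have := mem_VN.1 hx
      exact_mod_cast this
  obtain ⟨h₁, h₂, h₃, h₄⟩ := hinner v hv
  have hdepth : depth N v = v.1 ∨ depth N v = N - v.1 ∨ depth N v = v.2 ∨ depth N v = N - v.2 := by
    unfold depth; omega
  rcases hdepth with hd | hd | hd | hd <;> rw [hd]
  · refine ⟨(-v.1, v.2), fun x hx => ?_, fun y hy => ?_, ?_⟩ <;> simp only [sqDist] <;> push_cast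
    · obtain ⟨_, _, _, _⟩ := hinner x hx; nlinarith [sq_nonneg ((x.2 : ℝ) - v.2)]
    · obtain ⟨_, _, _, _⟩ := hbox y hy; constructor <;> nlinarith [sq_nonneg ((y.2 : ℝ) - v.2)]
    · ring
  · refine ⟨(2 * N - v.1, v.2), fun x hx => ?_, fun y hy => ?_, ?_⟩ <;> simp only [sqDist] <;>
      push_cast
    · obtain ⟨_, _, _, _⟩ := hinner x hx; nlinarith [sq_nonneg ((x.2 : ℝ) - v.2)]
    · obtain ⟨_, _, _, _⟩ := hbox y hy; constructor <;> nlinarith [sq_nonneg ((y.2 : ℝ) - v.2)]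
    · ring
  · refine ⟨(v.1, -v.2), fun x hx => ?_, fun y hy => ?_, ?_⟩ <;> simp only [sqDist] <;> push_cast
    · obtain ⟨_, _, _, _⟩ := hinner x hx; nlinarith [sq_nonneg ((x.1 : ℝ) - v.1)]
    · obtain ⟨_, _, _, _⟩ := hbox y hy; constructor <;> nlinarith [sq_nonneg ((y.1 : ℝ) - v.1)]
    · ring
  · refine ⟨(v.1, 2 * N - v.2), fun x hx => ?_, fun y hy => ?_, ?_⟩ <;> simp only [sqDist] <;>
      push_cast
    · obtain ⟨_, _, _, _⟩ := hinner x hx; nlinarith [sq_nonneg ((x.1 : ℝ) - v.1)]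
    · obtain ⟨_, _, _, _⟩ := hbox y hy; constructor <;> nlinarith [sq_nonneg ((y.1 : ℝ) - v.1)]
    · ring

lemma exists_green_innerBox_le {N : ℕ} {v : Vtx} (hv : v ∈ innerBox N) : ∃ v' : Vtx,
    (∀ x ∈ innerBox N, 4 ≤ sqDist x v' ∧ green (innerBox N) v x ≤ greenBarrier v v' x) ∧
    sqDist v v' = 4 * (depth N v : ℝ) ^ 2 := by
  obtain ⟨v', h4, hbox, hd⟩ := exists_mirror hv
  exact ⟨v', fun x hx => ⟨h4 x hx, green_le_greenBarrier h4
    (fun x hx y hy => hbox y ((mem_intr.1 hx).2 hy)) x hx⟩, hd⟩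

lemma depth_nonneg {N : ℕ} {v : Vtx} (hv : v ∈ innerBox N) : (0 : ℝ) ≤ depth N v := by
  rw [mem_innerBox] at hv
  exact_mod_cast (by unfold depth; omega : 0 ≤ depth N v)

theorem green_innerBox_self_le {N : ℕ} (hN : 1 ≤ N) (v : Vtx) :
    green (innerBox N) v v ≤ 4 * Real.log N + 8 := by
  have hN1 : (1 : ℝ) ≤ N := by exact_mod_cast hN
  by_cases hv : v ∈ innerBox N; swap
  · rw [green_of_notMem_right v hv]
    linarith [Real.log_nonneg hN1]
  obtain ⟨v', hv', hd⟩ := exists_green_innerBox_le hv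
  obtain ⟨h4, hle⟩ := hv' v hv
  have hdN : (depth N v : ℝ) ≤ N := by
    rw [mem_innerBox] at hv
    exact_mod_cast (by unfold depth; omega : depth N v ≤ N)
  have hlog : Real.log (sqDist v v') ≤ 2 * Real.log 2 + 2 * Real.log N :=
    calc Real.log (sqDist v v') ≤ Real.log ((2 * N) ^ 2) :=
          Real.log_le_log (by linarith) (by rw [hd]; nlinarith [depth_nonneg hv])
      _ = 2 * Real.log 2 + 2 * Real.log N := by
          rw [Real.log_pow, Real.log_mul (by norm_num) (by linarith)]; push_cast; ring
  have hhalf : Real.log (0 + 1 / 2) = -Real.log 2 := by rw [zero_add, one_div, Real.log_inv]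
  have hinv : 0 < 1 / sqDist v v' := by positivity
  have hlog2 := Real.log_two_lt_d9
  rw [greenBarrier, sqDist_self, hhalf] at hle
  linarith

lemma sq_le_sqDist {m : ℤ} {v x : Vtx} (hm : 0 ≤ m) (h : m ≤ |x.1 - v.1| ∨ m ≤ |x.2 - v.2|) :
    (m : ℝ) ^ 2 ≤ sqDist x v := by
  have hm0 : (0 : ℝ) ≤ m := by exact_mod_cast hm
  have hsq : ∀ a b : ℤ, m ≤ |a - b| → (m : ℝ) ^ 2 ≤ ((a : ℝ) - b) ^ 2 := fun a b hab =>
    sq_le_sq.2 (by rw [abs_of_nonneg hm0]; exact_mod_cast hab)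
  rcases h with h | h
  · exact (hsq _ _ h).trans (le_add_of_nonneg_right (sq_nonneg _))
  · exact (hsq _ _ h).trans (le_add_of_nonneg_left (sq_nonneg _))

theorem green_innerBox_le_of_far {N : ℕ} {v x : Vtx} {m : ℤ} (hv : v ∈ innerBox N)
    (hx : x ∈ innerBox N) (hm : 1 ≤ m) (hd : depth N v < 8 * m)
    (hxv : m ≤ |x.1 - v.1| ∨ m ≤ |x.2 - v.2|) : green (innerBox N) v x ≤ 17 := by
  obtain ⟨v', hv', hdist⟩ := exists_green_innerBox_le hv
  obtain ⟨h4, hle⟩ := hv' x hx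
  have hm1 : (1 : ℝ) ≤ m := by exact_mod_cast hm
  have hfar : (m : ℝ) ^ 2 ≤ sqDist x v := sq_le_sqDist (by omega) hxv
  have hpos : 0 < sqDist x v := by nlinarith
  have hd8 : (depth N v : ℝ) ≤ 8 * m := by exact_mod_cast hd.le
  have hmirror : sqDist v v' ≤ 256 * m ^ 2 := by rw [hdist]; nlinarith [depth_nonneg hv]
  have htri : sqDist x v' ≤ 2 * sqDist x v + 2 * sqDist v v' := by
    unfold sqDist
    nlinarith [sq_nonneg ((x.1 : ℝ) - v.1 - (v.1 - v'.1)),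
      sq_nonneg ((x.2 : ℝ) - v.2 - (v.2 - v'.2))]
  have hratio : Real.log (sqDist x v') ≤ Real.log 514 + Real.log (sqDist x v) := by
    rw [← Real.log_mul (by norm_num) hpos.ne']
    exact Real.log_le_log (by linarith) (by linarith)
  have hshift : Real.log (sqDist x v) ≤ Real.log (sqDist x v + 1 / 2) :=
    Real.log_le_log hpos (by linarith)
  have h514 : Real.log 514 ≤ 7 :=
    calc Real.log 514 ≤ Real.log (2 ^ 10) := Real.log_le_log (by norm_num) (by norm_num)
      _ = 10 * Real.log 2 := by rw [Real.log_pow]; norm_num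
      _ ≤ 7 := by linarith [Real.log_two_lt_d9]
  have hinv : 0 < 1 / sqDist x v' := by positivity
  unfold greenBarrier at hle
  linarith

theorem green_innerBox_sub_le {N : ℕ} {v : Vtx} {m : ℤ} {T : Finset Vtx} (hm : 1 ≤ m)
    (hd : depth N v < 8 * m) (hT : T ⊆ innerBox N)
    (hfar : ∀ x ∈ innerBox N, x ∉ T → m ≤ |x.1 - v.1| ∨ m ≤ |x.2 - v.2|) :
    green (innerBox N) v v - green T v v ≤ 17 := by
  by_cases hvT : v ∈ T; swap
  · have hv : v ∉ innerBox N := fun hv => by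
      have := hfar v hv hvT
      simp only [sub_self, abs_zero, or_self] at this
      omega
    rw [green_of_notMem_right v hvT, green_of_notMem_right v hv]
    norm_num
  refine le_of_lap_nonpos (f := green (innerBox N) v - green T v) (fun x hx => ?_)
    (fun _ _ y _ hy => ?_) v hvT
  · rw [map_sub, Pi.sub_apply, lap_green v hx, lap_green v (hT hx), sub_self]
  · rw [Pi.sub_apply, green_of_notMem_right v hy, sub_zero]
    by_cases hyN : y ∈ innerBox N
    · exact green_innerBox_le_of_far (hT hvT) hyN hm hd (hfar y hyN hy)
    · rw [green_of_notMem_right v hyN]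
      norm_num

end GreenEstimates

section LogSumExp

/-- The log-sum-exp function, i.e. the log-partition function at inverse temperature one. -/
def lse {ι : Type*} [Fintype ι] (x : ι → ℝ) : ℝ := Real.log (∑ i, Real.exp (x i))

/-- The Gibbs weights attached to the energies `x`, i.e. the gradient of `lse` at `x`. -/
def softmax {ι : Type*} [Fintype ι] (x : ι → ℝ) (i : ι) : ℝ :=
  Real.exp (x i) / ∑ k, Real.exp (x k)

variable {ι : Type*} [Fintype ι]

lemma softmax_nonneg (x : ι → ℝ) (i : ι) : 0 ≤ softmax x i :=
  div_nonneg (Real.exp_pos _).le (Finset.sum_nonneg fun _ _ => (Real.exp_pos _).le)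

lemma measurable_lse : Measurable (lse : (ι → ℝ) → ℝ) :=
  Real.measurable_log.comp (by fun_prop)

lemma measurable_softmax (i : ι) : Measurable fun x : ι → ℝ => softmax x i := by
  unfold softmax
  fun_prop

variable [Nonempty ι]

lemma sum_exp_pos (x : ι → ℝ) : 0 < ∑ i, Real.exp (x i) :=
  Finset.sum_pos (fun _ _ => Real.exp_pos _) Finset.univ_nonempty

lemma exp_lse (x : ι → ℝ) : Real.exp (lse x) = ∑ i, Real.exp (x i) :=
  Real.exp_log (sum_exp_pos x)

lemma sum_softmax (x : ι → ℝ) : ∑ i, softmax x i = 1 := by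
  simp only [softmax, ← Finset.sum_div, div_self (sum_exp_pos x).ne']

lemma softmax_le_one (x : ι → ℝ) (i : ι) : softmax x i ≤ 1 :=
  sum_softmax x ▸ Finset.single_le_sum (fun k _ => softmax_nonneg x k) (Finset.mem_univ i)

lemma le_lse (x : ι → ℝ) (i : ι) : x i ≤ lse x := by
  rw [← Real.exp_le_exp, exp_lse]
  exact Finset.single_le_sum (f := fun i => Real.exp (x i)) (fun _ _ => (Real.exp_pos _).le)
    (Finset.mem_univ i)

lemma abs_lse_le (x : ι → ℝ) : |lse x| ≤ Real.log (Fintype.card ι) + ∑ i, |x i| := by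
  have hlog : 0 ≤ Real.log (Fintype.card ι) :=
    Real.log_nonneg (by exact_mod_cast Fintype.card_pos)
  have habs (i : ι) : |x i| ≤ ∑ i, |x i| :=
    Finset.single_le_sum (f := fun i => |x i|) (fun _ _ => abs_nonneg _) (Finset.mem_univ i)
  refine abs_le.2 ⟨?_, ?_⟩
  · obtain ⟨i⟩ := ‹Nonempty ι›
    linarith [le_lse x i, neg_abs_le (x i), habs i]
  · calc lse x ≤ Real.log (∑ _i : ι, Real.exp (∑ i, |x i|)) :=
          Real.log_le_log (sum_exp_pos x) <| Finset.sum_le_sum fun i _ =>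
            Real.exp_le_exp.2 ((le_abs_self _).trans (habs i))
      _ = Real.log (Fintype.card ι) + ∑ i, |x i| := by
          rw [Finset.sum_const, nsmul_eq_mul, Finset.card_univ,
            Real.log_mul (by positivity) (Real.exp_pos _).ne', Real.log_exp]

lemma sum_softmax_mul_sub_le (x y : ι → ℝ) :
    ∑ i, softmax x i * (y i - x i) ≤ lse y - lse x := by
  have hJensen := convexOn_exp.map_sum_le (t := Finset.univ) (w := softmax x)
    (p := fun i => y i - x i) (fun i _ => softmax_nonneg x i) (sum_softmax x)
    (fun _ _ => Set.mem_univ _)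
  have hratio : ∑ i, softmax x i * Real.exp (y i - x i) = Real.exp (lse y - lse x) := by
    rw [Real.exp_sub, exp_lse, exp_lse, Finset.sum_div]
    refine Finset.sum_congr rfl fun i _ => ?_
    rw [softmax, div_mul_eq_mul_div, ← Real.exp_add, add_sub_cancel]
  simp only [smul_eq_mul] at hJensen
  exact Real.exp_le_exp.1 (hJensen.trans_eq hratio)

lemma two_mul_lse_le (x r : ι → ℝ) : 2 * lse x ≤ lse (x + r) + lse (x - r) := by
  have hplus := sum_softmax_mul_sub_le x (x + r)
  have hminus := sum_softmax_mul_sub_le x (x - r)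
  simp only [Pi.add_apply, Pi.sub_apply, add_sub_cancel_left, sub_sub_cancel_left, mul_neg,
    Finset.sum_neg_distrib] at hplus hminus
  linarith

lemma lse_add_const (x : ι → ℝ) (b : ℝ) : lse (fun i => x i + b) = lse x + b := by
  simp only [lse, Real.exp_add, ← Finset.sum_mul]
  rw [Real.log_mul (sum_exp_pos x).ne' (Real.exp_pos _).ne', Real.log_exp]

lemma lse_add_le (x e : ι → ℝ) {t : ℝ} (ht : 0 < t) : lse (x + e) ≤ lse x + lse (t • e) / t := by
  rw [← lse_add_const]
  refine Real.log_le_log (sum_exp_pos _) (Finset.sum_le_sum fun i _ => ?_)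
  have := (le_div_iff₀' ht).2 (le_lse (t • e) i)
  exact Real.exp_le_exp.2 (add_le_add_right this _)

lemma log_card_add_mean_lse_le {κ η : Type*} [Fintype κ] [Fintype η] [Nonempty η]
    {τ : η → ι → κ} (hτ : Function.Injective (Function.uncurry τ)) (x : κ → ℝ) :
    Real.log (Fintype.card η) + (∑ k, lse (x ∘ τ k)) / Fintype.card η ≤ lse x := by
  set K := (Fintype.card η : ℝ)
  have hK : 0 < K := Nat.cast_pos.2 Fintype.card_pos
  set m := (∑ k, lse (x ∘ τ k)) / K with hm
  have hsub : ∑ k, ∑ i, Real.exp (x (τ k i)) ≤ ∑ u, Real.exp (x u) := by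
    rw [← Fintype.sum_prod_type']
    exact (Finset.sum_map _ ⟨_, hτ⟩ fun u => Real.exp (x u)).symm.trans_le
      (Finset.sum_le_sum_of_subset_of_nonneg (Finset.subset_univ _)
        fun _ _ _ => (Real.exp_pos _).le)
  have htangent (k : η) :
      Real.exp m * (1 + (lse (x ∘ τ k) - m)) ≤ ∑ i, Real.exp (x (τ k i)) := by
    calc _ ≤ Real.exp m * Real.exp (lse (x ∘ τ k) - m) := by
          gcongr
          linarith [Real.add_one_le_exp (lse (x ∘ τ k) - m)]
      _ = ∑ i, Real.exp (x (τ k i)) := by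
          rw [← Real.exp_add, add_sub_cancel, exp_lse]
          rfl
  have hmean : K * Real.exp m ≤ ∑ k, ∑ i, Real.exp (x (τ k i)) := by
    refine le_trans (le_of_eq ?_) (Finset.sum_le_sum fun k _ => htangent k)
    have hsum : ∑ k, lse (x ∘ τ k) = K * m := by rw [hm]; field_simp
    rw [← Finset.mul_sum, Finset.sum_add_distrib, Finset.sum_sub_distrib, hsum]
    simp only [Finset.sum_const, Finset.card_univ, nsmul_eq_mul, mul_one, sub_self, add_zero, K]
    ring
  have := Real.log_le_log (by positivity) (hmean.trans hsub)
  rwa [Real.log_mul hK.ne' (Real.exp_pos _).ne', Real.log_exp] at this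

lemma integrable_lse {Ω : Type*} [MeasurableSpace Ω] {μ : Measure Ω} [IsFiniteMeasure μ]
    {X : ι → Ω → ℝ} (hX : ∀ i, Integrable (X i) μ) :
    Integrable (fun ω => lse fun i => X i ω) μ := by
  refine Integrable.mono' (g := fun ω => Real.log (Fintype.card ι) + ∑ i, |X i ω|)
    ((integrable_const _).add (integrable_finsetSum _ fun i _ => (hX i).abs)) ?_
    (ae_of_all _ fun ω => abs_lse_le _)
  exact (measurable_lse.comp_aemeasurable
    (aemeasurable_pi_lambda _ fun i => (hX i).aemeasurable)).aestronglyMeasurable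

end LogSumExp

section Isonormal

/-- `X` is an isonormal Gaussian process over `(E, Q)`: a linear family of random variables whose
members `X c` are centred Gaussian with variance `Q c c`. Because it is linear in `c`, these one
dimensional marginals determine the joint law of every finite subfamily. -/
structure IsIsonormal {Ω E : Type*} [MeasurableSpace Ω] [AddCommGroup E] [Module ℝ E]
    (X : E →ₗ[ℝ] (Ω → ℝ)) (Q : LinearMap.BilinForm ℝ E) (μ : Measure Ω) : Prop where
  measurable (c : E) : Measurable (X c)
  map_eq (c : E) : μ.map (X c) = gaussianReal 0 (Q c c).toNNReal
  posSemidef : Q.IsPosSemidef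

/-- The mean of the log-sum-exp of the variables `X (c i)`. -/
def meanLse {Ω E ι : Type*} [MeasurableSpace Ω] [AddCommGroup E] [Module ℝ E] [Fintype ι]
    (X : E →ₗ[ℝ] (Ω → ℝ)) (μ : Measure Ω) (c : ι → E) : ℝ :=
  ∫ ω, lse (fun i => X (c i) ω) ∂μ

lemma exists_forall_eq_sum_mul {ι : Type*} [Fintype ι] (L : StrongDual ℝ (ι → ℝ)) :
    ∃ a : ι → ℝ, ∀ x, L x = ∑ i, a i * x i := by
  refine ⟨fun i => L (Pi.single i 1), fun x => ?_⟩
  conv_lhs => rw [pi_eq_sum_univ' x, map_sum]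
  simp only [map_smul, smul_eq_mul, mul_comm]

namespace IsIsonormal

variable {Ω E ι : Type*} [MeasurableSpace Ω] [AddCommGroup E] [Module ℝ E] [Fintype ι]
  {X : E →ₗ[ℝ] (Ω → ℝ)} {Q : LinearMap.BilinForm ℝ E} {μ : Measure Ω}

lemma isProbabilityMeasure (h : IsIsonormal X Q μ) : IsProbabilityMeasure μ := by
  have : IsProbabilityMeasure (μ.map (X 0)) := by
    rw [h.map_eq]
    infer_instance
  exact Measure.isProbabilityMeasure_of_map (X 0)

lemma self_nonneg (h : IsIsonormal X Q μ) (c : E) : 0 ≤ Q c c := h.posSemidef.nonneg c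

lemma memLp_two (h : IsIsonormal X Q μ) (c : E) : MemLp (X c) 2 μ := by
  have hid : MemLp id 2 (μ.map (X c)) := h.map_eq c ▸ memLp_id_gaussianReal 2
  exact hid.comp_of_map (h.measurable c).aemeasurable

lemma integrable (h : IsIsonormal X Q μ) (c : E) : Integrable (X c) μ := by
  have := h.isProbabilityMeasure
  exact (h.memLp_two c).integrable one_le_two

lemma integrable_exp (h : IsIsonormal X Q μ) (c : E) :
    Integrable (fun ω => Real.exp (X c ω)) μ := by
  have hexp : Integrable (fun x => Real.exp (1 * x)) (μ.map (X c)) :=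
    h.map_eq c ▸ integrable_exp_mul_gaussianReal 1
  simpa only [Function.comp_def, one_mul] using hexp.comp_measurable (h.measurable c)

lemma integral_exp (h : IsIsonormal X Q μ) (c : E) :
    ∫ ω, Real.exp (X c ω) ∂μ = Real.exp (Q c c / 2) := by
  have := mgf_gaussianReal (h.map_eq c) 1
  simpa only [mgf, one_mul, zero_mul, zero_add, one_pow, mul_one,
    Real.coe_toNNReal _ (h.self_nonneg c)] using this

lemma integral_sq (h : IsIsonormal X Q μ) (c : E) : ∫ ω, X c ω ^ 2 ∂μ = Q c c := by
  have hmap : ∫ ω, X c ω ^ 2 ∂μ = ∫ x, x ^ 2 ∂(gaussianReal 0 (Q c c).toNNReal) := by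
    rw [← h.map_eq c, integral_map (h.measurable c).aemeasurable (by fun_prop)]
  have hvar := variance_fun_id_gaussianReal (μ := 0) (v := (Q c c).toNNReal)
  rw [variance_of_integral_eq_zero aemeasurable_id' integral_id_gaussianReal,
    Real.coe_toNNReal _ (h.self_nonneg c)] at hvar
  exact hmap.trans hvar

lemma integral_abs_le (h : IsIsonormal X Q μ) (c : E) : ∫ ω, |X c ω| ∂μ ≤ √(Q c c) := by
  have := h.isProbabilityMeasure
  refine Real.le_sqrt_of_sq_le ?_
  have hvar := variance_nonneg (fun ω => |X c ω|) μ
  rw [variance_eq_sub (X := fun ω => |X c ω|) (h.memLp_two c).abs] at hvar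
  simpa only [Pi.pow_apply, sq_abs, h.integral_sq c, sub_nonneg] using hvar

lemma map_sum_mul_eq (h : IsIsonormal X Q μ) (c : ι → E) (a : ι → ℝ) :
    μ.map (fun ω => ∑ i, a i * X (c i) ω) =
      gaussianReal 0 (∑ i, ∑ k, a i * (a k * Q (c i) (c k))).toNNReal := by
  have hX : (fun ω => ∑ i, a i * X (c i) ω) = X (∑ i, a i • c i) := by
    ext ω
    simp only [map_sum, map_smul, Finset.sum_apply, Pi.smul_apply, smul_eq_mul]
  rw [hX, h.map_eq]
  simp only [map_sum, map_smul, LinearMap.sum_apply, LinearMap.smul_apply, smul_eq_mul,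
    Finset.mul_sum]
  rw [Finset.sum_comm]
  simp only [mul_left_comm]

lemma identDistrib {κ Ω' E' : Type*} [Finite κ] [MeasurableSpace Ω'] [AddCommGroup E'] [Module ℝ E']
    {X' : E' →ₗ[ℝ] (Ω' → ℝ)} {Q' : LinearMap.BilinForm ℝ E'} {μ' : Measure Ω'}
    (h : IsIsonormal X Q μ) (h' : IsIsonormal X' Q' μ') {c : κ → E} {d : κ → E'}
    (hcd : ∀ i k, Q (c i) (c k) = Q' (d i) (d k)) :
    IdentDistrib (fun ω i => X (c i) ω) (fun ω i => X' (d i) ω) μ μ' := by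
  have := h.isProbabilityMeasure
  have := h'.isProbabilityMeasure
  have := Fintype.ofFinite κ
  have hm : Measurable fun ω i => X (c i) ω := measurable_pi_lambda _ fun i => h.measurable _
  have hm' : Measurable fun ω i => X' (d i) ω := measurable_pi_lambda _ fun i => h'.measurable _
  refine ⟨hm.aemeasurable, hm'.aemeasurable, Measure.ext_of_charFunDual ?_⟩
  ext L
  obtain ⟨a, ha⟩ := exists_forall_eq_sum_mul L
  rw [charFunDual_eq_charFun_map_one, charFunDual_eq_charFun_map_one,
    Measure.map_map (by fun_prop) hm, Measure.map_map (by fun_prop) hm']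
  simp only [Function.comp_def, ha, h.map_sum_mul_eq, h'.map_sum_mul_eq, hcd]

lemma meanLse_congr (h : IsIsonormal X Q μ) {c d : ι → E}
    (hcd : ∀ i k, Q (c i) (c k) = Q (d i) (d k)) : meanLse X μ c = meanLse X μ d :=
  ((h.identDistrib h hcd).comp measurable_lse).integral_eq

variable [Nonempty ι]

lemma integrable_lse (h : IsIsonormal X Q μ) (c : ι → E) :
    Integrable (fun ω => lse fun i => X (c i) ω) μ := by
  have := h.isProbabilityMeasure
  exact _root_.integrable_lse fun i => h.integrable _

lemma meanLse_le (h : IsIsonormal X Q μ) {c : ι → E} {V : ℝ} (hV : ∀ i, Q (c i) (c i) ≤ V) :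
    meanLse X μ c ≤ Real.log (Fintype.card ι) + V / 2 := by
  have := h.isProbabilityMeasure
  have hcard : (0 : ℝ) < Fintype.card ι := Nat.cast_pos.2 Fintype.card_pos
  set A : ℝ := Fintype.card ι * Real.exp (V / 2) with hA
  have hA0 : 0 < A := by positivity
  have hint : Integrable (fun ω => ∑ i, Real.exp (X (c i) ω)) μ :=
    integrable_finsetSum _ fun i _ => h.integrable_exp _
  have hmean : (∫ ω, ∑ i, Real.exp (X (c i) ω) ∂μ) ≤ A := by
    rw [integral_finsetSum _ fun i _ => h.integrable_exp _, hA, ← nsmul_eq_mul, ← Finset.card_univ,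
      ← Finset.sum_const]
    gcongr with i
    rw [h.integral_exp]
    gcongr
    exact hV i
  calc meanLse X μ c
      ≤ ∫ ω, ((∑ i, Real.exp (X (c i) ω)) / A + (Real.log A - 1)) ∂μ := by
        refine integral_mono (h.integrable_lse c)
          ((hint.div_const _).add (integrable_const _)) fun ω => ?_
        have hpos := sum_exp_pos fun i => X (c i) ω
        have hlog := Real.log_le_sub_one_of_pos (div_pos hpos hA0)
        rw [Real.log_div hpos.ne' hA0.ne'] at hlog
        simp only [lse]
        linarith
    _ = (∫ ω, ∑ i, Real.exp (X (c i) ω) ∂μ) / A + (Real.log A - 1) := by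
        rw [integral_add (hint.div_const _) (integrable_const _), integral_div, integral_const,
          probReal_univ, one_smul]
    _ ≤ 1 + (Real.log A - 1) := by gcongr; exact (div_le_one hA0).2 hmean
    _ = Real.log (Fintype.card ι) + V / 2 := by
        rw [hA, Real.log_mul hcard.ne' (Real.exp_pos _).ne', Real.log_exp]
        ring

lemma meanLse_le_add (h : IsIsonormal X Q μ) {c d : ι → E} {V t : ℝ} (ht : 0 < t)
    (hV : ∀ i, Q (c i - d i) (c i - d i) ≤ V) :
    meanLse X μ c ≤ meanLse X μ d + (Real.log (Fintype.card ι) + t ^ 2 * V / 2) / t := by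
  have hpert : meanLse X μ c ≤ meanLse X μ d + meanLse X μ (fun i => t • (c i - d i)) / t := by
    simp only [meanLse]
    rw [← integral_div, ← integral_add (h.integrable_lse d) ((h.integrable_lse _).div_const _)]
    refine integral_mono (h.integrable_lse c)
      ((h.integrable_lse d).add ((h.integrable_lse _).div_const _)) fun ω => ?_
    have := lse_add_le (fun i => X (d i) ω) (fun i => X (c i - d i) ω) ht
    simpa [Pi.add_def, Pi.smul_def] using this
  refine hpert.trans ?_
  gcongr
  refine h.meanLse_le fun i => ?_
  simp only [map_smul, LinearMap.smul_apply, smul_eq_mul]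
  nlinarith [hV i, sq_nonneg t]

lemma meanLse_le_meanLse_add (h : IsIsonormal X Q μ) {c r : ι → E}
    (hcr : ∀ i k, Q (c i) (r k) = 0) : meanLse X μ c ≤ meanLse X μ (c + r) := by
  have hrc (i k : ι) : Q (r i) (c k) = 0 := by rw [h.posSemidef.isSymm.eq, hcr]
  have hreflect : meanLse X μ (c + r) = meanLse X μ (c - r) :=
    h.meanLse_congr fun i k => by simp [hcr, hrc]
  have hmid : 2 * meanLse X μ c ≤ meanLse X μ (c + r) + meanLse X μ (c - r) := by
    simp only [meanLse]
    rw [← integral_const_mul, ← integral_add (h.integrable_lse _) (h.integrable_lse _)]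
    refine integral_mono ((h.integrable_lse c).const_mul _)
      ((h.integrable_lse _).add (h.integrable_lse _)) fun ω => ?_
    have := two_mul_lse_le (fun i => X (c i) ω) (fun i => X (r i) ω)
    simpa [Pi.add_def, Pi.sub_def] using this
  linarith

lemma log_card_add_le_meanLse {κ η : Type*} [Fintype κ] [Fintype η] [Nonempty η]
    (h : IsIsonormal X Q μ) {τ : η → ι → κ} (hτ : Function.Injective (Function.uncurry τ))
    {c : κ → E} {m : ℝ} (hm : ∀ k, m ≤ meanLse X μ (c ∘ τ k)) :
    Real.log (Fintype.card η) + m ≤ meanLse X μ c := by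
  have := h.isProbabilityMeasure
  have : Nonempty κ := .map (Function.uncurry τ) inferInstance
  have hint (k : η) : Integrable (fun ω => lse fun i => X (c (τ k i)) ω) μ := h.integrable_lse _
  have hsum := (integrable_finsetSum Finset.univ fun k _ => hint k).div_const (Fintype.card η : ℝ)
  have hmean : m ≤ (∑ k, meanLse X μ (c ∘ τ k)) / Fintype.card η := by
    rw [le_div_iff₀ (Nat.cast_pos.2 Fintype.card_pos), mul_comm, ← nsmul_eq_mul,
      ← Finset.card_univ]
    exact Finset.card_nsmul_le_sum _ _ _ fun k _ => hm k
  calc Real.log (Fintype.card η) + m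
      ≤ Real.log (Fintype.card η) + (∑ k, meanLse X μ (c ∘ τ k)) / Fintype.card η := by gcongr
    _ = ∫ ω, (Real.log (Fintype.card η) +
          (∑ k, lse fun i => X (c (τ k i)) ω) / Fintype.card η) ∂μ := by
        rw [integral_add (integrable_const _) hsum, integral_div,
          integral_finsetSum _ fun k _ => hint k, integral_const, probReal_univ, one_smul]
        rfl
    _ ≤ meanLse X μ c :=
        integral_mono ((integrable_const _).add hsum)
          (h.integrable_lse c) fun ω => log_card_add_mean_lse_le hτ fun u => X (c u) ω

end IsIsonormal

end Isonormal

section Concentration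

/-- The process over `E × E` made of two independent copies of `X`. -/
def pairField {Ω E : Type*} [AddCommGroup E] [Module ℝ E] (X : E →ₗ[ℝ] (Ω → ℝ)) :
    E × E →ₗ[ℝ] (Ω × Ω → ℝ) where
  toFun u p := X u.1 p.1 + X u.2 p.2
  map_add' u w := by
    ext p
    simp only [Prod.fst_add, Prod.snd_add, map_add, Pi.add_apply]
    ring
  map_smul' a u := by
    ext p
    simp only [Prod.smul_fst, Prod.smul_snd, map_smul, Pi.smul_apply, smul_eq_mul,
      RingHom.id_apply]
    ring

/-- The orthogonal sum of two copies of `Q`. -/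
def pairForm {E : Type*} [AddCommGroup E] [Module ℝ E] (Q : LinearMap.BilinForm ℝ E) :
    LinearMap.BilinForm ℝ (E × E) :=
  Q.compl₁₂ (LinearMap.fst ℝ E E) (LinearMap.fst ℝ E E) +
    Q.compl₁₂ (LinearMap.snd ℝ E E) (LinearMap.snd ℝ E E)

/-- The vector `c` of the first copy of `E`, rotated towards the second copy by the angle `α`. -/
def rotatePair {E : Type*} [AddCommGroup E] [Module ℝ E] (α : ℝ) (c : E) : E × E :=
  (Real.cos α • c, Real.sin α • c)

/-- The log-sum-exp of the family `X (c i)` rotated by the angle `α` towards an independent copy. -/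
def rotatedLse {Ω E ι : Type*} [AddCommGroup E] [Module ℝ E] [Fintype ι] (X : E →ₗ[ℝ] (Ω → ℝ))
    (c : ι → E) (α : ℝ) (p : Ω × Ω) : ℝ :=
  lse fun i => pairField X (rotatePair α (c i)) p

variable {Ω E ι : Type*} [AddCommGroup E] [Module ℝ E] [Fintype ι]
  {X : E →ₗ[ℝ] (Ω → ℝ)} {Q : LinearMap.BilinForm ℝ E}

lemma pairField_apply (u : E × E) (p : Ω × Ω) : pairField X u p = X u.1 p.1 + X u.2 p.2 := rfl

lemma pairForm_apply (u w : E × E) : pairForm Q u w = Q u.1 w.1 + Q u.2 w.2 := rfl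

lemma pairForm_rotatePair (α γ : ℝ) (c d : E) :
    pairForm Q (rotatePair α c) (rotatePair γ d) = Real.cos (α - γ) * Q c d := by
  simp only [pairForm_apply, rotatePair, map_smul, LinearMap.smul_apply, smul_eq_mul, Real.cos_sub]
  ring

lemma pairField_rotatePair (α : ℝ) (c : E) (p : Ω × Ω) :
    pairField X (rotatePair α c) p = Real.cos α * X c p.1 + Real.sin α * X c p.2 := by
  simp only [pairField_apply, rotatePair, map_smul, Pi.smul_apply, smul_eq_mul]

lemma rotatedLse_zero (c : ι → E) (p : Ω × Ω) :
    rotatedLse X c 0 p = lse fun i => X (c i) p.1 := by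
  simp only [rotatedLse, pairField_rotatePair, Real.cos_zero, Real.sin_zero, one_mul, zero_mul,
    add_zero]

lemma rotatedLse_pi_div_two (c : ι → E) (p : Ω × Ω) :
    rotatedLse X c (Real.pi / 2) p = lse fun i => X (c i) p.2 := by
  simp only [rotatedLse, pairField_rotatePair, Real.cos_pi_div_two, Real.sin_pi_div_two, one_mul,
    zero_mul, zero_add]

lemma neg_le_rotatedLse_sub [Nonempty ι] (c : ι → E) {θ : ℝ} (hθ : 0 ≤ Real.sin θ) (p : Ω × Ω) :
    -((1 - Real.cos θ) * ∑ i, |X (c i) p.1| +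
        Real.sin θ * ∑ i, softmax (fun k => X (c k) p.1) i * |X (c i) p.2|) ≤
      rotatedLse X c θ p - rotatedLse X c 0 p := by
  set w := softmax fun k => X (c k) p.1
  rw [rotatedLse_zero]
  refine le_trans ?_ (sum_softmax_mul_sub_le _ _)
  rw [Finset.mul_sum, Finset.mul_sum, ← Finset.sum_add_distrib, ← Finset.sum_neg_distrib]
  refine Finset.sum_le_sum fun i _ => ?_
  rw [pairField_rotatePair]
  have hw := softmax_nonneg (fun k => X (c k) p.1) i
  have hfirst : w i * X (c i) p.1 ≤ |X (c i) p.1| :=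
    (mul_le_mul_of_nonneg_left (le_abs_self _) hw).trans
      (mul_le_of_le_one_left (abs_nonneg _) (softmax_le_one _ i))
  have hsecond : -(w i * |X (c i) p.2|) ≤ w i * X (c i) p.2 := by
    rw [← mul_neg]
    exact mul_le_mul_of_nonneg_left (neg_abs_le _) hw
  have h1 := mul_le_mul_of_nonneg_left hfirst (sub_nonneg.2 (Real.cos_le_one θ))
  have h2 := mul_le_mul_of_nonneg_left hsecond hθ
  linarith

variable [MeasurableSpace Ω] {μ : Measure Ω}

lemma IsIsonormal.pair (h : IsIsonormal X Q μ) :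
    IsIsonormal (pairField X) (pairForm Q) (μ.prod μ) where
  measurable u := ((h.measurable u.1).comp measurable_fst).add
    ((h.measurable u.2).comp measurable_snd)
  map_eq u := by
    have := h.isProbabilityMeasure
    have hfst : (μ.prod μ).map (fun p => X u.1 p.1) = gaussianReal 0 (Q u.1 u.1).toNNReal := by
      have hmap := Measure.map_map (μ := μ.prod μ) (h.measurable u.1) measurable_fst
      rw [measurePreserving_fst.map_eq, h.map_eq] at hmap
      exact hmap.symm
    have hsnd : (μ.prod μ).map (fun p => X u.2 p.2) = gaussianReal 0 (Q u.2 u.2).toNNReal := by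
      have hmap := Measure.map_map (μ := μ.prod μ) (h.measurable u.2) measurable_snd
      rw [measurePreserving_snd.map_eq, h.map_eq] at hmap
      exact hmap.symm
    have hsum := gaussianReal_add_gaussianReal_of_indepFun
      (indepFun_prod (h.measurable u.1) (h.measurable u.2)) hfst hsnd
    rwa [add_zero, ← Real.toNNReal_add (h.self_nonneg _) (h.self_nonneg _)] at hsum
  posSemidef :=
    { eq := fun u w => by simp only [pairForm_apply, h.posSemidef.isSymm.eq]
      nonneg := fun u => add_nonneg (h.self_nonneg _) (h.self_nonneg _) }

lemma integral_abs_le_two_mul_integral {D H : Ω → ℝ} (hD : Integrable D μ) (hH : Integrable H μ)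
    (hmean : ∫ ω, D ω ∂μ = 0) (hH0 : ∀ ω, 0 ≤ H ω) (hDH : ∀ ω, -H ω ≤ D ω) :
    ∫ ω, |D ω| ∂μ ≤ 2 * ∫ ω, H ω ∂μ := by
  calc ∫ ω, |D ω| ∂μ ≤ ∫ ω, (D ω + 2 * H ω) ∂μ := by
        refine integral_mono hD.abs (hD.add (hH.const_mul 2)) fun ω => abs_le.2 ⟨?_, ?_⟩
        · linarith [hDH ω]
        · linarith [hH0 ω]
    _ = 2 * ∫ ω, H ω ∂μ := by
        rw [integral_add hD (hH.const_mul 2), hmean, zero_add, integral_const_mul]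

namespace IsIsonormal

lemma integral_abs_rotatedLse_sub (h : IsIsonormal X Q μ) (c : ι → E) (α θ : ℝ) :
    ∫ p, |rotatedLse X c (α + θ) p - rotatedLse X c α p| ∂μ.prod μ =
      ∫ p, |rotatedLse X c θ p - rotatedLse X c 0 p| ∂μ.prod μ := by
  let family (α γ : ℝ) : ι ⊕ ι → E × E :=
    Sum.elim (fun i => rotatePair α (c i)) fun i => rotatePair γ (c i)
  have hgram : ∀ i k, pairForm Q (family (α + θ) α i) (family (α + θ) α k) =
      pairForm Q (family θ 0 i) (family θ 0 k) := by
    rintro (i | i) (k | k) <;> simp [family, pairForm_rotatePair]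
  have hmeas : Measurable fun x : ι ⊕ ι → ℝ =>
      |lse (fun i => x (.inl i)) - lse fun i => x (.inr i)| :=
    ((measurable_lse.comp (by fun_prop)).sub (measurable_lse.comp (by fun_prop))).abs
  exact ((h.pair.identDistrib h.pair hgram).comp hmeas).integral_eq

variable [Nonempty ι]

lemma integrable_rotatedLse (h : IsIsonormal X Q μ) (c : ι → E) (α : ℝ) :
    Integrable (rotatedLse X c α) (μ.prod μ) :=
  h.pair.integrable_lse _

lemma integral_abs_rotatedLse_nsmul_sub_le (h : IsIsonormal X Q μ) (c : ι → E) (θ : ℝ) (k : ℕ) :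
    ∫ p, |rotatedLse X c (k * θ) p - rotatedLse X c 0 p| ∂μ.prod μ ≤
      k * ∫ p, |rotatedLse X c θ p - rotatedLse X c 0 p| ∂μ.prod μ := by
  have hint (α γ : ℝ) : Integrable (fun p => |rotatedLse X c α p - rotatedLse X c γ p|)
      (μ.prod μ) := ((h.integrable_rotatedLse c α).sub (h.integrable_rotatedLse c γ)).abs
  induction k with
  | zero => simp
  | succ k ih =>
    have hstep := h.integral_abs_rotatedLse_sub c (k * θ) θ
    calc _ ≤ ∫ p, (|rotatedLse X c (k * θ + θ) p - rotatedLse X c (k * θ) p| +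
            |rotatedLse X c (k * θ) p - rotatedLse X c 0 p|) ∂μ.prod μ := by
          rw [Nat.cast_succ, add_one_mul]
          exact integral_mono (hint _ _) ((hint _ _).add (hint _ _)) fun p => abs_sub_le _ _ _
      _ ≤ _ := by
          rw [integral_add (hint _ _) (hint _ _), hstep, Nat.cast_succ]
          linarith

lemma integrable_softmax (h : IsIsonormal X Q μ) (c : ι → E) (i : ι) :
    Integrable (fun ω => softmax (fun k => X (c k) ω) i) μ := by
  have := h.isProbabilityMeasure
  refine Integrable.of_bound (C := 1) ((measurable_softmax i).comp
    (measurable_pi_lambda _ fun k => h.measurable (c k))).aestronglyMeasurable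
    (ae_of_all _ fun ω => ?_)
  rw [Real.norm_of_nonneg (softmax_nonneg _ _)]
  exact softmax_le_one _ _

lemma integrable_softmax_mul_abs (h : IsIsonormal X Q μ) (c : ι → E) (i : ι) :
    Integrable (fun p => softmax (fun k => X (c k) p.1) i * |X (c i) p.2|) (μ.prod μ) := by
  have := h.isProbabilityMeasure
  exact (h.integrable_softmax c i).mul_prod (h.integrable _).abs

lemma integral_abs_le_of_self_le (h : IsIsonormal X Q μ) {c : E} {V : ℝ} (hV : Q c c ≤ V) :
    ∫ ω, |X c ω| ∂μ ≤ √V :=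
  (h.integral_abs_le c).trans (Real.sqrt_le_sqrt hV)

lemma integral_sum_softmax_mul_abs_le (h : IsIsonormal X Q μ) {c : ι → E} {V : ℝ}
    (hV : ∀ i, Q (c i) (c i) ≤ V) :
    ∫ p, ∑ i, softmax (fun k => X (c k) p.1) i * |X (c i) p.2| ∂μ.prod μ ≤ √V := by
  have := h.isProbabilityMeasure
  calc _ = ∑ i, (∫ ω, softmax (fun k => X (c k) ω) i ∂μ) * ∫ ω, |X (c i) ω| ∂μ := by
        rw [integral_finsetSum _ fun i _ => h.integrable_softmax_mul_abs c i]
        exact Finset.sum_congr rfl fun i _ =>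
          integral_prod_mul (fun ω => softmax (fun k => X (c k) ω) i) fun ω => |X (c i) ω|
    _ ≤ ∑ i, (∫ ω, softmax (fun k => X (c k) ω) i ∂μ) * √V := by
        gcongr with i
        · exact integral_nonneg fun ω => softmax_nonneg _ _
        · exact h.integral_abs_le_of_self_le (hV i)
    _ = √V := by
        rw [← Finset.sum_mul, ← integral_finsetSum _ fun i _ => h.integrable_softmax c i]
        simp only [sum_softmax, integral_const, probReal_univ, one_smul, one_mul]

lemma integral_abs_rotatedLse_sub_zero_le (h : IsIsonormal X Q μ) {c : ι → E} {V θ : ℝ}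
    (hV : ∀ i, Q (c i) (c i) ≤ V) (hθ : 0 ≤ Real.sin θ) :
    ∫ p, |rotatedLse X c θ p - rotatedLse X c 0 p| ∂μ.prod μ ≤
      2 * ((1 - Real.cos θ) * (Fintype.card ι * √V) + Real.sin θ * √V) := by
  have := h.isProbabilityMeasure
  have hcos := sub_nonneg.2 (Real.cos_le_one θ)
  have hmean : ∫ p, (rotatedLse X c θ p - rotatedLse X c 0 p) ∂μ.prod μ = 0 := by
    rw [integral_sub (h.integrable_rotatedLse c θ) (h.integrable_rotatedLse c 0), sub_eq_zero]
    exact h.pair.meanLse_congr fun i k => by simp only [pairForm_rotatePair, sub_self]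
  have habs : Integrable (fun p : Ω × Ω => ∑ i, |X (c i) p.1|) (μ.prod μ) :=
    integrable_finsetSum _ fun i _ => (h.integrable _).abs.comp_fst μ
  have hsoft : Integrable
      (fun p : Ω × Ω => ∑ i, softmax (fun k => X (c k) p.1) i * |X (c i) p.2|) (μ.prod μ) :=
    integrable_finsetSum _ fun i _ => h.integrable_softmax_mul_abs c i
  have hsum : ∫ p : Ω × Ω, ∑ i, |X (c i) p.1| ∂μ.prod μ ≤ Fintype.card ι * √V := by
    rw [integral_fun_fst fun ω => ∑ i, |X (c i) ω|, probReal_univ, one_smul,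
      integral_finsetSum _ fun i _ => (h.integrable _).abs, ← nsmul_eq_mul, ← Finset.card_univ]
    exact Finset.sum_le_card_nsmul _ _ _ fun i _ => h.integral_abs_le_of_self_le (hV i)
  refine (integral_abs_le_two_mul_integral
    ((h.integrable_rotatedLse c θ).sub (h.integrable_rotatedLse c 0))
    ((habs.const_mul (1 - Real.cos θ)).add (hsoft.const_mul (Real.sin θ))) hmean
    (fun p => ?_) (neg_le_rotatedLse_sub c hθ)).trans ?_
  · exact add_nonneg (mul_nonneg hcos (Finset.sum_nonneg fun i _ => abs_nonneg _))
      (mul_nonneg hθ (Finset.sum_nonneg fun i _ => mul_nonneg (softmax_nonneg _ _) (abs_nonneg _)))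
  · simp only [Pi.add_apply]
    rw [integral_add (habs.const_mul _) (hsoft.const_mul _), integral_const_mul,
      integral_const_mul]
    gcongr
    exact h.integral_sum_softmax_mul_abs_le hV

lemma integral_abs_lse_sub_lse_le (h : IsIsonormal X Q μ) {c : ι → E} {V : ℝ}
    (hV : ∀ i, Q (c i) (c i) ≤ V) :
    ∫ p : Ω × Ω, |(lse fun i => X (c i) p.2) - lse fun i => X (c i) p.1| ∂μ.prod μ ≤ 6 * √V := by
  have hn : (1 : ℝ) ≤ Fintype.card ι := Nat.one_le_cast.2 Fintype.card_pos
  set n := Fintype.card ι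
  have hπ := Real.pi_lt_d2
  have hπ0 := Real.pi_pos
  set θ := Real.pi / 2 / n with hθ_def
  have hnθ : n * θ = Real.pi / 2 := by rw [hθ_def]; field_simp
  have hθ0 : 0 ≤ θ := by positivity
  have hsin : 0 ≤ Real.sin θ := Real.sin_nonneg_of_nonneg_of_le_pi hθ0 <|
    (div_le_self (by positivity) hn).trans (by linarith)
  have hcos : 1 - Real.cos θ ≤ θ ^ 2 / 2 := by linarith [Real.one_sub_sq_div_two_le_cos (x := θ)]
  calc _ = ∫ p, |rotatedLse X c (n * θ) p - rotatedLse X c 0 p| ∂μ.prod μ := by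
        simp only [hnθ, rotatedLse_zero, rotatedLse_pi_div_two]
    _ ≤ n * (2 * ((1 - Real.cos θ) * (n * √V) + Real.sin θ * √V)) :=
        (h.integral_abs_rotatedLse_nsmul_sub_le c θ n).trans <| by
          gcongr
          exact h.integral_abs_rotatedLse_sub_zero_le hV hsin
    _ ≤ n * (2 * (θ ^ 2 / 2 * (n * √V) + θ * √V)) := by
        gcongr
        exact Real.sin_le hθ0
    _ = ((n * θ) ^ 2 + 2 * (n * θ)) * √V := by ring
    _ ≤ 6 * √V := by
        rw [hnθ]
        gcongr
        nlinarith

lemma integral_abs_lse_sub_meanLse_le (h : IsIsonormal X Q μ) {c : ι → E} {V : ℝ}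
    (hV : ∀ i, Q (c i) (c i) ≤ V) :
    ∫ ω, |(lse fun i => X (c i) ω) - meanLse X μ c| ∂μ ≤ 6 * √V := by
  have := h.isProbabilityMeasure
  have hint := h.integrable_lse c
  have hdiff : Integrable
      (fun p : Ω × Ω => (lse fun i => X (c i) p.2) - lse fun i => X (c i) p.1) (μ.prod μ) :=
    (hint.comp_snd μ).sub (hint.comp_fst μ)
  refine le_trans ?_ (h.integral_abs_lse_sub_lse_le hV)
  rw [integral_prod _ hdiff.abs]
  refine integral_mono (hint.sub (integrable_const _)).abs hdiff.abs.integral_prod_left fun ω => ?_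
  calc |(lse fun i => X (c i) ω) - meanLse X μ c|
      = |∫ ω', ((lse fun i => X (c i) ω') - lse fun i => X (c i) ω) ∂μ| := by
        rw [integral_sub hint (integrable_const _), integral_const, probReal_univ, one_smul,
          abs_sub_comm]
        rfl
    _ ≤ _ := abs_integral_le_integral_abs

end IsIsonormal

end Concentration

section PosSemidefForms

variable {E : Type*} [AddCommGroup E] [Module ℝ E] {Q : LinearMap.BilinForm ℝ E}

lemma apply_sum_self_le {ι : Type*} (hQ : Q.IsPosSemidef) (s : Finset ι) (c : ι → E) :
    Q (∑ i ∈ s, c i) (∑ i ∈ s, c i) ≤ s.card * ∑ i ∈ s, Q (c i) (c i) := by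
  have hpair : ∀ i k, Q (c i) (c k) ≤ (Q (c i) (c i) + Q (c k) (c k)) / 2 := by
    intro i k
    have h := hQ.nonneg (c i - c k)
    have hsymm : Q (c k) (c i) = Q (c i) (c k) := hQ.isSymm.eq _ _
    simp only [map_sub, LinearMap.sub_apply, hsymm] at h
    linarith
  simp only [map_sum, LinearMap.sum_apply]
  calc ∑ i ∈ s, ∑ k ∈ s, Q (c k) (c i)
      ≤ ∑ i ∈ s, ∑ k ∈ s, (Q (c k) (c k) + Q (c i) (c i)) / 2 :=
        Finset.sum_le_sum fun i _ => Finset.sum_le_sum fun k _ => hpair k i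
    _ = s.card * ∑ i ∈ s, Q (c i) (c i) := by
        simp only [add_div, Finset.sum_add_distrib, Finset.sum_const, nsmul_eq_mul,
          ← Finset.mul_sum, ← Finset.sum_div]
        ring

end PosSemidefForms

section GreenForm

lemma sum_add_left_le_sum {S : Finset Vtx} {g : Vtx → ℝ} (hg : ∀ x, 0 ≤ g x)
    (hoff : ∀ x ∉ S, g x = 0) (t : Vtx) : ∑ w ∈ S, g (t + w) ≤ ∑ w ∈ S, g w := by
  calc ∑ w ∈ S, g (t + w) = ∑ w ∈ S.map (addLeftEmbedding t), g w := by simp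
    _ ≤ ∑ w ∈ S ∪ S.map (addLeftEmbedding t), g w :=
        Finset.sum_le_sum_of_subset_of_nonneg Finset.subset_union_right fun x _ _ => hg x
    _ = ∑ w ∈ S, g w :=
        (Finset.sum_subset Finset.subset_union_left fun x _ hx => hoff x hx).symm

theorem sum_lap_mul_self_nonneg {S : Finset Vtx} {f : Vtx → ℝ} (hoff : ∀ x ∉ S, f x = 0) :
    0 ≤ ∑ w ∈ S, lap f w * f w := by
  have hshift := sum_add_left_le_sum (S := S) (g := fun x => f x ^ 2) (fun x => sq_nonneg _)
    fun x hx => by simp only [hoff x hx, ne_eq, OfNat.ofNat_ne_zero, not_false_eq_true, zero_pow]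
  have hpoint : ∀ w, (f w ^ 2 - (f ((1, 0) + w) ^ 2 + f ((-1, 0) + w) ^ 2 + f ((0, 1) + w) ^ 2 +
      f ((0, -1) + w) ^ 2) / 4) / 2 ≤ lap f w * f w := by
    rintro ⟨x, y⟩
    simp only [lap_apply, Prod.mk_add_mk, add_comm _ x, add_comm _ y, ← sub_eq_add_neg,
      add_zero]
    nlinarith [sq_nonneg (f (x, y) - f (x + 1, y)), sq_nonneg (f (x, y) - f (x - 1, y)),
      sq_nonneg (f (x, y) - f (x, y + 1)), sq_nonneg (f (x, y) - f (x, y - 1))]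
  refine le_trans ?_ (Finset.sum_le_sum fun w _ => hpoint w)
  simp only [← Finset.sum_div, Finset.sum_sub_distrib, Finset.sum_add_distrib]
  linarith [hshift (1, 0), hshift (-1, 0), hshift (0, 1), hshift (0, -1)]

/-- The Green operator `(π/2)·(I - P)⁻¹` of a finite set with zero boundary values. -/
def greenOp (S : Finset Vtx) : (Vtx → ℝ) →ₗ[ℝ] (Vtx → ℝ) :=
  ∑ w ∈ S, (LinearMap.proj w).smulRight (green S w)

/-- The covariance of the linear functionals `∑ v, c v * φ v` of the Gaussian free field `φ` with
interior `S`, as a bilinear form in the coefficient vectors. -/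
def greenForm (S : Finset Vtx) : LinearMap.BilinForm ℝ (Vtx → ℝ) :=
  ∑ v ∈ S, (LinearMap.mul ℝ ℝ).compl₁₂ (LinearMap.proj v) (LinearMap.proj v ∘ₗ greenOp S)

variable {D S T : Finset Vtx}

lemma greenOp_apply (S : Finset Vtx) (d : Vtx → ℝ) (x : Vtx) :
    greenOp S d x = ∑ w ∈ S, d w * green S w x := by
  simp [greenOp, Finset.sum_apply]

lemma greenForm_apply (S : Finset Vtx) (c d : Vtx → ℝ) :
    greenForm S c d = ∑ v ∈ S, c v * greenOp S d v := by
  simp [greenForm, LinearMap.sum_apply]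

lemma greenOp_of_notMem (d : Vtx → ℝ) {x : Vtx} (hx : x ∉ S) : greenOp S d x = 0 := by
  rw [greenOp_apply]
  exact Finset.sum_eq_zero fun w _ => by rw [green_of_notMem_right w hx, mul_zero]

lemma lap_greenOp (d : Vtx → ℝ) {x : Vtx} (hx : x ∈ S) :
    lap (greenOp S d) x = d x * (Real.pi / 2) := by
  have hop : greenOp S d = ∑ w ∈ S, d w • green S w := by simp [greenOp]
  simp only [hop, map_sum, map_smul, Finset.sum_apply, Pi.smul_apply, lap_green _ hx, smul_eq_mul,
    mul_ite, mul_zero, Finset.sum_ite_eq, if_pos hx]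

lemma greenOp_lap {f : Vtx → ℝ} (hoff : ∀ x ∉ S, f x = 0) :
    greenOp S (lap f) = (Real.pi / 2) • f := by
  refine sub_eq_zero.1 (eq_zero_of_lap_eq_zero (S := S) (fun x hx => ?_) fun x hx => ?_)
  · rw [map_sub, map_smul, Pi.sub_apply, Pi.smul_apply, lap_greenOp _ hx, smul_eq_mul, mul_comm,
      sub_self]
  · rw [Pi.sub_apply, Pi.smul_apply, greenOp_of_notMem _ hx, hoff x hx, smul_zero, sub_zero]

lemma greenForm_eq_sum_lap (S : Finset Vtx) (c d : Vtx → ℝ) :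
    greenForm S c d = 2 / Real.pi * ∑ v ∈ S, lap (greenOp S c) v * greenOp S d v := by
  rw [greenForm_apply, Finset.mul_sum]
  refine Finset.sum_congr rfl fun v hv => ?_
  rw [lap_greenOp c hv]
  field_simp

theorem greenForm_isPosSemidef (S : Finset Vtx) : (greenForm S).IsPosSemidef where
  eq c d := by
    simp only [greenForm_eq_sum_lap]
    rw [sum_lap_mul_comm (fun x => greenOp_of_notMem c) (fun x => greenOp_of_notMem d)]
    simp only [mul_comm]
  nonneg c := by
    rw [greenForm_eq_sum_lap]
    have := sum_lap_mul_self_nonneg (fun x => greenOp_of_notMem (S := S) c)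
    positivity

lemma greenForm_comm (S : Finset Vtx) (c d : Vtx → ℝ) : greenForm S c d = greenForm S d c :=
  (greenForm_isPosSemidef S).isSymm.eq c d

/-- The coefficients of the local field in `S` at `v`, i.e. of `φ v` minus its harmonic average
over the values outside `S`, as a linear functional of the field `φ`. -/
def localCoeff (S : Finset Vtx) (v : Vtx) : Vtx → ℝ := (2 / Real.pi) • lap (green S v)

lemma localCoeff_empty (v : Vtx) : localCoeff ∅ v = 0 := by
  rw [localCoeff, green_of_notMem_left (Finset.notMem_empty v), map_zero, smul_zero]

lemma localCoeff_of_mem (v : Vtx) {w : Vtx} (hw : w ∈ S) :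
    localCoeff S v w = if w = v then 1 else 0 := by
  rw [localCoeff, Pi.smul_apply, lap_green v hw, smul_eq_mul]
  split_ifs
  · field_simp
  · rw [mul_zero]

/-- `S` and `T` are disjoint and no vertex of `T` has a lattice neighbour in `S`. -/
def LatticeSeparated (S T : Finset Vtx) : Prop :=
  ∀ v ∈ T, v ∉ S ∧ ∀ y ∈ latticeNbrs v, y ∉ S

lemma LatticeSeparated.mono {S S' T T' : Finset Vtx} (h : LatticeSeparated S T) (hS : S' ⊆ S)
    (hT : T' ⊆ T) : LatticeSeparated S' T' :=
  fun v hv => ⟨fun hvS => (h v (hT hv)).1 (hS hvS), fun y hy hyS => (h v (hT hv)).2 y hy (hS hyS)⟩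

lemma latticeSeparated_of_two_le
    (h : ∀ x ∈ S, ∀ y ∈ T, 2 ≤ |x.1 - y.1| ∨ 2 ≤ |x.2 - y.2|) : LatticeSeparated S T := by
  refine fun v hv => ⟨fun hvS => ?_, fun y hy hyS => ?_⟩
  · simpa using h v hvS v hv
  · have := h y hyS v hv
    rw [mem_latticeNbrs] at hy
    obtain rfl | rfl | rfl | rfl := hy <;> simp at this

lemma localCoeff_of_latticeNbrs {x v : Vtx} (hv : v ∉ S) (hnbr : ∀ y ∈ latticeNbrs v, y ∉ S) :
    localCoeff S x v = 0 := by
  obtain ⟨h₁, h₂, h₃, h₄⟩ := forall_mem_latticeNbrs.1 hnbr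
  simp only [localCoeff, Pi.smul_apply, lap_apply, green_of_notMem_right x hv,
    green_of_notMem_right x h₁, green_of_notMem_right x h₂, green_of_notMem_right x h₃,
    green_of_notMem_right x h₄, add_zero, zero_div, sub_zero, smul_zero]

lemma localCoeff_vadd (t : Vtx) (S : Finset Vtx) (x v : Vtx) :
    localCoeff (t +ᵥ S) (t + x) (t + v) = localCoeff S x v := by
  simp only [localCoeff, Pi.smul_apply, ← lap_comp_add_left, green_vadd]

theorem greenForm_localCoeff (hT : T ⊆ D) (c : Vtx → ℝ) (z : Vtx) :
    greenForm D c (localCoeff T z) = ∑ v ∈ T, c v * green T z v := by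
  have hop : greenOp D (localCoeff T z) = green T z := by
    rw [localCoeff, map_smul, greenOp_lap fun x hx => green_of_notMem_right z fun h => hx (hT h),
      smul_smul, div_mul_div_cancel₀ (by positivity), div_self two_ne_zero, one_smul]
  rw [greenForm_apply, hop]
  exact (Finset.sum_subset hT fun v _ hv => by rw [green_of_notMem_right z hv, mul_zero]).symm

lemma greenForm_single_localCoeff (hT : T ⊆ D) (w z : Vtx) :
    greenForm D (Pi.single w 1) (localCoeff T z) = green T z w := by
  rw [greenForm_localCoeff hT]
  by_cases hw : w ∈ T <;> simp [Pi.single_apply, hw, green_of_notMem_right]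

lemma greenForm_localCoeff_of_subset (hTS : T ⊆ S) (hT : T ⊆ D) (x z : Vtx) :
    greenForm D (localCoeff S x) (localCoeff T z) = green T z x := by
  rw [greenForm_localCoeff hT, Finset.sum_congr rfl fun v hv => by
    rw [localCoeff_of_mem x (hTS hv)]]
  by_cases hx : x ∈ T <;> simp [hx, green_of_notMem_right]

lemma greenForm_localCoeff_of_separated (hT : T ⊆ D) (hsep : LatticeSeparated S T) (x z : Vtx) :
    greenForm D (localCoeff S x) (localCoeff T z) = 0 := by
  rw [greenForm_localCoeff hT]
  exact Finset.sum_eq_zero fun v hv => by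
    rw [localCoeff_of_latticeNbrs (hsep v hv).1 (hsep v hv).2, zero_mul]

lemma greenForm_localCoeff_eq_green (hT : T ⊆ D) {x : Vtx}
    (h : T ⊆ S ∨ LatticeSeparated S T ∧ x ∉ T) (z : Vtx) :
    greenForm D (localCoeff S x) (localCoeff T z) = green T z x := by
  obtain hTS | ⟨hsep, hx⟩ := h
  · exact greenForm_localCoeff_of_subset hTS hT x z
  · rw [greenForm_localCoeff_of_separated hT hsep, green_of_notMem_right z hx]

lemma greenForm_localCoeff_vadd {t : Vtx} (hT : T ⊆ D) (htT : t +ᵥ T ⊆ D) (x z : Vtx) :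
    greenForm D (localCoeff (t +ᵥ S) (t + x)) (localCoeff (t +ᵥ T) (t + z)) =
      greenForm D (localCoeff S x) (localCoeff T z) := by
  rw [greenForm_localCoeff hT, greenForm_localCoeff htT]
  refine (Finset.sum_image (s := T) (g := (t + ·)) fun _ _ _ _ h => add_left_cancel h).trans ?_
  simp only [localCoeff_vadd, green_vadd]

lemma greenForm_localCoeff_sub (hTS : T ⊆ S) (hS : S ⊆ D) (v : Vtx) :
    greenForm D (localCoeff S v - localCoeff T v) (localCoeff S v - localCoeff T v) =
      green S v v - green T v v := by
  have hsub := fun {S T : Finset Vtx} (hTS : T ⊆ S) (hT : T ⊆ D) =>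
    greenForm_localCoeff_of_subset hTS hT v v
  simp only [map_sub, LinearMap.sub_apply, greenForm_comm D (localCoeff T v) (localCoeff S v),
    hsub subset_rfl hS, hsub subset_rfl (hTS.trans hS), hsub hTS (hTS.trans hS)]
  ring

lemma green_self_mono (hT : T ⊆ D) (v : Vtx) : green T v v ≤ green D v v := by
  rw [← sub_nonneg, ← greenForm_localCoeff_sub hT subset_rfl]
  exact (greenForm_isPosSemidef D).nonneg _

lemma greenForm_localCoeff_self_le {N : ℕ} (hN : 1 ≤ N) (hT : T ⊆ innerBox N) (v : Vtx) :
    greenForm (innerBox N) (localCoeff T v) (localCoeff T v) ≤ 4 * Real.log N + 8 := by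
  rw [greenForm_localCoeff_of_subset subset_rfl hT]
  exact (green_self_mono hT v).trans (green_innerBox_self_le hN v)

end GreenForm

section ConditionalExpectation

lemma IsIsonormal.condExp_eq_zero {Ω E ι : Type*} [MeasurableSpace Ω] [AddCommGroup E]
    [Module ℝ E] [Finite ι] {X : E →ₗ[ℝ] (Ω → ℝ)} {Q : LinearMap.BilinForm ℝ E} {μ : Measure Ω}
    (h : IsIsonormal X Q μ) {c : E} {d : ι → E} (hcd : ∀ i, Q c (d i) = 0) :
    μ[X c | MeasurableSpace.comap (fun ω i => X (d i) ω) MeasurableSpace.pi] =ᵐ[μ] 0 := by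
  have := h.isProbabilityMeasure
  have hd : Measurable fun ω i => X (d i) ω := measurable_pi_lambda _ fun i => h.measurable _
  refine (ae_eq_condExp_of_forall_setIntegral_eq hd.comap_le (h.integrable c)
    (fun s _ _ => integrableOn_zero) ?_ aestronglyMeasurable_zero).symm
  rintro _ ⟨B, hB, rfl⟩ -
  -- The law of `(X c, X ∘ d)` is invariant under changing the sign of the first component.
  let F : (Option ι → ℝ) → ℝ := fun x => B.indicator 1 (fun i => x (some i)) * x none
  have hF : Measurable F :=
    ((measurable_one.indicator hB).comp (measurable_pi_lambda _ fun i => measurable_pi_apply _)).mul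
      (measurable_pi_apply _)
  have hint : ∀ c', ∫ ω, F (fun i => X (i.elim c' d) ω) ∂μ =
      ∫ ω in (fun ω i => X (d i) ω) ⁻¹' B, X c' ω ∂μ := fun c' => by
    rw [← integral_indicator (hd hB)]
    congr with ω
    by_cases hω : (fun i => X (d i) ω) ∈ B <;> simp [F, Set.indicator, hω]
  have hdc : ∀ i, Q (d i) c = 0 := fun i => (h.posSemidef.isSymm.eq c (d i)).symm.trans (hcd i)
  have hflip := ((h.identDistrib h (c := fun i : Option ι => i.elim c d)
    (d := fun i => i.elim (-c) d) fun i k => by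
      cases i <;> cases k <;> simp [hcd, hdc]).comp hF).integral_eq
  simp only [Function.comp_def, hint, map_neg, Pi.neg_apply, integral_neg] at hflip
  simp only [integral_zero]
  linarith

/-- The linear functional `∑ v ∈ V_N, c v * ω v` of the field, as a linear map in `c`. -/
def fieldPairing (N : ℕ) : (Vtx → ℝ) →ₗ[ℝ] (FieldSp → ℝ) :=
  ∑ v ∈ VN N, (LinearMap.proj v).smulRight fun ω => ω v

lemma fieldPairing_apply (N : ℕ) (c : Vtx → ℝ) (ω : FieldSp) :
    fieldPairing N c ω = ∑ v ∈ VN N, c v * ω v := by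
  simp [fieldPairing, Finset.sum_apply]

lemma fieldPairing_single {N : ℕ} {v : Vtx} (hv : v ∈ VN N) :
    fieldPairing N (Pi.single v 1) = fun ω => ω v := by
  ext ω
  simp [fieldPairing_apply, Pi.single_apply, hv]

lemma IsGreenFn.eq_green {B : Finset Vtx} {G : Vtx → Vtx → ℝ} (hG : IsGreenFn B G) (x y : Vtx) :
    G x y = green (intr B) x y := by
  rw [green_comm]
  by_cases hy : y ∈ intr B; swap
  · rw [hG.1 x y (.inr hy), green_of_notMem_left hy, Pi.zero_apply]
  refine congrFun (green_unique (g := fun x => G x y) y (fun x hx => hG.1 x y (.inl hx))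
    fun x hx => ?_) x
  have hstep := hG.2 y hy x hx
  rw [lap_apply]
  split_ifs at hstep ⊢ <;> linarith

lemma innerBox_subset_VN (N : ℕ) : innerBox N ⊆ VN N := Finset.sdiff_subset

theorem IsGFF.isIsonormal {N : ℕ} {P : Measure FieldSp} (h : IsGFF N P) :
    IsIsonormal (fieldPairing N) (greenForm (innerBox N)) P where
  measurable c := by
    simp only [funext (fieldPairing_apply N c)]
    fun_prop
  map_eq c := by
    obtain ⟨-, G, hG, hmap⟩ := h
    rw [funext (fieldPairing_apply N c), hmap, greenForm_apply]
    congr 2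
    refine (Finset.sum_subset (innerBox_subset_VN N) fun v _ hv => ?_).symm.trans
      (Finset.sum_congr rfl fun v _ => ?_)
    · exact Finset.sum_eq_zero fun w _ => by rw [hG.1 v w (.inl hv), mul_zero]
    · rw [greenOp_apply, Finset.mul_sum]
      refine (Finset.sum_subset (innerBox_subset_VN N) fun w _ hw => ?_).symm.trans
        (Finset.sum_congr rfl fun w _ => ?_)
      · rw [hG.1 v w (.inr hw), mul_zero]
      · rw [hG.eq_green, green_comm, innerBox, mul_assoc]
  posSemidef := greenForm_isPosSemidef _

/-- The σ-algebra generated by the field variables in `V_N ∖ S`. -/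
abbrev outsideAlg (N : ℕ) (S : Finset Vtx) : MeasurableSpace FieldSp :=
  ⨆ w ∈ {w : Vtx | w ∈ VN N ∧ w ∉ S}, MeasurableSpace.comap (fun ω : FieldSp => ω w) inferInstance

lemma outsideAlg_eq_comap (N : ℕ) (S : Finset Vtx) :
    outsideAlg N S = MeasurableSpace.comap
      (fun ω (w : (VN N \ S : Finset Vtx)) => fieldPairing N (Pi.single w.1 1) ω)
      MeasurableSpace.pi := by
  simp only [outsideAlg, Set.mem_ofPred_eq, ← Finset.mem_sdiff]
  rw [iSup_subtype', MeasurableSpace.pi, MeasurableSpace.comap_iSup]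
  refine iSup_congr fun w => ?_
  rw [MeasurableSpace.comap_comp]
  exact congrArg (MeasurableSpace.comap · _) (fieldPairing_single (Finset.mem_sdiff.1 w.2).1).symm

lemma measurable_eval_outsideAlg {N : ℕ} {S : Finset Vtx} {w : Vtx} (hw : w ∈ VN N)
    (hwS : w ∉ S) : Measurable[outsideAlg N S] fun ω : FieldSp => ω w :=
  measurable_iff_comap_le.2 <| le_iSup₂ (f := fun (w : Vtx)
    (_ : w ∈ {w : Vtx | w ∈ VN N ∧ w ∉ S}) =>
      MeasurableSpace.comap (fun ω : FieldSp => ω w) inferInstance) w ⟨hw, hwS⟩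

lemma measurable_fieldPairing_outsideAlg {N : ℕ} {S : Finset Vtx} {c : Vtx → ℝ}
    (hc : ∀ w ∈ S, c w = 0) : Measurable[outsideAlg N S] (fieldPairing N c) := by
  simp only [funext (fieldPairing_apply N c)]
  refine Finset.measurable_sum _ fun w hw => ?_
  by_cases hwS : w ∈ S
  · simp only [hc w hwS, zero_mul, measurable_const]
  · exact (measurable_eval_outsideAlg hw hwS).const_mul _

/-- Spatial Markov property of the Gaussian free field. -/
theorem IsGFF.condExp_outsideAlg {N : ℕ} {P : Measure FieldSp} (h : IsGFF N P) {S : Finset Vtx}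
    (hS : S ⊆ innerBox N) {v : Vtx} (hv : v ∈ VN N) :
    P[fun ω : FieldSp => ω v | outsideAlg N S] =ᵐ[P]
      fun ω => ω v - fieldPairing N (localCoeff S v) ω := by
  have := h.1
  have hX := h.isIsonormal
  have hle : outsideAlg N S ≤ MeasurableSpace.pi := iSup₂_le fun w _ =>
    (measurable_pi_apply w).comap_le
  have hlocal : P[fieldPairing N (localCoeff S v) | outsideAlg N S] =ᵐ[P] 0 := by
    rw [outsideAlg_eq_comap]
    refine hX.condExp_eq_zero fun w => ?_
    rw [greenForm_comm, greenForm_single_localCoeff hS,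
      green_of_notMem_right v (Finset.mem_sdiff.1 w.2).2]
  have hrest : P[fieldPairing N (Pi.single v 1 - localCoeff S v) | outsideAlg N S] =
      fieldPairing N (Pi.single v 1 - localCoeff S v) :=
    condExp_of_stronglyMeasurable hle (measurable_fieldPairing_outsideAlg fun w hw => by
      simp [localCoeff_of_mem v hw, Pi.single_apply]).stronglyMeasurable (hX.integrable _)
  have hsum := condExp_add (hX.integrable (Pi.single v 1 - localCoeff S v))
    (hX.integrable (localCoeff S v)) (outsideAlg N S)
  rw [← map_add, sub_add_cancel, fieldPairing_single hv, hrest] at hsum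
  filter_upwards [hsum, hlocal] with ω hω hω₀
  simp [hω, hω₀, fieldPairing_single hv]

end ConditionalExpectation

section ScaleDecomposition

/-- The points of the interior of `V_N` at sup-distance less than `r` from `v`. -/
def innerSquare (N : ℕ) (r : ℤ) (v : Vtx) : Finset Vtx :=
  (innerBox N).filter fun x => |x.1 - v.1| < r ∧ |x.2 - v.2| < r

/-- The radius `r` for which `innerSquare N r v` is the interior of `[v]_λ`. -/
def scaleRadius (N : ℕ) (lam : ℝ) : ℤ :=
  if lam = 0 then N + 1 else if lam = 1 then 0 else ⌊(N : ℝ) ^ (1 - lam) / 2⌋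

lemma mem_innerSquare {N : ℕ} {r : ℤ} {v x : Vtx} :
    x ∈ innerSquare N r v ↔ x ∈ innerBox N ∧ |x.1 - v.1| < r ∧ |x.2 - v.2| < r :=
  Finset.mem_filter

lemma innerSquare_subset (N : ℕ) (r : ℤ) (v : Vtx) : innerSquare N r v ⊆ innerBox N :=
  Finset.filter_subset _ _

lemma innerSquare_of_nonpos (N : ℕ) {r : ℤ} (hr : r ≤ 0) (v : Vtx) : innerSquare N r v = ∅ :=
  Finset.filter_eq_empty_iff.2 fun _ _ hx => (hx.1.trans_le hr).not_ge (abs_nonneg _)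

lemma innerSquare_eq_innerBox {N : ℕ} {v : Vtx} (hv : v ∈ VN N) {r : ℤ} (hr : N < r) :
    innerSquare N r v = innerBox N :=
  Finset.filter_true_of_mem fun x hx => by
    rw [mem_VN] at hv
    rw [mem_innerBox] at hx
    simp only [abs_lt]
    omega

lemma intr_nbhd (N : ℕ) (lam : ℝ) {v : Vtx} (hv : v ∈ VN N) :
    intr (nbhd N lam v) = innerSquare N (scaleRadius N lam) v := by
  unfold nbhd scaleRadius
  split_ifs
  · rw [innerSquare_eq_innerBox hv (by omega), innerBox]
  · rw [innerSquare_of_nonpos N le_rfl, Finset.eq_empty_iff_forall_notMem]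
    intro x hx
    obtain ⟨hxv, hnbr⟩ := mem_intr.1 hx
    have hright := hnbr (mem_latticeNbrs.2 (.inl rfl))
    rw [Finset.mem_singleton] at hxv hright
    exact absurd (congrArg Prod.fst (hright.trans hxv.symm)) (by simp)
  · have hfloor : ∀ (a b : ℤ) (s : ℝ), |(a : ℝ) - b| ≤ s ↔ |a - b| ≤ ⌊s⌋ := fun a b s => by
      rw [Int.le_floor]
      push_cast
      rfl
    ext x
    simp only [mem_intr, Finset.subset_iff, forall_mem_latticeNbrs, mem_innerSquare, mem_innerBox,
      Finset.mem_filter, hfloor, mem_VN]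
    rw [mem_VN] at hv
    generalize ⌊(N : ℝ) ^ (1 - lam) / 2⌋ = r
    simp only [abs_le, abs_lt]
    constructor
    · rintro ⟨⟨_, _, _⟩, ⟨_, _, _⟩, ⟨_, _, _⟩, ⟨_, _, _⟩, ⟨_, _, _⟩⟩
      omega
    · rintro ⟨_, _, _⟩
      omega

lemma IsGFF.phiScale_ae_eq {N : ℕ} {P : Measure FieldSp} (h : IsGFF N P) (lam : ℝ) {v : Vtx}
    (hv : v ∈ VN N) :
    phiScale N P v lam =ᵐ[P] fun ω =>
      ω v - fieldPairing N (localCoeff (innerSquare N (scaleRadius N lam) v) v) ω := by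
  rw [← intr_nbhd N lam hv]
  exact h.condExp_outsideAlg (intr_nbhd N lam hv ▸ innerSquare_subset N _ v) hv

/-- The jump `σ_{i+1} - σ_i` of the variance parameters, with `σ_0 := 0`; the entry `σ 0` of the
sequence is not part of the model. -/
def sigmaJump (sigv : ℕ → ℝ) (i : ℕ) : ℝ := sigv (i + 1) - if i = 0 then 0 else sigv i

lemma sum_sigma_mul_sub (sigv g : ℕ → ℝ) (M : ℕ) :
    ∑ i ∈ Finset.Icc 1 M, sigv i * (g (i - 1) - g i) =
      ∑ i ∈ Finset.range M, sigmaJump sigv i * g i - if M = 0 then 0 else sigv M * g M := by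
  induction M with
  | zero => simp
  | succ M ih =>
    rw [Finset.sum_Icc_succ_top (by omega), ih, Finset.sum_range_succ, sigmaJump]
    split_ifs <;> simp_all <;> ring

/-- For the radii `r i = scaleRadius N (λ i)`, the coefficients of `ψ_v` as a linear functional of
the Gaussian free field. -/
def psiCoeff (N M : ℕ) (sigv : ℕ → ℝ) (r : ℕ → ℤ) (v : Vtx) : Vtx → ℝ :=
  ∑ i ∈ Finset.range M, sigmaJump sigv i • localCoeff (innerSquare N (r i) v) v

theorem IsGFF.psiFld_ae_eq {N M : ℕ} {sigv lamv : ℕ → ℝ} {P : Measure FieldSp} (h : IsGFF N P)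
    (hM : lamv M = 1) {v : Vtx} (hv : v ∈ VN N) :
    psiFld N M sigv lamv P v =ᵐ[P]
      fieldPairing N (psiCoeff N M sigv (fun i => scaleRadius N (lamv i)) v) := by
  filter_upwards [ae_all_iff.2 fun i => h.phiScale_ae_eq (lamv i) hv] with ω hω
  have hlast : localCoeff (innerSquare N (scaleRadius N (lamv M)) v) v = 0 := by
    rw [innerSquare_of_nonpos N (by simp [scaleRadius, hM]), localCoeff_empty]
  have habel := sum_sigma_mul_sub sigv
    (fun i => fieldPairing N (localCoeff (innerSquare N (scaleRadius N (lamv i)) v) v) ω) M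
  simp only [hlast, map_zero, Pi.zero_apply, mul_zero, ite_self, sub_zero] at habel
  simp only [psiFld, psiCoeff, hω, sub_sub_sub_cancel_left, habel, map_sum, map_smul,
    Finset.sum_apply, Pi.smul_apply, smul_eq_mul]

end ScaleDecomposition

section Transplantation

variable {N M j : ℕ} {r : ℕ → ℤ} {m : ℤ} {B A : Finset Vtx} {v w a b : Vtx}

/-- The index of the square `m • p + [0, m)²` of the mesh of size `m` that contains `v`. -/
def cell (m : ℤ) (v : Vtx) : Vtx := (v.1 / m, v.2 / m)

/-- The cell of index `p` of the mesh of size `m`, enlarged by `m` and cut off at `∂V_N`. -/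
def block (N : ℕ) (m : ℤ) (p : Vtx) : Finset Vtx :=
  (innerBox N).filter fun x =>
    (m * p.1 - m ≤ x.1 ∧ x.1 < m * p.1 + 2 * m) ∧ (m * p.2 - m ≤ x.2 ∧ x.2 < m * p.2 + 2 * m)

/-- The translation that moves the cell of `v` onto the square `a + [0, m)²`. -/
def cellShift (m : ℤ) (v a : Vtx) : Vtx := (a.1 - m * (cell m v).1, a.2 - m * (cell m v).2)

/-- The part of `innerSquare N r v` that lies in the block of `v`. -/
def truncSquare (N : ℕ) (m r : ℤ) (v : Vtx) : Finset Vtx :=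
  innerSquare N r v ∩ block N m (cell m v)

/-- The analogue of `psiCoeff` with all squares truncated to the block of `v`, moved by `t`. -/
def truncCoeff (N M : ℕ) (sigv : ℕ → ℝ) (r : ℕ → ℤ) (m : ℤ) (t v : Vtx) : Vtx → ℝ :=
  ∑ i ∈ Finset.range M, sigmaJump sigv i • localCoeff (t +ᵥ truncSquare N m (r i) v) (t + v)

/-- The mesh size `m` lies well between the radii of index at most `j` and the others. -/
structure IsMeshAt (N M : ℕ) (r : ℕ → ℤ) (j : ℕ) (m : ℤ) : Prop where
  pos : 0 < m
  radius_zero : r 0 = N + 1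
  le_radius : ∀ i ≤ j, 4 * m ≤ r i
  radius_le : ∀ i, j < i → i < M → r i ≤ m

/-- The vertices of `B` are within `8m` of `∂V_N`, but their squares of radius at most `m` are not
cut off by `∂V_N`; the indices of the cells that `B` meets are congruent modulo `4`. -/
structure IsBoundaryLayer (N M : ℕ) (r : ℕ → ℤ) (j : ℕ) (m : ℤ) (B : Finset Vtx) : Prop where
  subset_VN : B ⊆ VN N
  depth_lt : ∀ v ∈ B, depth N v < 8 * m
  radius_le_depth : ∀ v ∈ B, ∀ i, j < i → i < M → r i ≤ depth N v
  four_dvd : ∀ v ∈ B, ∀ w ∈ B,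
    4 ∣ (cell m v).1 - (cell m w).1 ∧ 4 ∣ (cell m v).2 - (cell m w).2

/-- A set of corners of squares of side `m` into which cells near `∂V_N` can be moved: the squares
are far apart, and each scale of index at most `j` either does not see a pair of them or does not
distinguish it. -/
structure IsAnchorSet (N : ℕ) (r : ℕ → ℤ) (j : ℕ) (m : ℤ) (A : Finset Vtx) : Prop where
  mem_box : ∀ a ∈ A, m + 1 ≤ a.1 ∧ a.1 + 2 * m ≤ N ∧ m + 1 ≤ a.2 ∧ a.2 + 2 * m ≤ N
  far : ∀ a ∈ A, ∀ b ∈ A, a ≠ b → 4 * m ≤ |a.1 - b.1| ∨ 4 * m ≤ |a.2 - b.2|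
  near_or_far : ∀ a ∈ A, ∀ b ∈ A, ∀ i, 1 ≤ i → i ≤ j →
    (|a.1 - b.1| + 2 * m ≤ r i ∧ |a.2 - b.2| + 2 * m ≤ r i) ∨
      (r i + 4 * m ≤ |a.1 - b.1| ∨ r i + 4 * m ≤ |a.2 - b.2|)

lemma mem_block {p x : Vtx} : x ∈ block N m p ↔ x ∈ innerBox N ∧
    (m * p.1 - m ≤ x.1 ∧ x.1 < m * p.1 + 2 * m) ∧ (m * p.2 - m ≤ x.2 ∧ x.2 < m * p.2 + 2 * m) :=
  Finset.mem_filter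

lemma block_subset (N : ℕ) (m : ℤ) (p : Vtx) : block N m p ⊆ innerBox N := Finset.filter_subset _ _

lemma mul_cell_le_lt (hm : 0 < m) (v : Vtx) :
    (m * (cell m v).1 ≤ v.1 ∧ v.1 < m * (cell m v).1 + m) ∧
      (m * (cell m v).2 ≤ v.2 ∧ v.2 < m * (cell m v).2 + m) :=
  ⟨⟨Int.mul_ediv_self_le hm.ne', Int.lt_mul_ediv_self_add hm⟩,
    ⟨Int.mul_ediv_self_le hm.ne', Int.lt_mul_ediv_self_add hm⟩⟩

lemma cellShift_add_le_lt (hm : 0 < m) (v a : Vtx) :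
    (a.1 ≤ (cellShift m v a + v).1 ∧ (cellShift m v a + v).1 < a.1 + m) ∧
      (a.2 ≤ (cellShift m v a + v).2 ∧ (cellShift m v a + v).2 < a.2 + m) := by
  have := mul_cell_le_lt hm v
  simp only [cellShift, Prod.fst_add, Prod.snd_add]
  omega

lemma le_lt_of_mem_cellShift_vadd_block {x : Vtx}
    (hx : x ∈ cellShift m v a +ᵥ block N m (cell m v)) :
    (a.1 - m ≤ x.1 ∧ x.1 < a.1 + 2 * m) ∧ (a.2 - m ≤ x.2 ∧ x.2 < a.2 + 2 * m) := by
  obtain ⟨y, hy, rfl⟩ := Finset.mem_vadd_finset.1 hx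
  rw [mem_block] at hy
  simp only [cellShift, vadd_eq_add, Prod.fst_add, Prod.snd_add]
  omega

lemma truncSquare_subset_block (N : ℕ) (m r : ℤ) (v : Vtx) :
    truncSquare N m r v ⊆ block N m (cell m v) :=
  Finset.inter_subset_right

lemma IsMeshAt.truncSquare_of_le (hr : IsMeshAt N M r j m) (v : Vtx) {i : ℕ} (hi : i ≤ j) :
    truncSquare N m (r i) v = block N m (cell m v) := by
  refine Finset.inter_eq_right.2 fun x hx => ?_
  have := mul_cell_le_lt hr.pos v
  have := hr.le_radius i hi
  rw [mem_block] at hx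
  refine mem_innerSquare.2 ⟨hx.1, ?_⟩
  simp only [abs_lt]
  omega

lemma IsMeshAt.truncSquare_of_lt (hr : IsMeshAt N M r j m) (v : Vtx) {i : ℕ} (hji : j < i)
    (hi : i < M) : truncSquare N m (r i) v = innerSquare N (r i) v := by
  refine Finset.inter_eq_left.2 fun x hx => ?_
  have := mul_cell_le_lt hr.pos v
  have := hr.radius_le i hji hi
  rw [mem_innerSquare, abs_lt, abs_lt] at hx
  refine mem_block.2 ⟨hx.1, ?_⟩
  omega

lemma IsBoundaryLayer.separated_block (hB : IsBoundaryLayer N M r j m B) (hm : 0 < m) (hv : v ∈ B)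
    (hw : w ∈ B) (hvw : cell m v ≠ cell m w) :
    LatticeSeparated (block N m (cell m v)) (block N m (cell m w)) := by
  have hgap {p q : ℤ} (hpq : p ≠ q) (hdvd : 4 ∣ p - q) :
      m * p + 4 * m ≤ m * q ∨ m * q + 4 * m ≤ m * p := by
    obtain hlt | hlt := hpq.lt_or_gt
    · have : p + 4 ≤ q := by omega
      exact .inl (by linarith [mul_le_mul_of_nonneg_left this hm.le])
    · have : q + 4 ≤ p := by omega
      exact .inr (by linarith [mul_le_mul_of_nonneg_left this hm.le])
  refine latticeSeparated_of_two_le fun x hx y hy => ?_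
  obtain ⟨hdvd₁, hdvd₂⟩ := hB.four_dvd v hv w hw
  rw [mem_block] at hx hy
  simp only [le_abs]
  by_cases hfst : (cell m v).1 = (cell m w).1
  · have := hgap (fun hsnd => hvw (Prod.ext hfst hsnd)) hdvd₂
    omega
  · have := hgap hfst hdvd₁
    omega

namespace IsAnchorSet

lemma cellShift_vadd_block_subset (hA : IsAnchorSet N r j m A) (v : Vtx) (ha : a ∈ A) :
    cellShift m v a +ᵥ block N m (cell m v) ⊆ innerBox N := fun x hx => by
  have := le_lt_of_mem_cellShift_vadd_block hx
  have := hA.mem_box a ha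
  rw [mem_innerBox]
  omega

lemma separated_block (hA : IsAnchorSet N r j m A) (v w : Vtx) (ha : a ∈ A)
    (hb : b ∈ A) (hab : a ≠ b) :
    LatticeSeparated (cellShift m v a +ᵥ block N m (cell m v))
      (cellShift m w b +ᵥ block N m (cell m w)) := by
  refine latticeSeparated_of_two_le fun x hx y hy => ?_
  have := le_lt_of_mem_cellShift_vadd_block hx
  have := le_lt_of_mem_cellShift_vadd_block hy
  have := hA.far a ha b hb hab
  simp only [le_abs] at this ⊢
  omega

lemma cellShift_add_notMem (hA : IsAnchorSet N r j m A) (hm : 0 < m) (v w : Vtx) (ha : a ∈ A)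
    (hb : b ∈ A) (hab : a ≠ b) :
    cellShift m v a + v ∉ cellShift m w b +ᵥ block N m (cell m w) := fun hmem => by
  have := le_lt_of_mem_cellShift_vadd_block hmem
  have := cellShift_add_le_lt hm v a
  have := hA.far a ha b hb hab
  simp only [le_abs] at this
  omega

lemma innerSquare_cellShift (hA : IsAnchorSet N r j m A) (hB : IsBoundaryLayer N M r j m B)
    (hr : IsMeshAt N M r j m) (hv : v ∈ B) (ha : a ∈ A) {i : ℕ} (hji : j < i) (hi : i < M) :
    innerSquare N (r i) (cellShift m v a + v) = cellShift m v a +ᵥ innerSquare N (r i) v := by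
  have hshift := cellShift_add_le_lt hr.pos v a
  have := hr.radius_le i hji hi
  have := hA.mem_box a ha
  have hdepth := hB.radius_le_depth v hv i hji hi
  simp only [depth, le_min_iff] at hdepth
  generalize cellShift m v a = t at *
  ext x
  rw [← Finset.neg_vadd_mem_iff, mem_innerSquare, mem_innerSquare, mem_innerBox, mem_innerBox]
  simp only [vadd_eq_add, Prod.fst_add, Prod.snd_add, Prod.fst_neg, Prod.snd_neg, abs_lt]
    at hshift ⊢
  constructor
  · intro _
    omega
  · intro _
    omega

lemma subset_or_separated (hA : IsAnchorSet N r j m A) (hr : IsMeshAt N M r j m) (v w : Vtx)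
    (ha : a ∈ A) (hb : b ∈ A) {i : ℕ} (hi : i ≤ j) {T : Finset Vtx}
    (hT : T ⊆ cellShift m w b +ᵥ block N m (cell m w)) :
    T ⊆ innerSquare N (r i) (cellShift m v a + v) ∨
      LatticeSeparated (innerSquare N (r i) (cellShift m v a + v)) T ∧
        cellShift m v a + v ∉ T := by
  have := hr.pos
  have := hr.le_radius i hi
  have := hA.mem_box a ha
  have := cellShift_add_le_lt hr.pos v a
  have hTb : ∀ x ∈ T, _ := fun x hx => le_lt_of_mem_cellShift_vadd_block (hT hx)
  have hTbox : T ⊆ innerBox N := hT.trans (hA.cellShift_vadd_block_subset w hb)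
  generalize cellShift m v a + v = v' at *
  have hcase : i = 0 ∨ 1 ≤ i := by omega
  obtain rfl | hpos := hcase
  · left
    rwa [innerSquare_eq_innerBox (by rw [mem_VN]; omega) (by rw [hr.radius_zero]; omega)]
  obtain hnear | hfar := hA.near_or_far a ha b hb i hpos hi
  · left
    intro x hx
    have := hTb x hx
    have := abs_sub_le_iff.1 (le_sub_iff_add_le.2 hnear.1)
    have := abs_sub_le_iff.1 (le_sub_iff_add_le.2 hnear.2)
    refine mem_innerSquare.2 ⟨hTbox hx, ?_⟩
    simp only [abs_lt]
    omega
  · right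
    simp only [le_abs] at hfar
    refine ⟨latticeSeparated_of_two_le fun x hx y hy => ?_, fun hmem => ?_⟩
    · have := hTb y hy
      rw [mem_innerSquare, abs_lt, abs_lt] at hx
      simp only [le_abs]
      omega
    · have := hTb v' hmem
      omega

end IsAnchorSet

end Transplantation

section Covariances

variable {N M j : ℕ} {r : ℕ → ℤ} {m : ℤ} {B A : Finset Vtx} {v w a b : Vtx}

/-- The constant in the variance bounds for sums weighted by the jumps of `σ`. -/
def jumpBound (M : ℕ) (sigv : ℕ → ℝ) : ℝ := M * ∑ i ∈ Finset.range M, sigmaJump sigv i ^ 2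

lemma greenForm_sum_sigmaJump_le {D : Finset Vtx} (sigv : ℕ → ℝ) {c : ℕ → Vtx → ℝ} {V : ℝ}
    (hV : ∀ i < M, greenForm D (c i) (c i) ≤ V) :
    greenForm D (∑ i ∈ Finset.range M, sigmaJump sigv i • c i)
      (∑ i ∈ Finset.range M, sigmaJump sigv i • c i) ≤ jumpBound M sigv * V := by
  refine (apply_sum_self_le (greenForm_isPosSemidef D) _ _).trans ?_
  rw [Finset.card_range, jumpBound, mul_assoc, Finset.sum_mul]
  gcongr with i hi
  rw [map_smul, map_smul, LinearMap.smul_apply, smul_eq_mul, smul_eq_mul, ← mul_assoc, ← sq]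
  gcongr
  exact hV i (Finset.mem_range.1 hi)

lemma greenForm_psiCoeff_self_le (hN : 1 ≤ N) (sigv : ℕ → ℝ) (r : ℕ → ℤ) (v : Vtx) :
    greenForm (innerBox N) (psiCoeff N M sigv r v) (psiCoeff N M sigv r v) ≤
      jumpBound M sigv * (4 * Real.log N + 8) :=
  greenForm_sum_sigmaJump_le sigv fun i _ =>
    greenForm_localCoeff_self_le hN (innerSquare_subset N (r i) v) v

lemma IsBoundaryLayer.green_sub_green_truncSquare_le (hB : IsBoundaryLayer N M r j m B)
    (hr : IsMeshAt N M r j m) (hv : v ∈ B) {i : ℕ} (hi : i < M) :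
    green (innerSquare N (r i) v) v v - green (truncSquare N m (r i) v) v v ≤ 17 := by
  obtain hij | hij := le_or_gt i j
  · rw [hr.truncSquare_of_le v hij]
    refine (sub_le_sub_right (green_self_mono (innerSquare_subset N (r i) v) v) _).trans ?_
    refine green_innerBox_sub_le hr.pos (hB.depth_lt v hv) (block_subset N m _) fun x hx hxb => ?_
    have := mul_cell_le_lt hr.pos v
    rw [mem_block] at hxb
    by_contra! hnear
    simp only [abs_lt] at hnear
    exact hxb ⟨hx, by omega⟩
  · rw [hr.truncSquare_of_lt v hij hi, sub_self]
    norm_num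

lemma IsBoundaryLayer.greenForm_psiCoeff_sub_truncCoeff_le (hB : IsBoundaryLayer N M r j m B)
    (hr : IsMeshAt N M r j m) (sigv : ℕ → ℝ) (hv : v ∈ B) :
    greenForm (innerBox N) (psiCoeff N M sigv r v - truncCoeff N M sigv r m 0 v)
      (psiCoeff N M sigv r v - truncCoeff N M sigv r m 0 v) ≤ jumpBound M sigv * 17 := by
  simp only [psiCoeff, truncCoeff, zero_vadd, zero_add, ← Finset.sum_sub_distrib, ← smul_sub]
  refine greenForm_sum_sigmaJump_le sigv fun i hi => ?_
  rw [greenForm_localCoeff_sub (T := truncSquare N m (r i) v) Finset.inter_subset_left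
    (innerSquare_subset N (r i) v)]
  exact hB.green_sub_green_truncSquare_le hr hv hi

lemma greenForm_truncCoeff_congr (hB : IsBoundaryLayer N M r j m B)
    (hA : IsAnchorSet N r j m A) (hm : 0 < m) (sigv : ℕ → ℝ) (hv : v ∈ B) (hw : w ∈ B)
    (ha : a ∈ A) (hb : b ∈ A) (hab : a = b ↔ cell m v = cell m w) :
    greenForm (innerBox N) (truncCoeff N M sigv r m 0 v) (truncCoeff N M sigv r m 0 w) =
      greenForm (innerBox N) (truncCoeff N M sigv r m (cellShift m v a) v)
        (truncCoeff N M sigv r m (cellShift m w b) w) := by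
  simp only [truncCoeff, zero_vadd, zero_add, map_sum, map_smul, LinearMap.sum_apply,
    LinearMap.smul_apply]
  refine Finset.sum_congr rfl fun k _ => congrArg _ (Finset.sum_congr rfl fun i _ => ?_)
  congr 1
  have hT : truncSquare N m (r k) w ⊆ innerBox N :=
    (truncSquare_subset_block N m (r k) w).trans (block_subset N m _)
  have hbT := Finset.vadd_finset_subset_vadd_finset (a := cellShift m w b)
    (truncSquare_subset_block N m (r k) w)
  have haT := Finset.vadd_finset_subset_vadd_finset (a := cellShift m v a)
    (truncSquare_subset_block N m (r i) v)
  have hbD := hbT.trans (hA.cellShift_vadd_block_subset w hb)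
  by_cases hvw : cell m v = cell m w
  · have hshift : cellShift m v a = cellShift m w b := by
      rw [cellShift, cellShift, hvw, hab.2 hvw]
    rw [hshift, greenForm_localCoeff_vadd hT hbD]
  · rw [greenForm_localCoeff_of_separated hT ((hB.separated_block hm hv hw hvw).mono
        (truncSquare_subset_block N m (r i) v) (truncSquare_subset_block N m (r k) w)),
      greenForm_localCoeff_of_separated hbD
        ((hA.separated_block v w ha hb (hab.not.2 hvw)).mono haT hbT)]

lemma greenForm_innerSquare_eq_truncSquare (hB : IsBoundaryLayer N M r j m B)
    (hA : IsAnchorSet N r j m A) (hr : IsMeshAt N M r j m) (hv : v ∈ B) (ha : a ∈ A) (hb : b ∈ A)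
    (hab : a = b → cell m v = cell m w) {i : ℕ} (hi : i < M) {T : Finset Vtx}
    (hT : T ⊆ cellShift m w b +ᵥ block N m (cell m w)) (z : Vtx) :
    greenForm (innerBox N) (localCoeff (innerSquare N (r i) (cellShift m v a + v))
        (cellShift m v a + v)) (localCoeff T z) =
      greenForm (innerBox N) (localCoeff (cellShift m v a +ᵥ truncSquare N m (r i) v)
        (cellShift m v a + v)) (localCoeff T z) := by
  obtain hij | hij := le_or_gt i j
  · have hTD := hT.trans (hA.cellShift_vadd_block_subset w hb)
    rw [hr.truncSquare_of_le v hij,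
      greenForm_localCoeff_eq_green hTD (hA.subset_or_separated hr v w ha hb hij hT),
      greenForm_localCoeff_eq_green hTD]
    by_cases h : a = b
    · left
      rwa [show cellShift m v a = cellShift m w b by rw [cellShift, cellShift, hab h, h], hab h]
    · exact .inr ⟨(hA.separated_block v w ha hb h).mono subset_rfl hT,
        fun hmem => hA.cellShift_add_notMem hr.pos v w ha hb h (hT hmem)⟩
  · rw [hA.innerSquare_cellShift hB hr hv ha hij hi, hr.truncSquare_of_lt v hij hi]

lemma greenForm_truncCoeff_psiCoeff_sub (hB : IsBoundaryLayer N M r j m B)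
    (hA : IsAnchorSet N r j m A) (hr : IsMeshAt N M r j m) (sigv : ℕ → ℝ) (hv : v ∈ B)
    (ha : a ∈ A) (hb : b ∈ A) (hab : a = b → cell m v = cell m w) :
    greenForm (innerBox N) (truncCoeff N M sigv r m (cellShift m w b) w)
      (psiCoeff N M sigv r (cellShift m v a + v) -
        truncCoeff N M sigv r m (cellShift m v a) v) = 0 := by
  rw [greenForm_comm]
  simp only [psiCoeff, truncCoeff, ← Finset.sum_sub_distrib, ← smul_sub, map_sum, map_smul,
    LinearMap.sum_apply, LinearMap.smul_apply]
  refine Finset.sum_eq_zero fun k _ => ?_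
  rw [Finset.sum_eq_zero, smul_zero]
  intro i hi
  rw [map_sub, LinearMap.sub_apply, greenForm_innerSquare_eq_truncSquare hB hA hr hv ha hb hab
    (Finset.mem_range.1 hi) (Finset.vadd_finset_subset_vadd_finset
      (truncSquare_subset_block N m (r k) w)), sub_self, smul_zero]

end Covariances

section Comparison

variable {N M j K : ℕ} {r : ℕ → ℤ} {m : ℤ} {B A : Finset Vtx} {μ : Measure FieldSp}

lemma meanLse_truncCoeff_le (hB : IsBoundaryLayer N M r j m B) (hA : IsAnchorSet N r j m A)
    (hr : IsMeshAt N M r j m) (h : IsIsonormal (fieldPairing N) (greenForm (innerBox N)) μ)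
    (sigv : ℕ → ℝ) {a : Vtx → Vtx} (ha : ∀ p ∈ B.image (cell m), a p ∈ A)
    (hinj : Set.InjOn a (B.image (cell m))) :
    meanLse (fieldPairing N) μ (fun v : B => truncCoeff N M sigv r m 0 v) ≤
      meanLse (fieldPairing N) μ
        fun v : B => psiCoeff N M sigv r (cellShift m v (a (cell m v)) + v) := by
  have hcell (v : B) : cell m v ∈ B.image (cell m) := Finset.mem_image_of_mem _ v.2
  obtain hempty | hne := isEmpty_or_nonempty B
  · exact (congrArg _ (Subsingleton.elim _ _)).le
  calc _ = meanLse (fieldPairing N) μ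
          fun v : B => truncCoeff N M sigv r m (cellShift m v (a (cell m v))) v :=
        h.meanLse_congr fun v w => greenForm_truncCoeff_congr hB hA hr.pos sigv v.2 w.2
          (ha _ (hcell v)) (ha _ (hcell w)) (hinj.eq_iff (hcell v) (hcell w))
    _ ≤ _ := h.meanLse_le_meanLse_add fun w v => greenForm_truncCoeff_psiCoeff_sub hB hA hr sigv
          v.2 (ha _ (hcell v)) (ha _ (hcell w)) (hinj (hcell v) (hcell w))
    _ = _ := congrArg _ (funext fun v => add_sub_cancel _ _)

lemma exists_anchor_assignment {α : Type*} {C A : Finset α}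
    (hcard : K * C.card ≤ A.card) :
    ∃ a : Fin K → α → α, (∀ k, ∀ p ∈ C, a k p ∈ A) ∧
      ∀ k l, ∀ p ∈ C, ∀ q ∈ C, a k p = a l q → k = l ∧ p = q := by
  obtain ⟨e⟩ : Nonempty (Fin K × C ↪ A) :=
    Function.Embedding.nonempty_of_card_le (by simpa using hcard)
  refine ⟨fun k p => if hp : p ∈ C then e (k, ⟨p, hp⟩) else p, fun k p hp => ?_,
    fun k l p hp q hq heq => ?_⟩
  · simp only [dif_pos hp, Finset.coe_mem]
  · simp only [dif_pos hp, dif_pos hq] at heq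
    simpa using e.injective (Subtype.ext heq)

lemma IsAnchorSet.eq_and_eq_of_cellShift_add_eq (hA : IsAnchorSet N r j m A) (hm : 0 < m)
    {v w a b : Vtx} (ha : a ∈ A) (hb : b ∈ A) (hab : a = b → cell m v = cell m w)
    (heq : cellShift m v a + v = cellShift m w b + w) : a = b ∧ v = w := by
  have hanchor : a = b := by
    by_contra hne
    have hv := cellShift_add_le_lt hm v a
    have hw := cellShift_add_le_lt hm w b
    have hfar := hA.far a ha b hb hne
    rw [heq] at hv
    simp only [le_abs] at hfar
    omega
  refine ⟨hanchor, ?_⟩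
  rw [cellShift, cellShift, hanchor, hab hanchor] at heq
  exact add_left_cancel heq

theorem meanLse_psiCoeff_add_log_le (hB : IsBoundaryLayer N M r j m B)
    (hA : IsAnchorSet N r j m A) (hr : IsMeshAt N M r j m)
    (h : IsIsonormal (fieldPairing N) (greenForm (innerBox N)) μ) (sigv : ℕ → ℝ) {t : ℝ}
    (ht : 0 < t) (hne : B.Nonempty) (hK : 1 ≤ K) (hcard : K * (B.image (cell m)).card ≤ A.card) :
    meanLse (fieldPairing N) μ (fun v : B => psiCoeff N M sigv r v) + Real.log K ≤
      meanLse (fieldPairing N) μ (fun v : VN N => psiCoeff N M sigv r v) +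
        (Real.log B.card + t ^ 2 * (jumpBound M sigv * 17) / 2) / t := by
  obtain ⟨a, haA, hinj⟩ := exists_anchor_assignment hcard
  have : Nonempty B := hne.to_subtype
  have : Nonempty (Fin K) := ⟨⟨0, hK⟩⟩
  have hcell (v : B) : cell m v ∈ B.image (cell m) := Finset.mem_image_of_mem _ v.2
  have hmem (k : Fin K) (v : B) : cellShift m v (a k (cell m v)) + v ∈ VN N := by
    have := cellShift_add_le_lt hr.pos v (a k (cell m v))
    have := hA.mem_box _ (haA k _ (hcell v))
    rw [mem_VN]
    omega
  let τ (k : Fin K) (v : B) : VN N := ⟨_, hmem k v⟩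
  have hτ : Function.Injective (Function.uncurry τ) := fun ⟨k, v⟩ ⟨l, w⟩ heq => by
    obtain ⟨hanchor, hvw⟩ := hA.eq_and_eq_of_cellShift_add_eq hr.pos (haA k _ (hcell v))
      (haA l _ (hcell w)) (fun heq => (hinj k l _ (hcell v) _ (hcell w) heq).2)
      (congrArg Subtype.val heq)
    exact Prod.ext (hinj k l _ (hcell v) _ (hcell w) hanchor).1 (Subtype.ext hvw)
  have htrunc := h.meanLse_le_add ht fun v : B =>
    hB.greenForm_psiCoeff_sub_truncCoeff_le hr sigv v.2
  have hcopies := h.log_card_add_le_meanLse hτ (c := fun v => psiCoeff N M sigv r v) fun k =>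
    meanLse_truncCoeff_le hB hA hr h sigv (haA k) fun p hp q hq heq => (hinj k k p hp q hq heq).2
  rw [Fintype.card_coe] at htrunc
  rw [Fintype.card_fin] at hcopies
  linarith

end Comparison

section Anchors

variable {N j : ℕ} {m : ℤ} {r : ℕ → ℤ}

lemma exists_subset_card_le_mul_of_mapsTo {α γ : Type*} {A : Finset α} {T : Finset γ} {f : α → γ}
    (hf : ∀ a ∈ A, f a ∈ T) :
    ∃ A' ⊆ A, A.card ≤ T.card * A'.card ∧ ∀ a ∈ A', ∀ b ∈ A', f a = f b := by
  obtain rfl | ⟨a, ha⟩ := A.eq_empty_or_nonempty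
  · exact ⟨∅, subset_rfl, by simp⟩
  obtain ⟨y, -, hmax⟩ :=
    Finset.exists_max_image T (fun y => (A.filter fun a => f a = y).card) ⟨_, hf a ha⟩
  refine ⟨A.filter fun a => f a = y, Finset.filter_subset _ _, ?_, fun a ha b hb =>
    (Finset.mem_filter.1 ha).2.trans (Finset.mem_filter.1 hb).2.symm⟩
  rw [mul_comm]
  exact Finset.card_le_mul_card_image_of_maps_to hf _ hmax

lemma abs_sub_lt_or_le_of_ediv_modEq {w n x y : ℤ} (hw : 0 < w) (h : x / w ≡ y / w [ZMOD n]) :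
    |x - y| < w ∨ (n - 1) * w ≤ |x - y| := by
  have hx := Int.mul_ediv_add_emod x w
  have hy := Int.mul_ediv_add_emod y w
  have := Int.emod_nonneg x hw.ne'
  have := Int.emod_nonneg y hw.ne'
  have := Int.emod_lt_of_pos x hw
  have := Int.emod_lt_of_pos y hw
  rw [abs_sub_comm, abs_lt, le_abs]
  by_cases hlt : |y / w - x / w| < n
  · have heq : y / w = x / w := sub_eq_zero.1 (Int.eq_zero_of_abs_lt_dvd h.dvd hlt)
    rw [heq] at hy
    left
    omega
  · obtain hle | hle := le_abs.1 (not_lt.1 hlt) <;> have := mul_le_mul_of_nonneg_left hle hw.le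
    · right; left
      linarith
    · right; right
      linarith

lemma exists_grid (hm : 0 < m) {k : ℕ} (hk : 4 * m * k ≤ N) :
    ∃ A : Finset Vtx, A.card = k * k ∧
      (∀ a ∈ A, m + 1 ≤ a.1 ∧ a.1 + 2 * m ≤ N ∧ m + 1 ≤ a.2 ∧ a.2 + 2 * m ≤ N) ∧
      ∀ a ∈ A, ∀ b ∈ A, a ≠ b → 4 * m ≤ |a.1 - b.1| ∨ 4 * m ≤ |a.2 - b.2| := by
  set e : ℕ → ℤ := fun x => 4 * (m * x) + m + 1 with he
  have hgap {x y : ℕ} (hxy : x ≠ y) : 4 * m ≤ |e x - e y| := by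
    have hone : (1 : ℤ) ≤ |(x : ℤ) - y| := Int.one_le_abs (sub_ne_zero.2 (by exact_mod_cast hxy))
    calc 4 * m ≤ 4 * m * |(x : ℤ) - y| := le_mul_of_one_le_right (by omega) hone
      _ = |e x - e y| := by rw [← abs_of_pos (by omega : 0 < 4 * m), ← abs_mul, he]; ring_nf
  have hinj : Function.Injective e := fun x y hxy => by
    by_contra hne
    have := hgap hne
    rw [hxy, sub_self, abs_zero] at this
    omega
  have hbound {x : ℕ} (hx : x < k) : m + 1 ≤ e x ∧ e x + 2 * m ≤ N := by
    have := mul_le_mul_of_nonneg_left (by exact_mod_cast hx : (x : ℤ) + 1 ≤ k) hm.le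
    have := mul_nonneg hm.le x.cast_nonneg
    constructor <;> linarith
  refine ⟨(Finset.range k).image e ×ˢ (Finset.range k).image e, ?_, ?_, ?_⟩
  · rw [Finset.card_product, Finset.card_image_of_injective _ hinj, Finset.card_range]
  · intro a ha
    simp only [Finset.mem_product, Finset.mem_image, Finset.mem_range] at ha
    obtain ⟨⟨x, hx, hax⟩, y, hy, hay⟩ := ha
    rw [← hax, ← hay, ← and_assoc]
    exact ⟨hbound hx, hbound hy⟩
  · intro a ha b hb hab
    simp only [Finset.mem_product, Finset.mem_image, Finset.mem_range] at ha hb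
    obtain ⟨⟨x, -, hax⟩, y, -, hay⟩ := ha
    obtain ⟨⟨x', -, hbx⟩, y', -, hby⟩ := hb
    rw [← hax, ← hay, ← hbx, ← hby]
    by_cases hx : x = x'
    · refine .inr (hgap fun hy => hab ?_)
      rw [← Prod.mk.eta (p := a), ← Prod.mk.eta (p := b), ← hax, ← hay, ← hbx, ← hby, hx, hy]
    · exact .inl (hgap hx)

lemma exists_subset_near_or_far (hm : 2 ≤ m) (A : Finset Vtx) (hr : ∀ i ≤ j, 4 * m ≤ r i) :
    ∃ A' ⊆ A, A.card ≤ 64 ^ j * A'.card ∧ ∀ a ∈ A', ∀ b ∈ A', ∀ i, 1 ≤ i → i ≤ j →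
      (|a.1 - b.1| + 2 * m ≤ r i ∧ |a.2 - b.2| + 2 * m ≤ r i) ∨
        (r i + 4 * m ≤ |a.1 - b.1| ∨ r i + 4 * m ≤ |a.2 - b.2|) := by
  induction j with
  | zero => exact ⟨A, subset_rfl, by simp, fun _ _ _ _ i hi hij => by omega⟩
  | succ j ih =>
    obtain ⟨A₁, hA₁, hcard₁, hsep₁⟩ := ih fun i hi => hr i (by omega)
    let w := r (j + 1) / 2
    obtain ⟨A₂, hA₂, hcard₂, hcolour⟩ := exists_subset_card_le_mul_of_mapsTo (A := A₁)
      (T := Finset.Ico (0 : ℤ) 8 ×ˢ Finset.Ico (0 : ℤ) 8)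
      (f := fun x => (x.1 / w % 8, x.2 / w % 8)) fun a _ => by
        rw [Finset.mem_product, Finset.mem_Ico, Finset.mem_Ico]
        dsimp only
        omega
    refine ⟨A₂, hA₂.trans hA₁, ?_, fun a ha b hb i hi hij => ?_⟩
    · calc A.card ≤ 64 ^ j * A₁.card := hcard₁
        _ ≤ 64 ^ j * (64 * A₂.card) := Nat.mul_le_mul_left _ hcard₂
        _ = 64 ^ (j + 1) * A₂.card := by ring
    · obtain hlt | rfl := Nat.lt_succ_iff_lt_or_eq.1 (Nat.lt_succ_of_le hij)
      · exact hsep₁ a (hA₂ ha) b (hA₂ hb) i hi (Nat.lt_succ_iff.1 hlt)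
      · have := hr (j + 1) le_rfl
        obtain ⟨hfst, hsnd⟩ := Prod.mk.inj (hcolour a ha b hb)
        have := abs_sub_lt_or_le_of_ediv_modEq (by omega) hfst
        have := abs_sub_lt_or_le_of_ediv_modEq (by omega) hsnd
        omega

lemma card_image_cell_le (hm : 0 < m) {k : ℕ} (hk : (N : ℤ) / m = k) {B : Finset Vtx}
    (hB : B ⊆ VN N) (hdepth : ∀ v ∈ B, depth N v < 8 * m) :
    (B.image (cell m)).card ≤ 34 * (k + 1) := by
  set F : Finset ℤ := Finset.Icc 0 k with hF
  set E : Finset ℤ := Finset.Icc 0 7 ∪ Finset.Icc (k - 8) k with hE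
  have hEcard : E.card ≤ 17 := (Finset.card_union_le _ _).trans (by simp)
  have hFcard : F.card = k + 1 := by simp [hF]
  have hmemF {x : ℤ} (hx : 0 ≤ x) (hxN : x ≤ N) : x / m ∈ F :=
    Finset.mem_Icc.2 ⟨Int.ediv_nonneg hx hm.le, hk ▸ Int.ediv_le_ediv hm hxN⟩
  have hmemE {x : ℤ} (hx : 0 ≤ x) (hxN : x ≤ N) (hnear : x < 8 * m ∨ N - x < 8 * m) :
      x / m ∈ E := by
    have hmem := Finset.mem_Icc.1 (hmemF hx hxN)
    rw [hE, Finset.mem_union, Finset.mem_Icc, Finset.mem_Icc]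
    obtain hlow | hhigh := hnear
    · have := Int.ediv_lt_of_lt_mul hm hlow
      omega
    · have hle : ((N : ℤ) + (-8) * m) / m ≤ x / m := Int.ediv_le_ediv hm (by omega)
      rw [Int.add_mul_ediv_right _ _ hm.ne', hk] at hle
      omega
  have hsub : B.image (cell m) ⊆ E ×ˢ F ∪ F ×ˢ E := by
    refine Finset.image_subset_iff.2 fun v hv => ?_
    have hbox := mem_VN.1 (hB hv)
    have hd := hdepth v hv
    simp only [depth, min_lt_iff] at hd
    simp only [cell, Finset.mem_union, Finset.mem_product]
    exact hd.imp (fun h => ⟨hmemE hbox.1 hbox.2.1 h, hmemF hbox.2.2.1 hbox.2.2.2⟩)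
      fun h => ⟨hmemF hbox.1 hbox.2.1, hmemE hbox.2.2.1 hbox.2.2.2 h⟩
  calc (B.image (cell m)).card ≤ (E ×ˢ F).card + (F ×ˢ E).card :=
        (Finset.card_le_card hsub).trans (Finset.card_union_le _ _)
    _ = 2 * (E.card * F.card) := by rw [Finset.card_product, Finset.card_product]; ring
    _ ≤ 2 * (17 * (k + 1)) := by rw [hFcard]; gcongr
    _ = 34 * (k + 1) := by ring

lemma exists_isAnchorSet (hm : 2 ≤ m) (hr : ∀ i ≤ j, 4 * m ≤ r i) {K : ℕ} (hK : 1 ≤ K)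
    (hKN : 1088 * 64 ^ j * K * m ≤ N) :
    ∃ A, IsAnchorSet N r j m A ∧ ∀ B ⊆ VN N, (∀ v ∈ B, depth N v < 8 * m) →
      K * (B.image (cell m)).card ≤ A.card := by
  obtain ⟨k, hk⟩ := Int.eq_ofNat_of_zero_le (Int.ediv_nonneg N.cast_nonneg (by omega : 0 ≤ 4 * m))
  obtain ⟨l, hl⟩ := Int.eq_ofNat_of_zero_le (Int.ediv_nonneg N.cast_nonneg (by omega : 0 ≤ m))
  have hKk : 272 * 64 ^ j * K ≤ k := by
    have : (272 * 64 ^ j * K : ℤ) ≤ N / (4 * m) := by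
      rw [Int.le_ediv_iff_mul_le (by omega)]
      linarith
    exact_mod_cast hk ▸ this
  have hlk : l + 1 ≤ 8 * k := by
    have hk1 : 1 ≤ k := hKk.trans' (Nat.one_le_iff_ne_zero.2 (by positivity))
    have hlt : (l : ℤ) < 4 * k + 4 := by
      have := Int.lt_mul_ediv_self_add (x := N) (by omega : 0 < 4 * m)
      have := Int.mul_ediv_self_le (x := N) (by omega : m ≠ 0)
      rw [hk] at *
      rw [hl] at *
      exact lt_of_mul_lt_mul_left (by linarith) (by omega : 0 ≤ m)
    omega
  obtain ⟨A, hAcard, hAbox, hAfar⟩ := exists_grid (by omega) (hk ▸ Int.mul_ediv_self_le (by omega))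
  obtain ⟨A', hA', hcard, hnear⟩ := exists_subset_near_or_far hm A hr
  refine ⟨A', ⟨fun a ha => hAbox a (hA' ha), fun a ha b hb => hAfar a (hA' ha) b (hA' hb), hnear⟩,
    fun B hB hdepth => Nat.le_of_mul_le_mul_left ?_ (by positivity : 0 < 64 ^ j)⟩
  calc 64 ^ j * (K * (B.image (cell m)).card)
      ≤ 64 ^ j * (K * (34 * (8 * k))) := by
        gcongr
        exact (card_image_cell_le (by omega) hl hB hdepth).trans (by gcongr)
    _ = (272 * 64 ^ j * K) * k := by ring
    _ ≤ k * k := by gcongr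
    _ = A.card := hAcard.symm
    _ ≤ 64 ^ j * A'.card := hcard

end Anchors

section ScaleRadius

variable {N : ℕ} {a b : ℝ}

lemma scaleRadius_of_mem_Ioo (N : ℕ) (ha : a ∈ Set.Ioo 0 1) :
    scaleRadius N a = ⌊(N : ℝ) ^ (1 - a) / 2⌋ := by
  rw [scaleRadius, if_neg ha.1.ne', if_neg ha.2.ne]

lemma scaleRadius_antitoneOn (hN : 1 ≤ N) : AntitoneOn (scaleRadius N) (Set.Icc 0 1) := by
  have hN' : (1 : ℝ) ≤ N := by exact_mod_cast hN
  intro a ha b hb hab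
  obtain rfl | hb1 := eq_or_lt_of_le hb.2
  · have hnonneg : 0 ≤ ⌊(N : ℝ) ^ (1 - a) / 2⌋ := Int.floor_nonneg.2 (by positivity)
    simp only [scaleRadius, one_ne_zero, if_false, if_true]
    split_ifs <;> omega
  obtain rfl | hb0 := eq_or_lt_of_le hb.1
  · rw [le_antisymm hab ha.1]
  rw [scaleRadius_of_mem_Ioo N ⟨hb0, hb1⟩]
  obtain rfl | ha0 := eq_or_lt_of_le ha.1
  · have hle : (N : ℝ) ^ (1 - b) ≤ N := Real.rpow_le_self_of_one_le hN' (by linarith)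
    rw [scaleRadius, if_pos rfl, Int.floor_le_iff]
    push_cast
    linarith
  · rw [scaleRadius_of_mem_Ioo N ⟨ha0, hab.trans_lt hb1⟩]
    gcongr

lemma four_mul_scaleRadius_le (hN : 1 ≤ N) (ha : a ∈ Set.Ioo 0 1) (hb : b ∈ Set.Ioo 0 1)
    (hab : 4 ≤ (N : ℝ) ^ (b - a)) : 4 * scaleRadius N b ≤ scaleRadius N a := by
  rw [scaleRadius_of_mem_Ioo N ha, scaleRadius_of_mem_Ioo N hb, Int.le_floor]
  push_cast
  calc (4 : ℝ) * ⌊(N : ℝ) ^ (1 - b) / 2⌋ ≤ 4 * ((N : ℝ) ^ (1 - b) / 2) := by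
        gcongr
        exact Int.floor_le _
    _ ≤ (N : ℝ) ^ (b - a) * ((N : ℝ) ^ (1 - b) / 2) := by gcongr
    _ = (N : ℝ) ^ (1 - a) / 2 := by
        rw [← mul_div_assoc, ← Real.rpow_add (by exact_mod_cast hN), sub_add_sub_cancel']

end ScaleRadius

section BoundaryLayers

variable {N M j : ℕ} {lamv : ℕ → ℝ} {ρ : ℝ}

/-- The scales `0 = λ_0 < λ_1 < ⋯ < λ_M = 1`. -/
structure IsScaleSequence (M : ℕ) (lamv : ℕ → ℝ) : Prop where
  zero : lamv 0 = 0
  last : lamv M = 1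
  strictMonoOn : StrictMonoOn lamv (Set.Iic M)

/-- The scales `ρ < λ_1 < ⋯ < λ_M = 1` whose radii cut the neighbourhood of `∂V_N` into layers. -/
def boundaryScale (lamv : ℕ → ℝ) (ρ : ℝ) : ℕ → ℝ := Function.update lamv 0 ρ

/-- The mesh size of the `j`-th layer. -/
def layerMesh (N : ℕ) (lamv : ℕ → ℝ) (ρ : ℝ) (j : ℕ) : ℤ :=
  scaleRadius N (boundaryScale lamv ρ j) / 4

/-- The vertices of the `j`-th layer around `∂V_N` whose cells have an index congruent to `p`
modulo `4`. -/
def boundaryLayer (N : ℕ) (lamv : ℕ → ℝ) (ρ : ℝ) (j : ℕ) (p : Vtx) : Finset Vtx :=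
  (VN N).filter fun v =>
    (scaleRadius N (lamv (j + 1)) ≤ depth N v ∧
      depth N v < scaleRadius N (boundaryScale lamv ρ j)) ∧
    (cell (layerMesh N lamv ρ j) v).1 % 4 = p.1 ∧ (cell (layerMesh N lamv ρ j) v).2 % 4 = p.2

/-- `N` is so large that consecutive boundary scales are well separated. -/
structure IsLargeForScales (N M : ℕ) (lamv : ℕ → ℝ) (ρ : ℝ) : Prop where
  one_le : 1 ≤ N
  le_rpow_sub : ∀ j < M, 16 ≤ (N : ℝ) ^ (boundaryScale lamv ρ (j + 1) - boundaryScale lamv ρ j)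
  le_rpow : 272 * 64 ^ M ≤ (N : ℝ) ^ (ρ / 2)

lemma boundaryScale_zero (lamv : ℕ → ℝ) (ρ : ℝ) : boundaryScale lamv ρ 0 = ρ :=
  Function.update_self ..

lemma boundaryScale_succ (lamv : ℕ → ℝ) (ρ : ℝ) (j : ℕ) :
    boundaryScale lamv ρ (j + 1) = lamv (j + 1) :=
  Function.update_of_ne j.succ_ne_zero ..

namespace IsScaleSequence

lemma ne_zero (h : IsScaleSequence M lamv) : M ≠ 0 := by
  rintro rfl
  exact zero_ne_one (h.zero.symm.trans h.last)

lemma le_of_le (h : IsScaleSequence M lamv) {i k : ℕ} (hik : i ≤ k) (hk : k ≤ M) :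
    lamv i ≤ lamv k :=
  h.strictMonoOn.monotoneOn (hik.trans hk) hk hik

lemma mem_Icc (h : IsScaleSequence M lamv) {i : ℕ} (hi : i ≤ M) : lamv i ∈ Set.Icc 0 1 :=
  ⟨h.zero ▸ h.le_of_le i.zero_le hi, h.last ▸ h.le_of_le hi le_rfl⟩

lemma boundaryScale_lt (h : IsScaleSequence M lamv) (hρ1 : ρ < lamv 1) {i k : ℕ} (hik : i < k)
    (hk : k ≤ M) : boundaryScale lamv ρ i < boundaryScale lamv ρ k := by
  obtain ⟨k, rfl⟩ := Nat.exists_eq_add_one_of_ne_zero (Nat.ne_zero_of_lt hik)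
  rw [boundaryScale_succ]
  obtain _ | i := i
  · rw [boundaryScale_zero]
    exact hρ1.trans_le (h.le_of_le (Nat.le_add_left 1 k) hk)
  · rw [boundaryScale_succ]
    exact h.strictMonoOn (hik.le.trans hk) hk hik

lemma boundaryScale_le (h : IsScaleSequence M lamv) (hρ1 : ρ < lamv 1) {i k : ℕ} (hik : i ≤ k)
    (hk : k ≤ M) : boundaryScale lamv ρ i ≤ boundaryScale lamv ρ k := by
  obtain rfl | hlt := eq_or_lt_of_le hik
  · exact le_rfl
  · exact (h.boundaryScale_lt hρ1 hlt hk).le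

lemma boundaryScale_mem_Ioo (h : IsScaleSequence M lamv) (hρ0 : 0 < ρ) (hρ1 : ρ < lamv 1)
    (hj : j < M) : boundaryScale lamv ρ j ∈ Set.Ioo 0 1 := by
  constructor
  · refine hρ0.trans_le ?_
    rw [← boundaryScale_zero lamv ρ]
    exact h.boundaryScale_le hρ1 j.zero_le hj.le
  · rw [← h.last, ← Function.update_of_ne h.ne_zero ρ lamv]
    exact h.boundaryScale_lt hρ1 hj le_rfl

lemma le_boundaryScale (h : IsScaleSequence M lamv) (hρ0 : 0 < ρ) (i : ℕ) :
    lamv i ≤ boundaryScale lamv ρ i := by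
  obtain _ | i := i
  · rw [h.zero, boundaryScale_zero]
    exact hρ0.le
  · rw [boundaryScale_succ]

lemma eventually_isLargeForScales (h : IsScaleSequence M lamv) (hρ0 : 0 < ρ) (hρ1 : ρ < lamv 1) :
    ∀ᶠ N : ℕ in atTop, IsLargeForScales N M lamv ρ := by
  have hrpow {x : ℝ} (hx : 0 < x) (C : ℝ) : ∀ᶠ N : ℕ in atTop, C ≤ (N : ℝ) ^ x :=
    ((tendsto_rpow_atTop hx).comp tendsto_natCast_atTop_atTop).eventually_ge_atTop C
  have hsub : ∀ᶠ N : ℕ in atTop, ∀ j ∈ Set.Iio M,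
      16 ≤ (N : ℝ) ^ (boundaryScale lamv ρ (j + 1) - boundaryScale lamv ρ j) :=
    (eventually_all_finite (Set.finite_Iio M)).2 fun j hj => hrpow
      (sub_pos.2 (h.boundaryScale_lt hρ1 j.lt_succ_self hj)) 16
  filter_upwards [eventually_ge_atTop 1, hsub, hrpow (half_pos hρ0) (272 * 64 ^ M)]
    with N hN hsub hρ using ⟨hN, hsub, hρ⟩

end IsScaleSequence

namespace IsLargeForScales

lemma eight_le_scaleRadius (hN : IsLargeForScales N M lamv ρ) (h : IsScaleSequence M lamv)
    (hρ0 : 0 < ρ) (hρ1 : ρ < lamv 1) (hj : j < M) :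
    8 ≤ scaleRadius N (boundaryScale lamv ρ j) := by
  have hone : (1 : ℝ) ≤ N := by exact_mod_cast hN.one_le
  have hle : boundaryScale lamv ρ (j + 1) ≤ 1 := by
    rw [boundaryScale_succ]
    exact (h.mem_Icc hj).2
  have hpow : (16 : ℝ) ≤ (N : ℝ) ^ (1 - boundaryScale lamv ρ j) :=
    (hN.le_rpow_sub j hj).trans (Real.rpow_le_rpow_of_exponent_le hone (by linarith))
  rw [scaleRadius_of_mem_Ioo N (h.boundaryScale_mem_Ioo hρ0 hρ1 hj), Int.le_floor]
  push_cast
  linarith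

lemma isMeshAt (hN : IsLargeForScales N M lamv ρ) (h : IsScaleSequence M lamv)
    (hρ0 : 0 < ρ) (hρ1 : ρ < lamv 1) (hj : j < M) :
    IsMeshAt N M (fun i => scaleRadius N (lamv i)) j (layerMesh N lamv ρ j) where
  pos := by
    have := hN.eight_le_scaleRadius h hρ0 hρ1 hj
    rw [layerMesh]
    omega
  radius_zero := by rw [h.zero, scaleRadius, if_pos rfl]
  le_radius i hi := by
    have hmem := h.boundaryScale_mem_Ioo hρ0 hρ1 hj
    have := scaleRadius_antitoneOn hN.one_le (h.mem_Icc (hi.trans hj.le))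
      (Set.Ioo_subset_Icc_self hmem) ((h.le_boundaryScale hρ0 i).trans
        (h.boundaryScale_le hρ1 hi hj.le))
    rw [layerMesh]
    omega
  radius_le i hji hiM := by
    have hle : scaleRadius N (lamv i) ≤ scaleRadius N (lamv (j + 1)) :=
      scaleRadius_antitoneOn hN.one_le (h.mem_Icc hj) (h.mem_Icc hiM.le) (h.le_of_le hji hiM.le)
    have hfour := four_mul_scaleRadius_le hN.one_le (h.boundaryScale_mem_Ioo hρ0 hρ1 hj)
      (h.boundaryScale_mem_Ioo hρ0 hρ1 (Nat.lt_of_le_of_lt hji hiM))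
      ((hN.le_rpow_sub j hj).trans' (by norm_num))
    rw [boundaryScale_succ] at hfour
    rw [layerMesh]
    omega

lemma isBoundaryLayer (hN : IsLargeForScales N M lamv ρ) (h : IsScaleSequence M lamv)
    (hρ0 : 0 < ρ) (hρ1 : ρ < lamv 1) (hj : j < M) (p : Vtx) :
    IsBoundaryLayer N M (fun i => scaleRadius N (lamv i)) j (layerMesh N lamv ρ j)
      (boundaryLayer N lamv ρ j p) where
  subset_VN := Finset.filter_subset _ _
  depth_lt v hv := by
    have := hN.eight_le_scaleRadius h hρ0 hρ1 hj
    have := (Finset.mem_filter.1 hv).2.1.2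
    rw [layerMesh]
    omega
  radius_le_depth v hv i hji hiM :=
    (scaleRadius_antitoneOn hN.one_le (h.mem_Icc hj) (h.mem_Icc hiM.le)
      (h.le_of_le hji hiM.le)).trans (Finset.mem_filter.1 hv).2.1.1
  four_dvd v hv w hw := by
    have := (Finset.mem_filter.1 hv).2.2
    have := (Finset.mem_filter.1 hw).2.2
    omega

lemma mul_layerMesh_le (hN : IsLargeForScales N M lamv ρ) (h : IsScaleSequence M lamv)
    (hρ0 : 0 < ρ) (hρ1 : ρ < lamv 1) (hj : j < M) :
    1088 * 64 ^ j * ⌈(N : ℝ) ^ (ρ / 2)⌉₊ * layerMesh N lamv ρ j ≤ N := by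
  have hone : (1 : ℝ) ≤ N := by exact_mod_cast hN.one_le
  have hpos : (0 : ℝ) < N := by linarith
  have hceil : (⌈(N : ℝ) ^ (ρ / 2)⌉₊ : ℝ) ≤ 2 * (N : ℝ) ^ (ρ / 2) := by
    linarith [Nat.ceil_lt_add_one (by positivity : 0 ≤ (N : ℝ) ^ (ρ / 2)),
      Real.one_le_rpow hone (half_pos hρ0).le]
  have hmesh : (layerMesh N lamv ρ j : ℝ) ≤ (N : ℝ) ^ (1 - ρ) / 8 := by
    have hmem := h.boundaryScale_mem_Ioo hρ0 hρ1 hj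
    have hquarter : 4 * layerMesh N lamv ρ j ≤ scaleRadius N (boundaryScale lamv ρ j) :=
      Int.mul_ediv_self_le (by norm_num)
    have hρ_le := h.boundaryScale_le hρ1 j.zero_le hj.le
    rw [boundaryScale_zero] at hρ_le
    rw [scaleRadius_of_mem_Ioo N hmem, Int.le_floor] at hquarter
    push_cast at hquarter
    linarith [Real.rpow_le_rpow_of_exponent_le hone
      (by linarith : 1 - boundaryScale lamv ρ j ≤ 1 - ρ)]
  have hgoal : (1088 * 64 ^ j * ⌈(N : ℝ) ^ (ρ / 2)⌉₊ * layerMesh N lamv ρ j : ℝ) ≤ N := by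
    calc (1088 * 64 ^ j * ⌈(N : ℝ) ^ (ρ / 2)⌉₊ * layerMesh N lamv ρ j : ℝ)
        ≤ 1088 * 64 ^ M * (2 * (N : ℝ) ^ (ρ / 2)) * ((N : ℝ) ^ (1 - ρ) / 8) := by
          have := (hN.isMeshAt h hρ0 hρ1 hj).pos
          gcongr
          norm_num
      _ = 272 * 64 ^ M * ((N : ℝ) ^ (ρ / 2) * (N : ℝ) ^ (1 - ρ)) := by ring
      _ ≤ (N : ℝ) ^ (ρ / 2) * ((N : ℝ) ^ (ρ / 2) * (N : ℝ) ^ (1 - ρ)) := by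
          gcongr
          exact hN.le_rpow
      _ = N := by
          rw [← Real.rpow_add hpos, ← Real.rpow_add hpos]
          ring_nf
          exact Real.rpow_one _
  exact_mod_cast hgoal

lemma exists_isAnchorSet (hN : IsLargeForScales N M lamv ρ) (h : IsScaleSequence M lamv)
    (hρ0 : 0 < ρ) (hρ1 : ρ < lamv 1) (hj : j < M) :
    ∃ A, IsAnchorSet N (fun i => scaleRadius N (lamv i)) j (layerMesh N lamv ρ j) A ∧
      ∀ p, ⌈(N : ℝ) ^ (ρ / 2)⌉₊ *
        ((boundaryLayer N lamv ρ j p).image (cell (layerMesh N lamv ρ j))).card ≤ A.card := by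
  have hpos : (0 : ℝ) < N := by exact_mod_cast hN.one_le
  have hm : 2 ≤ layerMesh N lamv ρ j := by
    have := hN.eight_le_scaleRadius h hρ0 hρ1 hj
    rw [layerMesh]
    omega
  obtain ⟨A, hA, hcard⟩ := _root_.exists_isAnchorSet hm (hN.isMeshAt h hρ0 hρ1 hj).le_radius
    (Nat.one_le_ceil_iff.2 (by positivity)) (hN.mul_layerMesh_le h hρ0 hρ1 hj)
  refine ⟨A, hA, fun p => ?_⟩
  have hB := hN.isBoundaryLayer h hρ0 hρ1 hj p
  exact hcard _ hB.subset_VN hB.depth_lt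

end IsLargeForScales

lemma exists_mem_boundaryLayer (h : IsScaleSequence M lamv) {v : Vtx} (hv : v ∈ VN N)
    (hdepth : depth N v < scaleRadius N ρ) :
    ∃ j < M, ∃ p ∈ Finset.Ico (0 : ℤ) 4 ×ˢ Finset.Ico (0 : ℤ) 4,
      v ∈ boundaryLayer N lamv ρ j p := by
  have hcross : ∃ j < M, depth N v < scaleRadius N (boundaryScale lamv ρ j) ∧
      scaleRadius N (boundaryScale lamv ρ (j + 1)) ≤ depth N v := by
    by_contra! hcon
    have hall : ∀ j ≤ M, depth N v < scaleRadius N (boundaryScale lamv ρ j) := fun j => by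
      induction j with
      | zero => exact fun _ => by rwa [boundaryScale_zero]
      | succ j ih => exact fun hj => hcon j hj (ih (Nat.le_of_succ_le hj))
    have hlast := hall M le_rfl
    rw [boundaryScale, Function.update_of_ne h.ne_zero, h.last] at hlast
    rw [mem_VN] at hv
    simp only [scaleRadius, one_ne_zero, if_false, if_true, depth] at hlast
    omega
  obtain ⟨j, hj, hlt, hle⟩ := hcross
  rw [boundaryScale_succ] at hle
  refine ⟨j, hj, ((cell (layerMesh N lamv ρ j) v).1 % 4, (cell (layerMesh N lamv ρ j) v).2 % 4),
    ?_, Finset.mem_filter.2 ⟨hv, ⟨hle, hlt⟩, rfl, rfl⟩⟩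
  rw [Finset.mem_product, Finset.mem_Ico, Finset.mem_Ico]
  dsimp only
  omega

lemma depth_add_one_le_of_notMem_AN {v : Vtx} (hv : v ∈ VN N) (hvA : v ∉ AN N ρ) :
    (depth N v : ℝ) + 1 ≤ (N : ℝ) ^ (1 - ρ) := by
  simp only [AN, Finset.mem_filter, hv, true_and, not_forall, not_le] at hvA
  obtain ⟨z, hz, hlt⟩ := hvA
  rw [mem_VN] at hv hz
  have hnonneg : (0 : ℝ) ≤ depth N v := by
    exact_mod_cast (by unfold depth; omega : 0 ≤ depth N v)
  have hcoord : depth N v + 1 ≤ |v.1 - z.1| ∨ depth N v + 1 ≤ |v.2 - z.2| := by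
    simp only [le_abs, depth]
    omega
  refine (Real.le_sqrt_of_sq_le ?_).trans hlt.le
  obtain hfst | hsnd := hcoord
  · have hle : (depth N v : ℝ) + 1 ≤ |(v.1 : ℝ) - z.1| := by exact_mod_cast hfst
    have := pow_le_pow_left₀ (by linarith) hle 2
    rw [sq_abs] at this
    linarith [sq_nonneg ((v.2 : ℝ) - z.2)]
  · have hle : (depth N v : ℝ) + 1 ≤ |(v.2 : ℝ) - z.2| := by exact_mod_cast hsnd
    have := pow_le_pow_left₀ (by linarith) hle 2
    rw [sq_abs] at this
    linarith [sq_nonneg ((v.1 : ℝ) - z.1)]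

lemma eventually_depth_lt_scaleRadius_of_notMem_AN (hρ : ρ ∈ Set.Ioo 0 1) :
    ∀ᶠ N : ℕ in atTop, ∀ v ∈ VN N, v ∉ AN N ρ → depth N v < scaleRadius N (ρ / 2) := by
  have htwo : ∀ᶠ N : ℕ in atTop, 2 ≤ (N : ℝ) ^ (ρ / 2) :=
    ((tendsto_rpow_atTop (half_pos hρ.1)).comp tendsto_natCast_atTop_atTop).eventually_ge_atTop 2
  filter_upwards [htwo, eventually_gt_atTop 0] with N htwo hN v hv hvA
  rw [scaleRadius_of_mem_Ioo N ⟨half_pos hρ.1, by linarith [hρ.1, hρ.2]⟩, ← Int.add_one_le_iff,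
    Int.le_floor]
  push_cast
  calc (depth N v : ℝ) + 1 ≤ (N : ℝ) ^ (1 - ρ) := depth_add_one_le_of_notMem_AN hv hvA
    _ ≤ (N : ℝ) ^ (ρ / 2) * (N : ℝ) ^ (1 - ρ) / 2 := by
        rw [le_div_iff₀ two_pos, mul_comm]
        gcongr
    _ = (N : ℝ) ^ (1 - ρ / 2) / 2 := by
        rw [← Real.rpow_add (by exact_mod_cast hN)]
        ring_nf

end BoundaryLayers

section MeanGap

variable {M : ℕ} {lamv : ℕ → ℝ} {ρ : ℝ}

lemma log_card_le_of_subset_VN {N : ℕ} (hN : 1 ≤ N) {B : Finset Vtx} (hB : B ⊆ VN N)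
    (hne : B.Nonempty) : Real.log B.card ≤ 2 * Real.log N + 2 := by
  have hcard : B.card ≤ (2 * N) ^ 2 := by
    refine (Finset.card_le_card hB).trans ?_
    rw [VN, Finset.card_Icc_prod]
    simp only [Int.card_Icc, sub_zero, Int.toNat_natCast_add_one, sq]
    gcongr <;> omega
  have hlog := Real.log_le_log (by exact_mod_cast hne.card_pos)
    (by exact_mod_cast hcard : (B.card : ℝ) ≤ (2 * N) ^ 2)
  rw [Real.log_pow, Real.log_mul two_ne_zero (by positivity)] at hlog
  push_cast at hlog
  linarith [Real.log_two_lt_d9]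

theorem eventually_meanLse_boundaryLayer_add_le (h : IsScaleSequence M lamv) (hρ0 : 0 < ρ)
    (hρ1 : ρ < lamv 1) (sigv : ℕ → ℝ) :
    ∀ᶠ N : ℕ in atTop, ∀ μ, IsIsonormal (fieldPairing N) (greenForm (innerBox N)) μ →
      ∀ j < M, ∀ p, (boundaryLayer N lamv ρ j p).Nonempty →
        meanLse (fieldPairing N) μ (fun v : boundaryLayer N lamv ρ j p =>
            psiCoeff N M sigv (fun i => scaleRadius N (lamv i)) v) + ρ / 4 * Real.log N ≤
          meanLse (fieldPairing N) μ
            fun v : VN N => psiCoeff N M sigv (fun i => scaleRadius N (lamv i)) v := by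
  set t : ℝ := 16 / ρ with ht
  have htpos : 0 < t := by positivity
  set C : ℝ := (2 + t ^ 2 * (jumpBound M sigv * 17) / 2) / t with hC
  have hlog : ∀ᶠ N : ℕ in atTop, C / (ρ / 8) ≤ Real.log N :=
    (Real.tendsto_log_atTop.comp tendsto_natCast_atTop_atTop).eventually_ge_atTop _
  filter_upwards [h.eventually_isLargeForScales hρ0 hρ1, hlog] with N hN hlogN μ hμ j hj p hne
  have hpos : (0 : ℝ) < N := by exact_mod_cast hN.one_le
  have hB := hN.isBoundaryLayer h hρ0 hρ1 hj p
  obtain ⟨A, hA, hcard⟩ := hN.exists_isAnchorSet h hρ0 hρ1 hj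
  have hcompare := meanLse_psiCoeff_add_log_le hB hA (hN.isMeshAt h hρ0 hρ1 hj) hμ sigv htpos hne
    (Nat.one_le_ceil_iff.2 (by positivity)) (hcard p)
  have hcopies : ρ / 2 * Real.log N ≤ Real.log ⌈(N : ℝ) ^ (ρ / 2)⌉₊ := by
    rw [← Real.log_rpow hpos]
    exact Real.log_le_log (by positivity) (Nat.le_ceil _)
  have herror : (Real.log (boundaryLayer N lamv ρ j p).card +
      t ^ 2 * (jumpBound M sigv * 17) / 2) / t ≤ ρ / 8 * Real.log N + C := by
    have hsplit : ρ / 8 * Real.log N = 2 * Real.log N / t := by rw [ht]; field_simp; ring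
    rw [hsplit, hC, ← add_div]
    refine div_le_div_of_nonneg_right ?_ htpos.le
    linarith [log_card_le_of_subset_VN hN.one_le hB.subset_VN hne]
  linarith [(div_le_iff₀' (by positivity)).1 hlogN]

end MeanGap

section ProductGibbs

variable {α ι : Type*} [Fintype ι] [DecidableEq ι] {V A B : Finset α} {w : α → ℝ} {C : ℝ}

/-- The share of the total weight of `V` carried by `B`; meant for `B ⊆ V`. -/
def gibbsMass (V B : Finset α) (w : α → ℝ) : ℝ := (∑ v ∈ B, w v) / ∑ v ∈ V, w v

/-- The average of `F` under the product, over the index set `ι`, of the Gibbs measure on `A` with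
weights `w`; one replica per index. -/
def gibbsAverage (A : Finset α) (w : α → ℝ) (F : (ι → α) → ℝ) : ℝ :=
  ∑ x ∈ Fintype.piFinset fun _ => A, (∏ i, w (x i) / ∑ u ∈ A, w u) * F x

lemma gibbsMass_nonneg (hw : ∀ v, 0 ≤ w v) : 0 ≤ gibbsMass V B w :=
  div_nonneg (Finset.sum_nonneg fun v _ => hw v) (Finset.sum_nonneg fun v _ => hw v)

lemma gibbsMass_le_one (hw : ∀ v, 0 ≤ w v) (hBV : B ⊆ V) : gibbsMass V B w ≤ 1 :=
  div_le_one_of_le₀ (Finset.sum_le_sum_of_subset_of_nonneg hBV fun v _ _ => hw v)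
    (Finset.sum_nonneg fun v _ => hw v)

lemma gibbsMass_sdiff [DecidableEq α] (hAV : A ⊆ V) (hV : ∑ v ∈ V, w v ≠ 0) :
    gibbsMass V A w = 1 - gibbsMass V (V \ A) w := by
  rw [eq_sub_iff_add_eq', gibbsMass, gibbsMass, ← add_div, Finset.sum_sdiff hAV, div_self hV]

lemma gibbsMass_le_sum [DecidableEq α] {κ : Type*} {T : Finset κ} {L : κ → Finset α}
    (hw : ∀ v, 0 ≤ w v) (hB : B ⊆ T.biUnion L) :
    gibbsMass V B w ≤ ∑ t ∈ T, gibbsMass V (L t) w := by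
  simp only [gibbsMass, ← Finset.sum_div]
  refine div_le_div_of_nonneg_right ?_ (Finset.sum_nonneg fun v _ => hw v)
  have hproj : B ⊆ (T.sigma L).image Sigma.snd := fun v hv => by
    simpa only [Finset.mem_image, Finset.mem_sigma, Sigma.exists, exists_and_right,
      exists_eq_right, Finset.mem_biUnion] using hB hv
  rw [← Finset.sum_sigma T L fun x => w x.2]
  exact (Finset.sum_le_sum_of_subset_of_nonneg hproj fun v _ _ => hw v).trans
    (Finset.sum_image_le_of_nonneg fun v _ => hw v)

lemma gibbsAverage_congr {w' : α → ℝ} (h : ∀ v ∈ A, w v = w' v) (F : (ι → α) → ℝ) :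
    gibbsAverage A w F = gibbsAverage A w' F := by
  simp only [gibbsAverage, Finset.sum_congr rfl h]
  refine Finset.sum_congr rfl fun x hx => ?_
  simp only [h _ (Fintype.mem_piFinset.1 hx _)]

lemma sum_piFinset_prod_div (A : Finset α) (w : α → ℝ) (Z : ℝ) :
    ∑ x ∈ Fintype.piFinset (fun _ : ι => A), ∏ i, w (x i) / Z =
      ((∑ v ∈ A, w v) / Z) ^ Fintype.card ι := by
  rw [← Finset.prod_univ_sum (fun _ => A) fun _ v => w v / Z, ← Finset.sum_div, Finset.prod_const,
    Finset.card_univ]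

lemma abs_sum_mul_le_mul_sum {κ : Type*} {S : Finset κ} {p F : κ → ℝ} (hp : ∀ x ∈ S, 0 ≤ p x)
    (hF : ∀ x, |F x| ≤ C) : |∑ x ∈ S, p x * F x| ≤ C * ∑ x ∈ S, p x := by
  rw [Finset.mul_sum]
  refine (Finset.abs_sum_le_sum_abs _ _).trans (Finset.sum_le_sum fun x hx => ?_)
  rw [abs_mul, abs_of_nonneg (hp x hx), mul_comm]
  exact mul_le_mul_of_nonneg_right (hF x) (hp x hx)

lemma abs_gibbsAverage_le (hw : ∀ v, 0 ≤ w v) (hC : 0 ≤ C) {F : (ι → α) → ℝ}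
    (hF : ∀ x, |F x| ≤ C) : |gibbsAverage A w F| ≤ C := by
  have hZ : 0 ≤ ∑ u ∈ A, w u := Finset.sum_nonneg fun u _ => hw u
  refine (abs_sum_mul_le_mul_sum (fun x _ => Finset.prod_nonneg fun i _ =>
    div_nonneg (hw _) hZ) hF).trans ?_
  rw [sum_piFinset_prod_div]
  exact mul_le_of_le_one_right hC (pow_le_one₀ (div_nonneg hZ hZ) (div_self_le_one _))

lemma abs_sum_mul_sub_sum_mul_le {κ : Type*} {S T : Finset κ} {p q F : κ → ℝ}
    (hTS : T ⊆ S) (hp : ∀ x ∈ S, 0 ≤ p x) (hpq : ∀ x ∈ T, p x ≤ q x) (hF : ∀ x, |F x| ≤ C) :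
    |∑ x ∈ S, p x * F x - ∑ x ∈ T, q x * F x| ≤
      C * (∑ x ∈ S, p x - ∑ x ∈ T, p x) + C * (∑ x ∈ T, q x - ∑ x ∈ T, p x) := by
  have houter := abs_sum_mul_le_mul_sum
    (fun x (hx : x ∈ S \ T) => hp x (Finset.sdiff_subset hx)) hF
  have hinner := abs_sum_mul_le_mul_sum (fun x hx => sub_nonneg.2 (hpq x hx)) hF
  simp only [sub_mul, Finset.sum_sub_distrib, Finset.sum_sdiff_eq_sub hTS] at houter hinner
  rw [← sub_sub_sub_cancel_right _ _ (∑ x ∈ T, p x * F x)]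
  exact (abs_sub _ _).trans (add_le_add houter hinner)

lemma one_sub_one_sub_pow_le {m : ℝ} (hm : m ≤ 1) (n : ℕ) : 1 - (1 - m) ^ n ≤ n * m := by
  have := one_add_mul_le_pow (show (-2 : ℝ) ≤ -m by linarith) n
  rw [← sub_eq_add_neg] at this
  linarith

theorem abs_gibbsAverage_sub_le [DecidableEq α] (hAV : A ⊆ V) (hV : V.Nonempty)
    (hw : ∀ v, 0 < w v) (hC : 0 ≤ C) {F : (ι → α) → ℝ} (hF : ∀ x, |F x| ≤ C) :
    |gibbsAverage V w F - gibbsAverage A w F| ≤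
      2 * C * Fintype.card ι * gibbsMass V (V \ A) w := by
  have hZ : 0 < ∑ u ∈ V, w u := Finset.sum_pos (fun v _ => hw v) hV
  have hZA : 0 ≤ ∑ u ∈ A, w u := Finset.sum_nonneg fun u _ => (hw u).le
  set m := gibbsMass V (V \ A) w
  set n := Fintype.card ι
  have hm : m ≤ 1 := gibbsMass_le_one (fun v => (hw v).le) Finset.sdiff_subset
  have hcompare := abs_sum_mul_sub_sum_mul_le
    (p := fun x => ∏ i, w (x i) / ∑ u ∈ V, w u) (q := fun x => ∏ i, w (x i) / ∑ u ∈ A, w u)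
    (Fintype.piFinset_subset (fun _ : ι => A) (fun _ => V) fun _ => hAV)
    (fun x _ => Finset.prod_nonneg fun i _ => (div_pos (hw (x i)) hZ).le)
    (fun x hx => Finset.prod_le_prod (fun i _ => (div_pos (hw (x i)) hZ).le) fun i _ =>
      div_le_div_of_nonneg_left (hw (x i)).le
        (Finset.sum_pos (fun v _ => hw v) ⟨_, Fintype.mem_piFinset.1 hx i⟩)
        (Finset.sum_le_sum_of_subset_of_nonneg hAV fun v _ _ => (hw v).le)) hF
  have hshare : (∑ u ∈ A, w u) / ∑ u ∈ V, w u = 1 - m := gibbsMass_sdiff hAV hZ.ne'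
  simp only [sum_piFinset_prod_div, div_self hZ.ne', one_pow, hshare] at hcompare
  have hA : ((∑ u ∈ A, w u) / ∑ u ∈ A, w u) ^ n ≤ 1 :=
    pow_le_one₀ (div_nonneg hZA hZA) (div_self_le_one _)
  calc |gibbsAverage V w F - gibbsAverage A w F|
      ≤ C * (1 - (1 - m) ^ n) + C * (((∑ u ∈ A, w u) / ∑ u ∈ A, w u) ^ n - (1 - m) ^ n) := hcompare
    _ ≤ C * (n * m) + C * (n * m) := by
        gcongr <;> linarith [one_sub_one_sub_pow_le hm n]
    _ = 2 * C * n * m := by ring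

end ProductGibbs

section MassBound

variable {α Ω E : Type*} [MeasurableSpace Ω] [AddCommGroup E] [Module ℝ E]
  {X : E →ₗ[ℝ] (Ω → ℝ)} {Q : LinearMap.BilinForm ℝ E} {μ : Measure Ω} {V B : Finset α}
  {w : Ω → α → ℝ}

lemma integrable_gibbsMass [IsFiniteMeasure μ] (hmeas : ∀ v, Measurable fun ω => w ω v)
    (hw : ∀ ω v, 0 ≤ w ω v) (hBV : B ⊆ V) : Integrable (fun ω => gibbsMass V B (w ω)) μ := by
  refine .of_bound (C := 1) ?_ (.of_forall fun ω => ?_)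
  · refine Measurable.aestronglyMeasurable ?_
    unfold gibbsMass
    fun_prop
  · rw [Real.norm_of_nonneg (gibbsMass_nonneg (hw ω))]
    exact gibbsMass_le_one (hw ω) hBV

lemma integrable_gibbsAverage [IsFiniteMeasure μ] {ι : Type*} [Fintype ι] [DecidableEq ι]
    (hmeas : ∀ v, Measurable fun ω => w ω v) (hw : ∀ ω v, 0 ≤ w ω v) (A : Finset α)
    {F : (ι → α) → ℝ} {C : ℝ} (hC : 0 ≤ C) (hF : ∀ x, |F x| ≤ C) :
    Integrable (fun ω => gibbsAverage A (w ω) F) μ := by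
  refine .of_bound (C := C) ?_ (.of_forall fun ω => abs_gibbsAverage_le (hw ω) hC hF)
  refine Measurable.aestronglyMeasurable ?_
  unfold gibbsAverage
  fun_prop

lemma gibbsMass_exp_eq (hB : B.Nonempty) (hV : V.Nonempty) (x : α → ℝ) :
    gibbsMass V B (fun v => Real.exp (x v)) =
      Real.exp ((lse fun v : B => x v) - lse fun v : V => x v) := by
  have := hB.to_subtype
  have := hV.to_subtype
  rw [Real.exp_sub, exp_lse, exp_lse, Finset.sum_coe_sort B fun v => Real.exp (x v),
    Finset.sum_coe_sort V fun v => Real.exp (x v), gibbsMass]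

lemma exp_sub_le_exp_neg_add {x y x₀ y₀ a : ℝ} (ha : 0 < a) (hgap : x₀ + 2 * a ≤ y₀)
    (hxy : Real.exp (x - y) ≤ 1) :
    Real.exp (x - y) ≤ Real.exp (-a) + (|x - x₀| + |y - y₀|) / a := by
  rcases le_total (x - y) (-a) with hle | hge
  · have : 0 ≤ (|x - x₀| + |y - y₀|) / a := by positivity
    linarith [Real.exp_le_exp.2 hle]
  · have : 1 ≤ (|x - x₀| + |y - y₀|) / a := by
      rw [one_le_div ha]
      linarith [le_abs_self (x - x₀), neg_abs_le (y - y₀)]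
    linarith [Real.exp_pos (-a)]

lemma IsIsonormal.integral_gibbsMass_le (h : IsIsonormal X Q μ) {c : α → E} {a K : ℝ} (ha : 0 < a)
    (hB : B.Nonempty) (hBV : B ⊆ V) (hK : ∀ v, Q (c v) (c v) ≤ K)
    (hgap : meanLse X μ (fun v : B => c v) + 2 * a ≤ meanLse X μ fun v : V => c v) :
    ∫ ω, gibbsMass V B (fun v => Real.exp (X (c v) ω)) ∂μ ≤ Real.exp (-a) + 12 * √K / a := by
  have := h.isProbabilityMeasure
  have := hB.to_subtype
  have := (hB.mono hBV).to_subtype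
  have hdev (S : Finset α) [Nonempty S] : Integrable
      (fun ω => |(lse fun v : S => X (c v) ω) - meanLse X μ fun v : S => c v|) μ :=
    ((h.integrable_lse _).sub (integrable_const _)).abs
  have hpointwise (ω : Ω) : gibbsMass V B (fun v => Real.exp (X (c v) ω)) ≤ Real.exp (-a) +
      (|(lse fun v : B => X (c v) ω) - meanLse X μ fun v : B => c v| +
        |(lse fun v : V => X (c v) ω) - meanLse X μ fun v : V => c v|) / a := by
    have hle := gibbsMass_le_one (fun v => (Real.exp_pos (X (c v) ω)).le) hBV
    rw [gibbsMass_exp_eq hB (hB.mono hBV)] at hle ⊢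
    exact exp_sub_le_exp_neg_add ha hgap hle
  refine (integral_mono
    (integrable_gibbsMass (fun v => (h.measurable _).exp) (fun ω v => (Real.exp_pos _).le) hBV)
    ((integrable_const _).add (((hdev B).add (hdev V)).div_const a)) hpointwise).trans ?_
  rw [integral_add' (integrable_const _) (((hdev B).add (hdev V)).div_const a), integral_div,
    integral_add' (hdev B) (hdev V), integral_const, probReal_univ, one_smul]
  gcongr
  linarith [h.integral_abs_lse_sub_meanLse_le fun v : B => hK v,
    h.integral_abs_lse_sub_meanLse_le fun v : V => hK v]

end MassBound

section BoundaryMass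

variable {N M : ℕ} {lamv : ℕ → ℝ} {ρ : ℝ}

/-- The Gibbs weights `e^{ψ_v}` of the `(σ,λ)`-GFF, with `ψ_v` written as a linear functional of the
field; the inverse temperature is absorbed into `sigv`. -/
def psiWeight (N M : ℕ) (sigv lamv : ℕ → ℝ) (ω : FieldSp) (v : Vtx) : ℝ :=
  Real.exp (fieldPairing N (psiCoeff N M sigv (fun i => scaleRadius N (lamv i)) v) ω)

lemma psiWeight_pos (N M : ℕ) (sigv lamv : ℕ → ℝ) (ω : FieldSp) (v : Vtx) :
    0 < psiWeight N M sigv lamv ω v :=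
  Real.exp_pos _

lemma IsGFF.measurable_psiWeight {P : Measure FieldSp} (h : IsGFF N P) (M : ℕ)
    (sigv lamv : ℕ → ℝ) (v : Vtx) : Measurable fun ω => psiWeight N M sigv lamv ω v :=
  (h.isIsonormal.measurable _).exp

lemma psiFld_smul (β : ℝ) (sigv : ℕ → ℝ) (P : Measure FieldSp) (v : Vtx) (ω : FieldSp) :
    psiFld N M (β • sigv) lamv P v ω = β * psiFld N M sigv lamv P v ω := by
  simp only [psiFld, Finset.mul_sum, Pi.smul_apply, smul_eq_mul, mul_assoc]

lemma IsGFF.exp_mul_psiFld_ae_eq {P : Measure FieldSp} (h : IsGFF N P) (hM : lamv M = 1) (β : ℝ)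
    (sigv : ℕ → ℝ) : ∀ᵐ ω ∂P, ∀ v ∈ VN N,
      Real.exp (β * psiFld N M sigv lamv P v ω) = psiWeight N M (β • sigv) lamv ω v := by
  refine (Finset.eventually_all _).2 fun v hv => ?_
  filter_upwards [h.psiFld_ae_eq (sigv := β • sigv) hM hv] with ω hω
  rw [psiWeight, ← hω, psiFld_smul]

lemma eventually_sdiff_AN_subset_biUnion (h : IsScaleSequence M lamv) (hρ : ρ ∈ Set.Ioo 0 1) :
    ∀ᶠ N : ℕ in atTop, VN N \ AN N ρ ⊆
      (Finset.range M ×ˢ Finset.Ico (0 : ℤ) 4 ×ˢ Finset.Ico (0 : ℤ) 4).biUnion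
        fun t => boundaryLayer N lamv (ρ / 2) t.1 t.2 := by
  filter_upwards [eventually_depth_lt_scaleRadius_of_notMem_AN hρ] with N hN v hv
  obtain ⟨hvV, hvA⟩ := Finset.mem_sdiff.1 hv
  obtain ⟨j, hj, p, hp, hvp⟩ := exists_mem_boundaryLayer h hvV (hN v hvV hvA)
  exact Finset.mem_biUnion.2 ⟨(j, p), Finset.mk_mem_product (Finset.mem_range.2 hj) hp, hvp⟩

/-- Upper bound for the expected mass of a boundary layer when `log N = l`. -/
def layerMassBound (K ρ l : ℝ) : ℝ :=
  Real.exp (-(ρ / 8 * l)) + 12 * √(K * (4 * l + 8)) / (ρ / 8 * l)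

lemma tendsto_layerMassBound (K : ℝ) (hρ : 0 < ρ) :
    Tendsto (layerMassBound K ρ) atTop (nhds 0) := by
  have hexp : Tendsto (fun l => Real.exp (-(ρ / 8 * l))) atTop (nhds 0) :=
    Real.tendsto_exp_neg_atTop_nhds_zero.comp (tendsto_id.const_mul_atTop (by positivity))
  have hinv : Tendsto (fun l : ℝ => K * (4 * l⁻¹ + 8 * l⁻¹ ^ 2)) atTop (nhds 0) := by
    have := tendsto_inv_atTop_zero (𝕜 := ℝ)
    simpa using ((this.const_mul 4).add ((this.pow 2).const_mul 8)).const_mul K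
  have hsqrt : Tendsto (fun l : ℝ => √(K * (4 * l⁻¹ + 8 * l⁻¹ ^ 2)) * (96 / ρ)) atTop (nhds 0) := by
    simpa using hinv.sqrt.mul_const (96 / ρ)
  refine (add_zero (0 : ℝ) ▸ hexp.add hsqrt).congr' ?_
  filter_upwards [eventually_gt_atTop 0] with l hl
  have hscale : K * (4 * l⁻¹ + 8 * l⁻¹ ^ 2) = K * (4 * l + 8) / l ^ 2 := by field_simp
  rw [layerMassBound, hscale, Real.sqrt_div' _ (sq_nonneg l), Real.sqrt_sq hl.le]
  field_simp
  ring

lemma eventually_integral_gibbsMass_boundaryLayer_le (h : IsScaleSequence M lamv) (hρ0 : 0 < ρ)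
    (hρ1 : ρ < lamv 1) (sigv : ℕ → ℝ) :
    ∀ᶠ N : ℕ in atTop, ∀ P, IsGFF N P → ∀ j < M, ∀ p,
      ∫ ω, gibbsMass (VN N) (boundaryLayer N lamv ρ j p) (psiWeight N M sigv lamv ω) ∂P ≤
        layerMassBound (jumpBound M sigv) ρ (Real.log N) := by
  filter_upwards [eventually_meanLse_boundaryLayer_add_le h hρ0 hρ1 sigv, eventually_ge_atTop 2]
    with N hgap hN P hP j hj p
  have hlog : 0 < Real.log N := Real.log_pos (by exact_mod_cast hN)
  rcases (boundaryLayer N lamv ρ j p).eq_empty_or_nonempty with hempty | hne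
  · simp only [hempty, gibbsMass, Finset.sum_empty, zero_div, integral_zero]
    unfold layerMassBound
    positivity
  · refine hP.isIsonormal.integral_gibbsMass_le (by positivity) hne (Finset.filter_subset _ _)
      (fun v => greenForm_psiCoeff_self_le (one_le_two.trans hN) sigv _ v) ?_
    linarith [hgap P hP.isIsonormal j hj p hne]

theorem tendsto_integral_gibbsMass_sdiff_AN (h : IsScaleSequence M lamv) (hρ0 : 0 < ρ)
    (hρ1 : ρ < lamv 1) (sigv : ℕ → ℝ) {P : ℕ → Measure FieldSp} (hP : ∀ N, IsGFF N (P N)) :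
    Tendsto (fun N => ∫ ω, gibbsMass (VN N) (VN N \ AN N ρ) (psiWeight N M sigv lamv ω) ∂P N)
      atTop (nhds 0) := by
  have hbound : Tendsto (fun N : ℕ => (M * 16 : ℕ) •
      layerMassBound (jumpBound M sigv) (ρ / 2) (Real.log N)) atTop (nhds 0) := by
    simpa using ((tendsto_layerMassBound (jumpBound M sigv) (half_pos hρ0)).comp
      (Real.tendsto_log_atTop.comp tendsto_natCast_atTop_atTop)).const_smul (M * 16)
  have hw (N ω v) := (psiWeight_pos N M sigv lamv ω v).le
  refine squeeze_zero' (.of_forall fun N => integral_nonneg fun ω => gibbsMass_nonneg (hw N ω)) ?_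
    hbound
  have hone : 1 ≤ M := Nat.one_le_iff_ne_zero.2 h.ne_zero
  filter_upwards [eventually_sdiff_AN_subset_biUnion h ⟨hρ0, hρ1.trans_le (h.mem_Icc hone).2⟩,
    eventually_integral_gibbsMass_boundaryLayer_le h (half_pos hρ0) (by linarith) sigv]
    with N hcover hlayer
  have := (hP N).isIsonormal.isProbabilityMeasure
  have hint {B : Finset Vtx} (hB : B ⊆ VN N) :=
    integrable_gibbsMass (μ := P N) ((hP N).measurable_psiWeight M sigv lamv) (hw N) hB
  have hlayer_int (t : ℕ × Vtx) :=
    hint (Finset.filter_subset _ _ : boundaryLayer N lamv (ρ / 2) t.1 t.2 ⊆ VN N)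
  refine (integral_mono (hint Finset.sdiff_subset) (integrable_finsetSum _ fun t _ => hlayer_int t)
    fun ω => gibbsMass_le_sum (hw N ω) hcover).trans ?_
  rw [integral_finsetSum _ fun t _ => hlayer_int t]
  refine (Finset.sum_le_card_nsmul _ _ _ fun t ht => hlayer (P N) (hP N) t.1
    (Finset.mem_range.1 (Finset.mem_product.1 ht).1) t.2).trans_eq ?_
  simp

end BoundaryMass

lemma isScaleSequence_of_scaleParams {M : ℕ} {sigv lamv : ℕ → ℝ} (h : ScaleParams M sigv lamv) :
    IsScaleSequence M lamv where
  zero := h.2.2.1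
  last := h.2.2.2.1
  strictMonoOn := strictMonoOn_Iic_of_lt_succ h.2.2.2.2

theorem IsGFF.abs_gibbsExp_sub_gibbsExpRes_le {N M : ℕ} {sigv lamv : ℕ → ℝ} {P : Measure FieldSp}
    (hP : IsGFF N P) (hM : lamv M = 1) (β ρ : ℝ) {s : ℕ} {F : (Fin s → Vtx) → ℝ} {C : ℝ}
    (hF : ∀ x, |F x| ≤ C) :
    |gibbsExp N M sigv lamv P β s F - gibbsExpRes N M sigv lamv P β ρ s (fun x _ => F x)| ≤
      2 * C * s *
        ∫ ω, gibbsMass (VN N) (VN N \ AN N ρ) (psiWeight N M (β • sigv) lamv ω) ∂P := by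
  have := hP.isIsonormal.isProbabilityMeasure
  have hC : 0 ≤ C := (abs_nonneg _).trans (hF 0)
  have hAV : AN N ρ ⊆ VN N := Finset.filter_subset _ _
  set w := psiWeight N M (β • sigv) lamv
  have hw (ω v) : 0 < w ω v := psiWeight_pos ..
  have hmeas (v) : Measurable fun ω => w ω v := hP.measurable_psiWeight ..
  have hae := hP.exp_mul_psiFld_ae_eq hM β sigv
  have hfull : gibbsExp N M sigv lamv P β s F = ∫ ω, gibbsAverage (VN N) (w ω) F ∂P :=
    integral_congr_ae (hae.mono fun ω hω => gibbsAverage_congr hω F)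
  have hres : gibbsExpRes N M sigv lamv P β ρ s (fun x _ => F x) =
      ∫ ω, gibbsAverage (AN N ρ) (w ω) F ∂P :=
    integral_congr_ae (hae.mono fun ω hω => gibbsAverage_congr (fun v hv => hω v (hAV hv)) F)
  have hint (A : Finset Vtx) : Integrable (fun ω => gibbsAverage A (w ω) F) P :=
    integrable_gibbsAverage hmeas (fun ω v => (hw ω v).le) A hC hF
  have hmass := integrable_gibbsMass (μ := P) hmeas (fun ω v => (hw ω v).le)
    (Finset.sdiff_subset : VN N \ AN N ρ ⊆ VN N)
  have hV : (VN N).Nonempty := ⟨0, by simp [mem_VN]⟩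
  rw [hfull, hres, ← integral_sub (hint _) (hint _), ← integral_const_mul]
  refine abs_integral_le_integral_abs.trans (integral_mono ((hint _).sub (hint _)).abs
    (hmass.const_mul _) fun ω => ?_)
  simpa only [Fintype.card_fin] using abs_gibbsAverage_sub_le hAV hV (hw ω) hC hF

theorem product_gibbs_near_boundary_general
    (M : ℕ) (sigv lamv : ℕ → ℝ) (hscale : IsScaleSequence M lamv)
    (P : ℕ → Measure FieldSp) (hGFF : ∀ N, IsGFF N (P N))
    (β ρ : ℝ) (hρ0 : 0 < ρ) (hρ1 : ρ < lamv 1)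
    (s : ℕ) (h : ℕ → (Fin s → Vtx) → ℝ) (C : ℝ) (hC : ∀ N vv, |h N vv| ≤ C) :
    Tendsto (fun N =>
        |gibbsExp N M sigv lamv (P N) β s (h N) -
          gibbsExpRes N M sigv lamv (P N) β ρ s (fun vv _ => h N vv)|)
      atTop (nhds 0) := by
  have hmass := tendsto_integral_gibbsMass_sdiff_AN hscale hρ0 hρ1 (β • sigv) hGFF
  refine squeeze_zero (fun N => abs_nonneg _)
    (fun N => (hGFF N).abs_gibbsExp_sub_gibbsExpRes_le hscale.last β ρ (hC N)) ?_
  simpa only [mul_zero] using hmass.const_mul (2 * C * s)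

end

/-- **Proposition (Full and restricted Gibbs averages agree in the limit).**
Let `β > 0` and `ρ ∈ (0,λ_1)`. For every `s ∈ ℕ` and every uniformly bounded family of
functions `h : V_N^s → ℝ`,
`lim_{N→∞} |E𝒢_{β,N}^{×s}[h(v)] − E𝒢_{β,N,ρ}^{×s}[h(v)]| = 0`. -/
theorem product_gibbs_near_boundary
    (M : ℕ) (sigv lamv : ℕ → ℝ) (hparams : ScaleParams M sigv lamv)
    (P : ℕ → MeasureTheory.Measure FieldSp) (hGFF : ∀ N, IsGFF N (P N))
    (β ρ : ℝ) (hβ : 0 < β) (hρ0 : 0 < ρ) (hρ1 : ρ < lamv 1)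
    (s : ℕ) (h : ℕ → (Fin s → Vtx) → ℝ) (C : ℝ) (hC : ∀ N vv, |h N vv| ≤ C) :
    Filter.Tendsto (fun N =>
        |gibbsExp N M sigv lamv (P N) β s (h N) -
          gibbsExpRes N M sigv lamv (P N) β ρ s (fun vv _ => h N vv)|)
      Filter.atTop (nhds 0) :=
  product_gibbs_near_boundary_general M sigv lamv (isScaleSequence_of_scaleParams hparams) P hGFF
    β ρ hρ0 hρ1 s h C hC
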